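/- There exist an uncountable index type I and a family of groups (H i) for i ∈ I such that: each H i is of type FP₂ over ℤ; no H i contains a subgroup isomorphic to the Baumslag–Solitar group BS(m,n) for any nonzero integers m and n; and for distinct i, j ∈ I the groups H i and H j are not isomorphic. In particular, there are uncountably many isomorphism classes of groups of type FP₂ over ℤ containing no Baumslag–Solitar subgroup. -/

import Mathlib

/-- The augmentation ring homomorphism `ℤH → ℤ` sending each group element to `1`. -/
noncomputable def augmentationMap (H : Type) [Group H] : MonoidAlgebra ℤ H →+* ℤ :=
  (MonoidAlgebra.lift ℤ ℤ H 1).toRingHom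

/-- A group `H` is of type `FP₂` over `ℤ`: there is an exact sequence
`P₂ → P₁ → P₀ → ℤ → 0` of `ℤH`-modules with each `Pᵢ` finitely generated projective,
where `ℤ` carries the trivial `H`-action (via the augmentation map). -/
def IsTypeFP2 (H : Type) [Group H] : Prop :=
  letI : Module (MonoidAlgebra ℤ H) ℤ := Module.compHom ℤ (augmentationMap H)
  ∃ (P₂ P₁ P₀ : Type) (_ : AddCommGroup P₂) (_ : AddCommGroup P₁) (_ : AddCommGroup P₀)
    (_ : Module (MonoidAlgebra ℤ H) P₂) (_ : Module (MonoidAlgebra ℤ H) P₁)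
    (_ : Module (MonoidAlgebra ℤ H) P₀),
    Module.Finite (MonoidAlgebra ℤ H) P₂ ∧ Module.Projective (MonoidAlgebra ℤ H) P₂ ∧
    Module.Finite (MonoidAlgebra ℤ H) P₁ ∧ Module.Projective (MonoidAlgebra ℤ H) P₁ ∧
    Module.Finite (MonoidAlgebra ℤ H) P₀ ∧ Module.Projective (MonoidAlgebra ℤ H) P₀ ∧
    ∃ (d₂ : P₂ →ₗ[MonoidAlgebra ℤ H] P₁) (d₁ : P₁ →ₗ[MonoidAlgebra ℤ H] P₀)
      (ε : P₀ →ₗ[MonoidAlgebra ℤ H] ℤ),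
      Function.Surjective ε ∧
      LinearMap.range d₁ = LinearMap.ker ε ∧
      LinearMap.range d₂ = LinearMap.ker d₁

/-- A group `H` is finitely presented: it is isomorphic to a presented group
`⟨x₁,…,xₙ | R⟩` with `R` a finite set of relators. -/
def IsFinitelyPresented (H : Type) [Group H] : Prop :=
  ∃ (n : ℕ) (R : Set (FreeGroup (Fin n))), R.Finite ∧ Nonempty (H ≃* PresentedGroup R)

/-- The single relator `y⁻¹ xᵐ y x⁻ⁿ` of the Baumslag–Solitar group `BS(m,n)`. -/
def BSRels (m n : ℤ) : Set (FreeGroup (Fin 2)) :=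
  {(FreeGroup.of 1)⁻¹ * (FreeGroup.of 0) ^ m * FreeGroup.of 1 * (FreeGroup.of 0) ^ (-n)}

/-- The Baumslag–Solitar group `BS(m,n) = ⟨x, y | y⁻¹xᵐyx⁻ⁿ⟩`. -/
abbrev BS (m n : ℤ) : Type := PresentedGroup (BSRels m n)

/-- `G` has no subgroup isomorphic to a Baumslag–Solitar group `BS(m,n)`
with `m, n` nonzero. -/
def HasNoBSSubgroup (G : Type) [Group G] : Prop :=
  ∀ m n : ℤ, m ≠ 0 → n ≠ 0 → ∀ K : Subgroup G, ¬ Nonempty (K ≃* BS m n)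



section FP2
variable {H : Type} [Group H] {Y : Type} [Fintype Y] [DecidableEq Y]

/-- group element in ring -/
noncomputable def oo (h : H) : MonoidAlgebra ℤ H := MonoidAlgebra.of ℤ H h

lemma oo_one : oo (1 : H) = 1 := map_one _
lemma oo_mul (g h : H) : oo (g * h) = oo g * oo h := map_mul _ _ _

/-- affine action -/
noncomputable def affPerm (h : H) (e : Y → MonoidAlgebra ℤ H) :
    Equiv.Perm (Y → MonoidAlgebra ℤ H) where
  toFun x := oo h • x + e
  invFun x := oo h⁻¹ • (x - e)
  left_inv x := by simp [smul_smul, ← oo_mul, oo_one]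
  right_inv x := by simp [smul_smul, ← oo_mul, oo_one]

/-- Fox action -/
noncomputable def foxAct (π : FreeGroup Y →* H) :
    FreeGroup Y →* Equiv.Perm (Y → MonoidAlgebra ℤ H) :=
  FreeGroup.lift fun y => affPerm (π (FreeGroup.of y)) (Pi.single y 1)

/-- Fox derivation -/
noncomputable def foxD (π : FreeGroup Y →* H) (f : FreeGroup Y) : Y → MonoidAlgebra ℤ H :=
  foxAct π f 0

lemma foxAct_apply (π : FreeGroup Y →* H) (f : FreeGroup Y) (x : Y → MonoidAlgebra ℤ H) :
    foxAct π f x = oo (π f) • x + foxD π f := by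
  induction f using FreeGroup.induction_on generalizing x with
  | C1 => simp [foxD, oo_one]
  | of y => simp [foxD, foxAct, affPerm]
  | inv_of y _ =>
    simp only [foxD, foxAct, affPerm, map_inv, FreeGroup.lift_apply_of]
    simp [Equiv.Perm.inv_def, Equiv.symm, smul_sub, sub_eq_add_neg]
  | mul a b ha hb =>
    have : foxD π (a * b) = oo (π a) • foxD π b + foxD π a := by
      rw [← ha]; simp [foxD]
    rw [map_mul, Equiv.Perm.mul_apply, ha, hb, this, map_mul, oo_mul]
    simp [smul_add, smul_smul, add_assoc]

lemma foxD_mul (π : FreeGroup Y →* H) (a b : FreeGroup Y) :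
    foxD π (a * b) = foxD π a + oo (π a) • foxD π b := by
  rw [add_comm, ← foxAct_apply]; simp [foxD]

lemma foxD_of (π : FreeGroup Y →* H) (y : Y) : foxD π (FreeGroup.of y) = Pi.single y 1 := by
  simp [foxD, foxAct, affPerm]

lemma foxD_one (π : FreeGroup Y →* H) : foxD π 1 = 0 := by simp [foxD]

lemma foxD_inv (π : FreeGroup Y →* H) (a : FreeGroup Y) :
    foxD π a⁻¹ = - (oo (π a)⁻¹ • foxD π a) := by
  have := foxD_mul π a⁻¹ a
  rw [inv_mul_cancel, foxD_one, map_inv] at this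
  exact eq_neg_of_add_eq_zero_left this.symm

/-- d1 -/
noncomputable def foxd1 (π : FreeGroup Y →* H) :
    (Y → MonoidAlgebra ℤ H) →ₗ[MonoidAlgebra ℤ H] MonoidAlgebra ℤ H :=
  Fintype.linearCombination (MonoidAlgebra ℤ H) fun y => oo (π (FreeGroup.of y)) - 1

lemma foxd1_D (π : FreeGroup Y →* H) (f : FreeGroup Y) :
    foxd1 π (foxD π f) = oo (π f) - 1 := by
  induction f using FreeGroup.induction_on with
  | C1 => simp [foxD_one, oo_one]
  | of y => simp [foxD_of, foxd1]
  | inv_of y h =>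
    rw [foxD_inv, map_neg, map_smul, h, map_inv, smul_eq_mul, mul_sub, ← oo_mul]; simp [oo_one]
  | mul a b ha hb =>
    rw [foxD_mul, map_add, map_smul, ha, hb, map_mul, oo_mul, smul_eq_mul]; noncomm_ring

theorem fp2_of (π : FreeGroup Y →* H) (hπ : Function.Surjective π)
    (Rel : Set (FreeGroup Y)) (hfin : Rel.Finite) (hle : ∀ r ∈ Rel, π r = 1)
    (hker : π.ker ≤ Subgroup.normalClosure Rel ⊔ ⁅π.ker, π.ker⁆) : IsTypeFP2 H := by
  classical
  haveI : Fintype Rel := hfin.fintype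
  let R := MonoidAlgebra ℤ H
  letI : Module (MonoidAlgebra ℤ H) ℤ := Module.compHom ℤ (augmentationMap H)
  let d₂ : (Rel → R) →ₗ[R] (Y → R) := Fintype.linearCombination R fun r => foxD π r.1
  let ε : R →ₗ[R] ℤ :=
    { toFun := augmentationMap H
      map_add' := map_add _
      map_smul' := fun a b => by rw [smul_eq_mul, map_mul]; rfl }
  have hεo : ∀ h : H, augmentationMap H (oo h) = 1 := fun h => by
    simp [augmentationMap, oo]
  refine ⟨Rel → R, Y → R, R, inferInstance, inferInstance, inferInstance, inferInstance,
    inferInstance, inferInstance, inferInstance, inferInstance, inferInstance, inferInstance,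
    inferInstance, inferInstance, d₂, foxd1 π, ε, ?_, ?_, ?_⟩
  · intro z
    refine ⟨(z : R), ?_⟩
    change augmentationMap H (z : R) = z
    simp
  · apply le_antisymm
    · rintro _ ⟨m, rfl⟩
      rw [LinearMap.mem_ker]
      change augmentationMap H _ = 0
      simp [foxd1, Fintype.linearCombination_apply, hεo]
    · intro x hx
      have hx : augmentationMap H x = 0 := hx
      have key : ∀ x : R, x - ((augmentationMap H x : ℤ) : R) ∈ LinearMap.range (foxd1 π) := by
        intro x
        induction x using MonoidAlgebra.induction_on with
        | of h =>
          obtain ⟨f, rfl⟩ := hπ h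
          refine ⟨foxD π f, ?_⟩
          rw [foxd1_D]
          have := hεo (π f)
          unfold oo at this
          rw [this]; simp [oo]
        | add a b ha hb =>
          have := add_mem ha hb
          rw [map_add]; push_cast
          convert this using 1; abel
        | smul r a ha =>
          have := zsmul_mem ha r
          rw [map_zsmul]
          convert this using 1
          simp [smul_sub]
          rw [zsmul_eq_mul, zsmul_eq_mul]
      have := key x
      rwa [hx, Int.cast_zero, sub_zero] at this
  · have hrange : LinearMap.range d₂ = Submodule.span R (Set.range fun r : Rel => foxD π r.1) :=
      Fintype.range_linearCombination R _
    set I := LinearMap.range d₂ with hI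
    have hI1 : I ≤ LinearMap.ker (foxd1 π) := by
      rw [hrange, Submodule.span_le]
      rintro _ ⟨r, rfl⟩
      simp [foxd1_D, hle r.1 r.2, oo_one]
    apply le_antisymm hI1
    -- D kills the kernel mod I
    have hD : ∀ f ∈ π.ker, foxD π f ∈ I := by
      let T : Subgroup (FreeGroup Y) :=
        { carrier := {f | π f = 1 ∧ foxD π f ∈ I}
          one_mem' := by simp [foxD_one]
          mul_mem' := by
            rintro a b ⟨h1, h2⟩ ⟨h3, h4⟩
            refine ⟨by simp [h1, h3], ?_⟩
            rw [foxD_mul]; exact add_mem h2 (I.smul_mem _ h4)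
          inv_mem' := by
            rintro a ⟨h1, h2⟩
            refine ⟨by simp [h1], ?_⟩
            rw [foxD_inv]; exact neg_mem (I.smul_mem _ h2) }
      have hconj : ∀ a g : FreeGroup Y, π a = 1 →
          foxD π (g * a * g⁻¹) = oo (π g) • foxD π a := by
        intro a g ha
        rw [foxD_mul, foxD_mul, foxD_inv, map_mul, ha, mul_one]
        have : oo (π g) • -(oo (π g)⁻¹ • foxD π g) = - foxD π g := by
          rw [← neg_smul_neg, neg_neg, smul_smul, neg_mul, ← oo_mul]; simp [oo_one]
        rw [this]; abel
      haveI : T.Normal := ⟨by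
        rintro a ⟨h1, h2⟩ g
        refine ⟨by simp [h1], ?_⟩
        rw [hconj a g h1]; exact I.smul_mem _ h2⟩
      have hT : π.ker ≤ T := by
        refine hker.trans (sup_le ?_ ?_)
        · apply Subgroup.normalClosure_le_normal
          intro r hr
          refine ⟨hle r hr, ?_⟩
          rw [hrange]; exact Submodule.subset_span ⟨⟨r, hr⟩, rfl⟩
        · rw [Subgroup.commutator_le]
          intro a ha b hb
          have ha' : π a = 1 := ha
          have hb' : π b = 1 := hb
          refine ⟨by simp [commutatorElement_def, ha', hb'], ?_⟩
          rw [commutatorElement_def, foxD_mul, hconj b a hb', foxD_inv]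
          simp [ha', hb', oo_one]
      exact fun f hf => (hT hf).2
    choose σ hσ using hπ
    let S : (H →₀ ℤ) →ₗ[ℤ] (Y → R) := Finsupp.linearCombination ℤ fun h => foxD π (σ h)
    have hDS : ∀ f, foxD π f - foxD π (σ (π f)) ∈ I := by
      intro f
      have h1 : f * (σ (π f))⁻¹ ∈ π.ker := by simp [MonoidHom.mem_ker, hσ]
      have h2 := hD _ h1
      have h3 := foxD_mul π (f * (σ (π f))⁻¹) (σ (π f))
      rw [MonoidHom.mem_ker.1 h1, oo_one, one_smul] at h3
      simp only [inv_mul_cancel_right] at h3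
      rw [h3, add_sub_cancel_right]; exact h2
    let J : AddSubgroup (Y → R) :=
      { carrier := {m | ∃ c, m - S c ∈ I}
        zero_mem' := ⟨0, by simp⟩
        add_mem' := by
          rintro a b ⟨c, hc⟩ ⟨d, hd⟩
          refine ⟨c + d, ?_⟩
          convert add_mem hc hd using 1
          rw [map_add]; abel
        neg_mem' := by
          rintro a ⟨c, hc⟩
          refine ⟨-c, ?_⟩
          convert neg_mem hc using 1
          rw [map_neg]; abel }
    have hJD : ∀ f, foxD π f ∈ J := fun f => ⟨Finsupp.single (π f) 1, by
      simpa [S] using hDS f⟩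
    have hJ : ∀ m, m ∈ J := by
      intro m
      rw [← Finset.univ_sum_single m]
      refine J.sum_mem fun y _ => ?_
      have : ∀ x : R, (Pi.single y x : Y → R) ∈ J := by
        intro x
        induction x using MonoidAlgebra.induction_on with
        | of h =>
          have h1 := foxD_mul π (σ h) (FreeGroup.of y)
          rw [foxD_of, hσ] at h1
          have h2 : (Pi.single y (oo h) : Y → R) = oo h • Pi.single y 1 := by
            ext1 z
            by_cases hz : z = y
            · subst hz; simp
            · simp [hz]
          change (Pi.single y (oo h) : Y → R) ∈ J
          rw [h2, eq_sub_of_add_eq' h1.symm]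
          exact J.sub_mem (hJD _) (hJD _)
        | add a b ha hb => rw [Pi.single_add]; exact J.add_mem ha hb
        | smul r a ha => rw [Pi.single_smul]; exact J.zsmul_mem ha r
      exact this _
    have hdS : ∀ c : H →₀ ℤ, foxd1 π (S c) =
        MonoidAlgebra.ofCoeff c - MonoidAlgebra.single 1 (c.sum fun _ z => z) := by
      intro c
      induction c using Finsupp.induction_linear with
      | zero => simp
      | add f g hf hg =>
        rw [map_add, map_add, hf, hg, Finsupp.sum_add_index' (by simp) (by simp),
          MonoidAlgebra.single_add, MonoidAlgebra.ofCoeff_add]; abel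
      | single h z =>
        simp only [S, Finsupp.linearCombination_single]
        rw [map_zsmul, foxd1_D, hσ]
        simp [oo, smul_sub, MonoidAlgebra.one_def, MonoidAlgebra.ofCoeff_single]
    intro m hm
    obtain ⟨c, hc⟩ := hJ m
    have h1 : foxd1 π (S c) = 0 := by
      have := hI1 hc
      rw [LinearMap.mem_ker, map_sub, LinearMap.mem_ker.1 hm, zero_sub, neg_eq_zero] at this
      exact this
    rw [hdS, sub_eq_zero] at h1
    have h2 : c = Finsupp.single 1 (c.sum fun _ z => z) := by
      have := congrArg MonoidAlgebra.coeff h1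
      simpa using this
    have h3 : S c ∈ I := by
      rw [h2]; simp only [S, Finsupp.linearCombination_single]
      exact zsmul_mem (hD _ (by simp [MonoidHom.mem_ker, hσ])) _
    have := add_mem hc h3
    rwa [sub_add_cancel] at this

end FP2

theorem fp2_quot' {Y : Type} [Fintype Y] [DecidableEq Y] (Rel : Set (FreeGroup Y))
    (hfin : Rel.Finite) (N : Subgroup (PresentedGroup Rel))
    [N.Normal] (hN : N ≤ ⁅N, N⁆) : IsTypeFP2 (PresentedGroup Rel ⧸ N) := by
  have hsurj : Function.Surjective (PresentedGroup.mk Rel) := PresentedGroup.mk_surjective _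
  refine fp2_of ((QuotientGroup.mk' N).comp (PresentedGroup.mk Rel))
    ((QuotientGroup.mk'_surjective N).comp hsurj) Rel hfin ?_ ?_
  · intro r hr
    have : PresentedGroup.mk Rel r = 1 := PresentedGroup.one_of_mem hr
    simp [this]
  · have hk : ((QuotientGroup.mk' N).comp (PresentedGroup.mk Rel)).ker
        = N.comap (PresentedGroup.mk Rel) := by
      rw [← MonoidHom.comap_ker, QuotientGroup.ker_mk']
    rw [hk]
    intro f hf
    have h1 : PresentedGroup.mk Rel f ∈ ⁅N, N⁆ := hN hf
    have h2 : N = (N.comap (PresentedGroup.mk Rel)).map (PresentedGroup.mk Rel) :=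
      (Subgroup.map_comap_eq_self_of_surjective hsurj N).symm
    rw [h2, ← Subgroup.map_commutator] at h1
    obtain ⟨g, hg, hgf⟩ := h1
    have h3 : f * g⁻¹ ∈ Subgroup.normalClosure Rel := by
      have : PresentedGroup.mk Rel (f * g⁻¹) = 1 := by simp [hgf]
      exact (QuotientGroup.eq_one_iff _).1 this
    have : f = (f * g⁻¹) * g := by simp
    rw [this]
    exact mul_mem (Subgroup.mem_sup_left h3) (Subgroup.mem_sup_right (by simpa using hg))


lemma addRight_pow' (k : ℕ) : (Equiv.addRight (1 : ℚ)) ^ k = Equiv.addRight (k : ℚ) := by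
  induction k with
  | zero => ext; simp
  | succ k ih => rw [pow_succ, ih]; ext z; simp; ring

lemma addRight_zpow' (k : ℤ) : (Equiv.addRight (1 : ℚ)) ^ k = Equiv.addRight (k : ℚ) := by
  cases k with
  | ofNat k => simp [addRight_pow']
  | negSucc k =>
    rw [zpow_negSucc, addRight_pow']; ext z
    simp [Equiv.Perm.inv_def, Int.negSucc_eq]

lemma bs_x_inf (m n : ℤ) (hm : m ≠ 0) (hn : n ≠ 0) :
    ¬ IsOfFinOrder (PresentedGroup.of 0 : BS m n) := by
  have hm' : (m : ℚ) ≠ 0 := by exact_mod_cast hm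
  have hn' : (n : ℚ) ≠ 0 := by exact_mod_cast hn
  let f : Fin 2 → Equiv.Perm ℚ :=
    ![Equiv.addRight (1 : ℚ), Equiv.mulRight₀ ((m : ℚ) / n) (div_ne_zero hm' hn')]
  have hf : ∀ r ∈ BSRels m n, FreeGroup.lift f r = 1 := by
    intro r hr
    rw [BSRels, Set.mem_singleton_iff] at hr
    subst hr
    ext z
    simp only [map_mul, map_inv, map_zpow, FreeGroup.lift_apply_of, f, Matrix.cons_val_zero,
      Matrix.cons_val_one, addRight_zpow', Equiv.Perm.mul_apply]
    simp [Equiv.Perm.inv_def]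
    field_simp
    ring
  intro h
  have h2 := (PresentedGroup.toGroup hf).isOfFinOrder h
  rw [PresentedGroup.toGroup.of] at h2
  obtain ⟨k, hk, hk2⟩ := isOfFinOrder_iff_pow_eq_one.1 h2
  have h3 := congrArg (fun e : Equiv.Perm ℚ => e 0) hk2
  simp [f, addRight_pow'] at h3
  omega

lemma bs_ab (m : ℤ) (p q : ℤ) (h : ¬ (p = 0 ∧ q = 0)) :
    ¬ IsOfFinOrder ((PresentedGroup.of 0 : BS m m) ^ p * (PresentedGroup.of 1) ^ q) := by
  let f : Fin 2 → Multiplicative ℤ × Multiplicative ℤ :=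
    ![(Multiplicative.ofAdd 1, 1), (1, Multiplicative.ofAdd 1)]
  have hf : ∀ r ∈ BSRels m m, FreeGroup.lift f r = 1 := by
    intro r hr
    rw [BSRels, Set.mem_singleton_iff] at hr
    subst hr
    simp only [map_mul, map_inv, map_zpow, FreeGroup.lift_apply_of]
    rw [mul_comm (f 1)⁻¹, mul_assoc (f 0 ^ m)]; simp
  intro h1
  have h2 := (PresentedGroup.toGroup hf).isOfFinOrder h1
  rw [map_mul, map_zpow, map_zpow, PresentedGroup.toGroup.of, PresentedGroup.toGroup.of] at h2
  obtain ⟨k, hk, hk2⟩ := isOfFinOrder_iff_pow_eq_one.1 h2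
  apply h
  have h3 := congrArg (fun x => Multiplicative.toAdd x.1) hk2
  have h4 := congrArg (fun x => Multiplicative.toAdd x.2) hk2
  simp [f] at h3 h4
  omega

theorem no_bs {H : Type} [Group H] (χ : H →* Multiplicative ℤ)
    (hχ : ∀ g, χ g = 1 → IsOfFinOrder g) : HasNoBSSubgroup H := by
  rintro m n hm hn K ⟨e⟩
  let j : BS m n →* H := K.subtype.comp e.symm.toMonoidHom
  have hj : Function.Injective j := K.subtype_injective.comp e.symm.injective
  have tor : ∀ g, χ (j g) = 1 → IsOfFinOrder g := fun g hg =>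
    (MonoidHom.isOfFinOrder j (x := g)) |> fun _ => (isOfFinOrder_iff_pow_eq_one.2 <| by
      obtain ⟨k, hk, hk2⟩ := isOfFinOrder_iff_pow_eq_one.1 (hχ _ hg)
      exact ⟨k, hk, hj (by rw [map_pow, hk2, map_one])⟩)
  set x : BS m n := PresentedGroup.of 0 with hx
  set y : BS m n := PresentedGroup.of 1 with hy
  set p := Multiplicative.toAdd (χ (j x)) with hp
  set q := Multiplicative.toAdd (χ (j y)) with hq
  have hrel : y⁻¹ * x ^ m * y * x ^ (-n) = 1 := by
    have := PresentedGroup.one_of_mem (rels := BSRels m n) (Set.mem_singleton _)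
    simp only [map_mul, map_inv, map_zpow] at this
    exact this
  have h1 := congrArg (fun g => Multiplicative.toAdd (χ (j g))) hrel
  simp only [map_mul, map_inv, map_zpow, map_one, toAdd_mul, toAdd_inv, toAdd_zpow, toAdd_one,
    ← hp, ← hq, smul_eq_mul] at h1
  have h2 : (m - n) * p = 0 := by linarith
  by_cases hp0 : p = 0
  · exact bs_x_inf m n hm hn (tor x (by rw [← toAdd_eq_zero]; exact hp0))
  · have hmn : m = n := by
      rcases mul_eq_zero.1 h2 with h | h
      · omega
      · exact absurd h hp0
    subst hmn
    refine bs_ab m (m * q) (-(m * p)) (by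
      rintro ⟨_, h⟩
      exact mul_ne_zero hm hp0 (by omega)) (tor _ ?_)
    rw [← toAdd_eq_zero]
    simp only [map_mul, map_zpow, toAdd_mul, toAdd_zpow, ← hx, ← hy, ← hp, ← hq, smul_eq_mul]
    ring

theorem no_zz {H : Type} [Group H] (χ : H →* Multiplicative ℤ)
    (hχ : ∀ g, χ g = 1 → IsOfFinOrder g) (K : Subgroup H) :
    ¬ Nonempty (K ≃* Multiplicative (ℤ × ℤ)) := by
  rintro ⟨e⟩
  let j : Multiplicative (ℤ × ℤ) →* H := K.subtype.comp e.symm.toMonoidHom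
  have hj : Function.Injective j := K.subtype_injective.comp e.symm.injective
  have tor : ∀ g, χ (j g) = 1 → g = 1 := fun g hg => by
    obtain ⟨k, hk, hk2⟩ := isOfFinOrder_iff_pow_eq_one.1 (hχ _ hg)
    rw [← map_pow, ← map_one j] at hk2
    have h3 := congrArg (fun g => (Multiplicative.toAdd g).1) (hj hk2)
    have h4 := congrArg (fun g => (Multiplicative.toAdd g).2) (hj hk2)
    simp at h3 h4
    apply Multiplicative.toAdd.injective
    ext
    · rcases h3 with h | h
      · omega
      · exact h
    · rcases h4 with h | h
      · omega
      · exact h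
  let x : Multiplicative (ℤ × ℤ) := Multiplicative.ofAdd (1, 0)
  let y : Multiplicative (ℤ × ℤ) := Multiplicative.ofAdd (0, 1)
  set p := Multiplicative.toAdd (χ (j x)) with hp
  set q := Multiplicative.toAdd (χ (j y)) with hq
  have h1 := tor (x ^ q * y ^ (-p)) (by
    rw [← toAdd_eq_zero]
    simp only [map_mul, map_zpow, toAdd_mul, toAdd_zpow, ← hp, ← hq, smul_eq_mul]
    ring)
  have h3 := congrArg (fun g => (Multiplicative.toAdd g).2) h1
  simp [x, y] at h3
  have h5 := tor x (by rw [← toAdd_eq_zero]; exact h3)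
  have h6 := congrArg (fun g => (Multiplicative.toAdd g).1) h5
  simp [x] at h6


open scoped commutatorElement

section Steinberg
variable {G : Type} [Group G]

/-- families indexed by roots -/
abbrev Fam (G : Type) : Type := Fin 5 → Fin 5 → G

/-- an index different from both -/
def third (i k : Fin 5) : Fin 5 := if i ≠ 0 ∧ k ≠ 0 then 0 else if i ≠ 1 ∧ k ≠ 1 then 1 else 2

lemma third_ne : ∀ i k : Fin 5, third i k ≠ i ∧ third i k ≠ k := by decide

set_option maxRecDepth 20000 in
lemma fifth : ∀ i j k l : Fin 5, ∃ m, m ≠ i ∧ m ≠ j ∧ m ≠ k ∧ m ≠ l := by decide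

/-- commuting roots -/
def C1 (f g : Fam G) : Prop :=
  ∀ i j k l, i ≠ j → k ≠ l → j ≠ k → i ≠ l → Commute (f i j) (g k l)

/-- compatibility -/
structure Compat (f g : Fam G) : Prop where
  c1 : C1 f g
  c2 : ∀ i j k j', i ≠ j → j ≠ k → i ≠ k → j' ≠ i → j' ≠ k → ⁅f i j, g j k⁆ = ⁅f i j', g j' k⁆
  c3 : ∀ i j k, i ≠ j → j ≠ k → i ≠ k → ⁅f i j, g j k⁆ = ⁅g i j, f j k⁆

lemma C1.symm {f g : Fam G} (h : C1 f g) : C1 g f := fun i j k l h1 h2 h3 h4 =>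
  (h k l i j h2 h1 h4.symm h3.symm).symm

lemma Compat.symm {f g : Fam G} (h : Compat f g) : Compat g f :=
  ⟨h.c1.symm, fun i j k j' h1 h2 h3 h4 h5 => by
    rw [← h.c3 i j k h1 h2 h3, ← h.c3 i j' k h4.symm h5 h3]; exact h.c2 i j k j' h1 h2 h3 h4 h5,
    fun i j k h1 h2 h3 => (h.c3 i j k h1 h2 h3).symm⟩

/-- product -/
def mulR (f g : Fam G) : Fam G := fun i k => if i = k then 1 else ⁅f i (third i k), g (third i k) k⁆

lemma mulR_eq {f g : Fam G} (h : Compat f g) {i k m : Fin 5} (hik : i ≠ k) (h1 : m ≠ i)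
    (h2 : m ≠ k) : mulR f g i k = ⁅f i m, g m k⁆ := by
  have := third_ne i k
  rw [mulR, if_neg hik]
  exact h.c2 _ _ _ _ this.1.symm this.2 hik h1 h2

lemma mulR_comm {f g : Fam G} (h : Compat f g) : mulR f g = mulR g f := by
  funext i k
  have := third_ne i k
  unfold mulR
  split_ifs with hik
  · rfl
  · exact h.c3 _ _ _ this.1.symm this.2 hik

lemma c1_mul {f g h : Fam G} (hfg : Compat f g) (hfh : C1 f h) (hgh : C1 g h) :
    C1 (mulR f g) h := by
  intro i j k l h1 h2 h3 h4
  obtain ⟨m, m1, m2, m3, m4⟩ := fifth i j k l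
  rw [mulR_eq hfg h1 m1 m2, commutatorElement_def]
  have a := hfh i m k l m1.symm h2 m3 h4
  have b := hgh m j k l m2 h2 h3 m4
  exact ((a.mul_left b).mul_left a.inv_left).mul_left b.inv_left

lemma comm_core (a b c : G) (hac : Commute a c) (h1 : Commute ⁅a, b⁆ ⁅b, c⁆)
    (h2 : Commute ⁅b, c⁆ c) : ⁅⁅a, b⁆, c⁆ = ⁅a, ⁅b, c⁆⁆ := by
  set x := ⁅a, b⁆ with hx
  set z := ⁅b, c⁆ with hz
  have e1 : c * b * c⁻¹ = z⁻¹ * b := by rw [hz]; simp only [commutatorElement_def]; group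
  have e2 : c * a * c⁻¹ = a := by rw [← hac.eq]; group
  have e3 : c * x * c⁻¹ = ⁅a, z⁻¹ * b⁆ := by
    rw [hx, ← MulAut.conj_apply, map_commutatorElement, MulAut.conj_apply, MulAut.conj_apply,
      e1, e2]
  have e4 : ⁅a, z⁻¹ * b⁆ = ⁅a, z⁻¹⁆ * (z⁻¹ * x * z) := by
    rw [hx]; simp only [commutatorElement_def]; group
  have e5 : z⁻¹ * x * z = x := by rw [mul_assoc, h1.eq]; group
  have e6 : ⁅x, c⁆ = z⁻¹ * (a * z * a⁻¹) := by
    have : ⁅x, c⁆ = x * (c * x * c⁻¹)⁻¹ := by rw [commutatorElement_def]; group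
    rw [this, e3, e4, e5, commutatorElement_def]; group
  have e7 : Commute z ⁅x, c⁆ := by
    rw [commutatorElement_def]
    exact ((h1.symm.mul_right h2).mul_right h1.symm.inv_right).mul_right h2.inv_right
  have e8 : ⁅a, z⁆ = z * ⁅x, c⁆ * z⁻¹ := by rw [e6, commutatorElement_def]; group
  rw [e8, e7.eq]; group

/-- everything needed for the triple lemma -/
structure Tri (f g h : Fam G) : Prop where
  fg : Compat f g
  gh : Compat g h
  fh : Compat f h
  ff : C1 f f
  gg : C1 g g
  hh : C1 h h

lemma tri_core {f g h : Fam G} (T : Tri f g h) {i m j k : Fin 5} (him : i ≠ m) (hij : i ≠ j)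
    (hik : i ≠ k) (hmj : m ≠ j) (hmk : m ≠ k) (hjk : j ≠ k) :
    ⁅mulR f g i j, h j k⁆ = ⁅f i m, mulR g h m k⁆ := by
  obtain ⟨p, p1, p2, p3, p4⟩ := fifth i m j k
  rw [mulR_eq T.fg hij him.symm hmj, mulR_eq T.gh hmk hmj.symm hjk]
  refine comm_core _ _ _ (T.fh.c1 i m j k him hjk hmj hik) ?_ ?_
  · rw [← mulR_eq T.fg hij him.symm hmj, ← mulR_eq T.gh hmk hmj.symm hjk,
      mulR_eq T.gh hmk p2 p4, commutatorElement_def]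
    have a := c1_mul T.fg T.fg.c1 T.gg i j m p hij p2.symm hmj.symm p1.symm
    have b := c1_mul T.fg T.fh.c1 T.gh.c1 i j p k hij p4 p3.symm hik
    exact ((a.mul_right b).mul_right a.inv_right).mul_right b.inv_right
  · rw [← mulR_eq T.gh hmk hmj.symm hjk]
    exact c1_mul T.gh T.gh.c1 T.hh m k j k hmk hjk hjk.symm hmk

lemma tri_c2 {f g h : Fam G} (T : Tri f g h) : ∀ i j k j', i ≠ j → j ≠ k → i ≠ k → j' ≠ i →
    j' ≠ k → ⁅mulR f g i j, h j k⁆ = ⁅mulR f g i j', h j' k⁆ := by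
  intro i j k j' h1 h2 h3 h4 h5
  by_cases hjj : j = j'
  · rw [hjj]
  obtain ⟨m, m1, m2, m3, m4⟩ := fifth i j k j'
  rw [tri_core T m1.symm h1 h3 m2 m3 h2, tri_core T m1.symm h4.symm h3 m4 m3 h5]

lemma tri_c2' {f g h : Fam G} (T : Tri f g h) : ∀ i j k j', i ≠ j → j ≠ k → i ≠ k → j' ≠ i →
    j' ≠ k → ⁅f i j, mulR g h j k⁆ = ⁅f i j', mulR g h j' k⁆ := by
  intro i j k j' h1 h2 h3 h4 h5
  by_cases hjj : j = j'
  · rw [hjj]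
  obtain ⟨m, m1, m2, m3, m4⟩ := fifth i j k j'
  rw [← tri_core T h1 m1.symm h3 m2.symm h2 m3, ← tri_core T h4.symm m1.symm h3 m4.symm h5 m3]

lemma tri_assoc {f g h : Fam G} (T : Tri f g h) :
    mulR (mulR f g) h = mulR f (mulR g h) := by
  funext i k
  have ht := third_ne i k
  by_cases hik : i = k
  · simp [mulR, hik]
  · have u1 : mulR (mulR f g) h i k = ⁅mulR f g i (third i k), h (third i k) k⁆ := by
      conv_lhs => rw [mulR]
      rw [if_neg hik]
    have u2 : mulR f (mulR g h) i k = ⁅f i (third i k), mulR g h (third i k) k⁆ := by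
      conv_lhs => rw [mulR]
      rw [if_neg hik]
    rw [u1, u2]
    obtain ⟨m, m1, m2, m3, -⟩ := fifth i (third i k) k k
    rw [tri_core T m1.symm ht.1.symm hik m2 m3 ht.2]
    exact tri_c2' T _ _ _ _ m1.symm m3 hik ht.1 ht.2

lemma tri_compat {f g h : Fam G} (T : Tri f g h) : Compat (mulR f g) h := by
  refine ⟨c1_mul T.fg T.fh.c1 T.gh.c1, tri_c2 T, ?_⟩
  intro i j k h1 h2 h3
  have T2 : Tri f h g := ⟨T.fh, T.gh.symm, T.fg, T.ff, T.hh, T.gg⟩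
  have T3 : Tri h f g := ⟨T.fh.symm, T.fg, T.gh.symm, T.hh, T.ff, T.gg⟩
  have ht := third_ne i k
  have a1 : ⁅mulR f g i j, h j k⁆ = mulR (mulR f g) h i k := by
    conv_rhs => rw [mulR]
    rw [if_neg h3]; exact tri_c2 T _ _ _ _ h1 h2 h3 ht.1 ht.2
  have a2 : ⁅h i j, mulR f g j k⁆ = mulR h (mulR f g) i k := by
    conv_rhs => rw [mulR]
    rw [if_neg h3]; exact tri_c2' T3 _ _ _ _ h1 h2 h3 ht.1 ht.2
  rw [a1, a2, tri_assoc T, mulR_comm T.gh, ← tri_assoc T2, mulR_comm T.fh, tri_assoc T3]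

/-- closure of `S` under left multiplication -/
inductive Cl (S : Set (Fam G)) : Fam G → Prop
  | base {s} : s ∈ S → Cl S s
  | step {s f} : s ∈ S → Cl S f → Cl S (mulR s f)

variable {S : Set (Fam G)}

lemma cl_p1 (hS : ∀ s ∈ S, ∀ s' ∈ S, Compat s s') {f : Fam G} (hf : Cl S f) :
    (∀ s ∈ S, Compat s f) ∧ C1 f f := by
  induction hf with
  | base h => exact ⟨fun s hs => hS _ hs _ h, (hS _ h _ h).c1⟩
  | @step s f hs hf ih =>
    refine ⟨fun s' hs' => (tri_compat ⟨ih.1 s hs, (ih.1 s' hs').symm, hS _ hs _ hs',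
      (hS _ hs _ hs).c1, ih.2, (hS _ hs' _ hs').c1⟩).symm, ?_⟩
    have h1 := ih.1 s hs
    have h2 := c1_mul h1 (hS _ hs _ hs).c1 h1.symm.c1
    have h3 := c1_mul h1 h1.c1 ih.2
    exact c1_mul h1 h2.symm h3.symm

lemma cl_p2 (hS : ∀ s ∈ S, ∀ s' ∈ S, Compat s s') {f g : Fam G} (hf : Cl S f) (hg : Cl S g) :
    Compat f g := by
  induction hf with
  | base h => exact (cl_p1 hS hg).1 _ h
  | @step s f hs hf ih =>
    exact tri_compat ⟨(cl_p1 hS hf).1 s hs, ih, (cl_p1 hS hg).1 s hs, (hS _ hs _ hs).c1,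
      (cl_p1 hS hf).2, (cl_p1 hS hg).2⟩

lemma cl_comm (hS : ∀ s ∈ S, ∀ s' ∈ S, Compat s s') {f g : Fam G} (hf : Cl S f) (hg : Cl S g) :
    mulR f g = mulR g f := mulR_comm (cl_p2 hS hf hg)

lemma cl_assoc (hS : ∀ s ∈ S, ∀ s' ∈ S, Compat s s') {f g h : Fam G} (hf : Cl S f) (hg : Cl S g)
    (hh : Cl S h) : mulR (mulR f g) h = mulR f (mulR g h) :=
  tri_assoc ⟨cl_p2 hS hf hg, cl_p2 hS hg hh, cl_p2 hS hf hh, (cl_p1 hS hf).2,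
    (cl_p1 hS hg).2, (cl_p1 hS hh).2⟩

lemma cl_mul (hS : ∀ s ∈ S, ∀ s' ∈ S, Compat s s') {f g : Fam G} (hf : Cl S f) (hg : Cl S g) :
    Cl S (mulR f g) := by
  induction hf with
  | base h => exact Cl.step h hg
  | @step s f hs hf ih =>
    rw [cl_assoc hS (Cl.base hs) hf hg]; exact Cl.step hs ih

lemma cl_idem (hS : ∀ s ∈ S, ∀ s' ∈ S, Compat s s') (hi : ∀ s ∈ S, mulR s s = s)
    {f : Fam G} (hf : Cl S f) : mulR f f = f := by
  induction hf with
  | base h => exact hi _ h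
  | @step s f hs hf ih =>
    have hb := Cl.base hs
    have hsf := Cl.step hs hf
    rw [cl_assoc hS hb hf hsf, cl_comm hS hf hsf, cl_assoc hS hb hf hf, ih,
      ← cl_assoc hS hb hb hf, hi s hs]

lemma cl_top (hS : ∀ s ∈ S, ∀ s' ∈ S, Compat s s') (hi : ∀ s ∈ S, mulR s s = s)
    {f : Fam G} (hf : Cl S f) : ∃ s ∈ S, mulR s f = f := by
  cases hf with
  | base h => exact ⟨_, h, hi _ h⟩
  | @step s f hs hf =>
    exact ⟨s, hs, by rw [← cl_assoc hS (Cl.base hs) (Cl.base hs) hf, hi s hs]⟩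

/-- generated subgroup -/
def KF (f : Fam G) : Subgroup G := Subgroup.closure {x | ∃ i j, x = f i j}

/-- torsion -/
def Tors (H : Subgroup G) : Prop := ∀ x ∈ H, IsOfFinOrder x

lemma mem_KF (f : Fam G) (i j : Fin 5) : f i j ∈ KF f := Subgroup.subset_closure ⟨i, j, rfl⟩

lemma idem_diag {f : Fam G} (h : mulR f f = f) (i : Fin 5) : f i i = 1 := by
  rw [← h]; simp [mulR]

lemma KF_perfect {f : Fam G} (h : mulR f f = f) : KF f ≤ ⁅KF f, KF f⁆ := by
  conv_lhs => rw [KF]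
  rw [Subgroup.closure_le]
  rintro _ ⟨i, j, rfl⟩
  have e : f i j = mulR f f i j := by rw [h]
  change f i j ∈ _
  rw [e, mulR]
  split_ifs with hij
  · exact one_mem _
  · exact Subgroup.commutator_mem_commutator (mem_KF f _ _) (mem_KF f _ _)

lemma conj_eq_core {f s : Fam G} (hff : Compat f f) (hsf : Compat s f) (hi : mulR f f = f)
    (hs : mulR s f = f) (i j : Fin 5) (hij : i ≠ j) {x : G} (hx : x ∈ KF f) :
    f i j * x * (f i j)⁻¹ = s i j * x * (s i j)⁻¹ := by
  let T : Subgroup G :=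
    { carrier := {x | f i j * x * (f i j)⁻¹ = s i j * x * (s i j)⁻¹}
      one_mem' := by simp
      mul_mem' := by
        intro a b ha hb
        simp only [Set.mem_setOf_eq] at *
        have := congrArg₂ (· * ·) ha hb
        simp only [mul_assoc, inv_mul_cancel_left] at this ⊢
        exact this
      inv_mem' := by
        intro a ha
        simp only [Set.mem_setOf_eq] at *
        have := congrArg (·⁻¹) ha
        simp only [mul_inv_rev, inv_inv, mul_assoc] at this ⊢
        exact this }
  have key : ∀ a x b : G, Commute a x → Commute b x → a * x * a⁻¹ = b * x * b⁻¹ := by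
    intro a x b h1 h2
    rw [h1.eq, h2.eq]; simp
  have key2 : ∀ a x b : G, ⁅a, x⁆ = ⁅b, x⁆ → a * x * a⁻¹ = b * x * b⁻¹ := by
    intro a x b h
    simp only [commutatorElement_def] at h
    exact mul_right_cancel h
  have key3 : ∀ a x b : G, ⁅x, a⁆ = ⁅x, b⁆ → a * x * a⁻¹ = b * x * b⁻¹ := by
    intro a x b h
    apply key2
    rw [← commutatorElement_inv, h, commutatorElement_inv]
  have hnon : ∀ k l, k ≠ l → ¬ (k = j ∧ l = i) → f k l ∈ T := by
    intro k l hkl hn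
    change f i j * f k l * (f i j)⁻¹ = s i j * f k l * (s i j)⁻¹
    by_cases h1 : j = k
    · subst h1
      have h2 : i ≠ l := fun h => hn ⟨rfl, h.symm⟩
      apply key2
      rw [← mulR_eq hff h2 hij.symm hkl, ← mulR_eq hsf h2 hij.symm hkl, hi, hs]
    · by_cases h2 : i = l
      · subst h2
        apply key3
        have h1' : k ≠ j := fun h => h1 h.symm
        rw [← mulR_eq hff h1' hkl.symm hij, ← mulR_eq hsf.symm h1' hkl.symm hij, hi,
          mulR_comm hsf.symm, hs]
      · exact key _ _ _ (hff.c1 _ _ _ _ hij hkl h1 h2) (hsf.c1 _ _ _ _ hij hkl h1 h2)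
  have : KF f ≤ T := by
    rw [KF, Subgroup.closure_le]
    rintro _ ⟨k, l, rfl⟩
    by_cases hkl : k = l
    · subst hkl; rw [idem_diag hi]; exact one_mem T
    by_cases h : k = j ∧ l = i
    · obtain ⟨rfl, rfl⟩ := h
      obtain ⟨m, m1, m2, -, -⟩ := fifth k l l l
      rw [← hi, mulR_eq hff hkl m1 m2, commutatorElement_def]
      have a : f k m ∈ T := hnon _ _ m1.symm (fun h => m2 h.2)
      have b : f m l ∈ T := hnon _ _ m2 (fun h => m1 h.1)
      exact mul_mem (mul_mem (mul_mem a b) (inv_mem a)) (inv_mem b)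
    · exact hnon _ _ hkl h
  exact this hx

lemma KF_tors {f s : Fam G} (hff : Compat f f) (hsf : Compat s f) (hi : mulR f f = f)
    (hs : mulR s f = f) (hsi : mulR s s = s) (hfin : Finite (KF s)) : Tors (KF f) := by
  -- each conjugation agrees with one from `KF s`
  have h1 : ∀ g ∈ KF f, ∃ σ ∈ KF s, ∀ x ∈ KF f, g * x * g⁻¹ = σ * x * σ⁻¹ := by
    intro g hg
    induction hg using Subgroup.closure_induction with
    | mem g hg =>
      obtain ⟨i, j, rfl⟩ := hg
      by_cases hij : i = j
      · subst hij; exact ⟨1, one_mem _, fun x _ => by rw [idem_diag hi]⟩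
      · exact ⟨s i j, mem_KF s i j, fun x hx => conj_eq_core hff hsf hi hs i j hij hx⟩
    | one => exact ⟨1, one_mem _, fun x _ => rfl⟩
    | mul a b ha hb iha ihb =>
      obtain ⟨σ, h1, h2⟩ := iha
      obtain ⟨τ, h3, h4⟩ := ihb
      refine ⟨σ * τ, mul_mem h1 h3, fun x hx => ?_⟩
      have hx2 : b * x * b⁻¹ ∈ KF f := mul_mem (mul_mem hb hx) (inv_mem hb)
      have h5 : a * b * x * (a * b)⁻¹ = a * (b * x * b⁻¹) * a⁻¹ := by group
      rw [h5, h2 _ hx2, h4 x hx]; group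
    | inv a ha iha =>
      obtain ⟨σ, h1, h2⟩ := iha
      refine ⟨σ⁻¹, inv_mem h1, fun x hx => ?_⟩
      have hx2 : a⁻¹ * x * a ∈ KF f := mul_mem (mul_mem (inv_mem ha) hx) ha
      have h3 := h2 _ hx2
      have h4 : a * (a⁻¹ * x * a) * a⁻¹ = x := by group
      rw [h4] at h3
      conv_rhs => rw [h3]
      group
  choose! σ hσ1 hσ2 using h1
  let φ : KF f → KF s := fun g => ⟨σ g, hσ1 g g.2⟩
  have hφ : ∀ a b : KF f, φ a = φ b → a⁻¹ * b ∈ Subgroup.center (KF f) := by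
    intro a b hab
    rw [Subgroup.mem_center_iff]
    intro x
    apply Subtype.ext
    have e1 := hσ2 a a.2 x x.2
    have e2 := hσ2 b b.2 x x.2
    have e0 : σ a = σ b := congrArg Subtype.val hab
    rw [e0, ← e2] at e1
    have e3 : (a : G)⁻¹ * (a * x * (a : G)⁻¹) * b = (a : G)⁻¹ * (b * x * (b : G)⁻¹) * b := by
      rw [e1]
    simp only [Subgroup.coe_mul, Subgroup.coe_inv]
    simpa [mul_assoc] using e3
  have hq : Finite (KF f ⧸ Subgroup.center (KF f)) := by
    refine Finite.of_injective (fun q => φ q.out) fun p q h => ?_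
    have := hφ _ _ h
    rw [← QuotientGroup.eq] at this
    simpa using this
  have hfi : (Subgroup.center (KF f)).FiniteIndex := Subgroup.finiteIndex_of_finite_quotient
  have hperf : commutator (KF f) = ⊤ := by
    rw [eq_top_iff]
    rintro ⟨x, hx⟩ -
    have h := KF_perfect hi hx
    have : ⁅KF f, KF f⁆ = (commutator (KF f)).map (KF f).subtype := by
      rw [commutator_def, Subgroup.map_commutator, ← MonoidHom.range_eq_map,
        Subgroup.range_subtype]
    rw [this] at h
    obtain ⟨y, hy, hy2⟩ := h
    have : y = ⟨x, hx⟩ := Subtype.ext hy2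
    rw [← this]; exact hy
  intro x hx
  have h3 : (⟨x, hx⟩ : KF f) ∈ (MonoidHom.transferCenterPow (KF f)).ker := by
    have : commutator (KF f) ≤ (MonoidHom.transferCenterPow (KF f)).ker := by
      rw [commutator_def, Subgroup.commutator_le]
      intro a _ b _
      rw [MonoidHom.mem_ker, map_commutatorElement, commutatorElement_eq_one_iff_mul_comm]
      apply Subtype.ext
      exact (Subgroup.mem_center_iff.1 (MonoidHom.transferCenterPow (KF f) b).2 _)
    rw [hperf] at this
    exact this trivial
  rw [MonoidHom.mem_ker] at h3
  have h4 := congrArg (fun z : Subgroup.center (KF f) => ((z : KF f) : G)) h3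
  simp only [MonoidHom.transferCenterPow_apply] at h4
  rw [isOfFinOrder_iff_pow_eq_one]
  exact ⟨_, Nat.pos_of_ne_zero hfi.index_ne_zero, by simpa using h4⟩

lemma tors_sup {H K : Subgroup G} (hH : Tors H) (hK : Tors K)
    (hn : ∀ k ∈ K, ∀ h ∈ H, k * h * k⁻¹ ∈ H) : Tors (H ⊔ K) := by
  have h1 : ∀ x ∈ H ⊔ K, ∃ h ∈ H, ∃ k ∈ K, x = h * k := by
    intro x hx
    rw [Subgroup.sup_eq_closure] at hx
    induction hx using Subgroup.closure_induction with
    | mem g hg =>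
      rcases hg with hg | hg
      · exact ⟨g, hg, 1, one_mem _, by simp⟩
      · exact ⟨1, one_mem _, g, hg, by simp⟩
    | one => exact ⟨1, one_mem _, 1, one_mem _, by simp⟩
    | mul a b ha hb iha ihb =>
      obtain ⟨h, hh, k, hk, rfl⟩ := iha
      obtain ⟨h', hh', k', hk', rfl⟩ := ihb
      exact ⟨h * (k * h' * k⁻¹), mul_mem hh (hn k hk h' hh'), k * k', mul_mem hk hk', by group⟩
    | inv a ha iha =>
      obtain ⟨h, hh, k, hk, rfl⟩ := iha
      exact ⟨k⁻¹ * h⁻¹ * k⁻¹⁻¹, hn _ (inv_mem hk) _ (inv_mem hh), k⁻¹, inv_mem hk, by group⟩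
  intro x hx
  obtain ⟨h, hh, k, hk, rfl⟩ := h1 x hx
  have h2 : ∀ n : ℕ, (h * k) ^ n * (k ^ n)⁻¹ ∈ H := by
    intro n
    induction n with
    | zero => simp
    | succ n ih =>
      have : (h * k) ^ (n + 1) * (k ^ (n + 1))⁻¹ =
        ((h * k) ^ n * (k ^ n)⁻¹) * (k ^ n * h * (k ^ n)⁻¹) := by
        rw [pow_succ, pow_succ]; group
      rw [this]
      exact mul_mem ih (hn _ (pow_mem hk n) _ hh)
  obtain ⟨n, hn1, hn2⟩ := isOfFinOrder_iff_pow_eq_one.1 (hK k hk)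
  have h3 := h2 n
  rw [hn2, inv_one, mul_one] at h3
  obtain ⟨m, hm1, hm2⟩ := isOfFinOrder_iff_pow_eq_one.1 (hH _ h3)
  rw [isOfFinOrder_iff_pow_eq_one]
  exact ⟨n * m, Nat.mul_pos hn1 hm1, by rw [pow_mul, hm2]⟩

lemma conj_mem_core {u v : Fam G} (huv : Compat u v) (hvv : Compat v v) (hv : mulR v v = v)
    (k l : Fin 5) (hkl : k ≠ l) (i j : Fin 5) :
    u k l * v i j * (u k l)⁻¹ ∈ KF v ⊔ KF (mulR u v) := by
  have hL : ∀ i j, v i j ∈ KF v ⊔ KF (mulR u v) := fun i j =>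
    Subgroup.mem_sup_left (mem_KF v i j)
  have hR : ∀ i j, mulR u v i j ∈ KF v ⊔ KF (mulR u v) := fun i j =>
    Subgroup.mem_sup_right (mem_KF _ i j)
  have hnon : ∀ i j, i ≠ j → ¬ (i = l ∧ j = k) →
      u k l * v i j * (u k l)⁻¹ ∈ KF v ⊔ KF (mulR u v) := by
    intro i j hij hn
    by_cases h1 : l = i
    · subst h1
      have h2 : k ≠ j := fun h => hn ⟨rfl, h.symm⟩
      have : u k l * v l j * (u k l)⁻¹ = ⁅u k l, v l j⁆ * v l j := by
        rw [commutatorElement_def]; group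
      rw [this, ← mulR_eq huv h2 hkl.symm hij]
      exact mul_mem (hR _ _) (hL _ _)
    · by_cases h2 : k = j
      · subst h2
        have : u k l * v i k * (u k l)⁻¹ = ⁅v i k, u k l⁆⁻¹ * v i k := by
          rw [commutatorElement_def]; group
        rw [this, ← mulR_eq huv.symm (fun h => h1 h.symm) hij.symm hkl, mulR_comm huv.symm]
        exact mul_mem (inv_mem (hR _ _)) (hL _ _)
      · have := huv.c1 k l i j hkl hij h1 h2
        rw [this.eq]; simpa using hL i j
  by_cases hij : i = j
  · subst hij; rw [idem_diag hv]; simp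
  by_cases h : i = l ∧ j = k
  · obtain ⟨rfl, rfl⟩ := h
    obtain ⟨m, m1, m2, -, -⟩ := fifth i j j j
    have e : v i j = ⁅v i m, v m j⁆ := by rw [← mulR_eq hvv hij m1 m2, hv]
    have a := hnon i m m1.symm (fun h => m2 h.2)
    have b := hnon m j m2 (fun h => m1 h.1)
    rw [e, ← MulAut.conj_apply, map_commutatorElement, MulAut.conj_apply, MulAut.conj_apply,
      commutatorElement_def]
    exact mul_mem (mul_mem (mul_mem a b) (inv_mem a)) (inv_mem b)
  · exact hnon i j hij h

/-- join of the groups of a family of root families -/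
def MF (U : Set (Fam G)) : Subgroup G := Subgroup.closure {x | ∃ f ∈ U, ∃ i j, x = f i j}

lemma KF_le_MF {U : Set (Fam G)} {f : Fam G} (hf : f ∈ U) : KF f ≤ MF U := by
  rw [KF, Subgroup.closure_le]
  rintro _ ⟨i, j, rfl⟩
  exact Subgroup.subset_closure ⟨f, hf, i, j, rfl⟩

open Classical in
lemma MF_fin_tors (n : ℕ) : ∀ U : Finset (Fam G), U.card = n →
    (∀ f ∈ U, ∀ g ∈ U, Compat f g) → (∀ f ∈ U, mulR f f = f) → (∀ f ∈ U, Tors (KF f)) →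
    (∀ f ∈ U, ∀ g ∈ U, mulR f g ∈ U) →
    (∀ f ∈ U, ∀ g ∈ U, ∀ h ∈ U, mulR (mulR f g) h = mulR f (mulR g h)) →
    Tors (MF (U : Set (Fam G))) := by
  induction n with
  | zero =>
    intro U hU _ _ _ _ _
    rw [Finset.card_eq_zero] at hU
    subst hU
    intro x hx
    have : MF ((∅ : Finset (Fam G)) : Set (Fam G)) = ⊥ := by simp [MF]
    rw [this, Subgroup.mem_bot] at hx
    subst hx; exact IsOfFinOrder.one
  | succ n ih =>
    intro U hU hC hI hT hM hA
    have hne : U.Nonempty := by rw [← Finset.card_pos]; omega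
    obtain ⟨v, hv, hmin⟩ := Finset.exists_min_image U
      (fun v => (U.filter fun u => mulR u v = v).card) hne
    have hmax : ∀ v' ∈ U, mulR v v' = v → v' = v := by
      intro v' hv' h
      by_contra hne
      have hlt : (U.filter fun u => mulR u v' = v').card < (U.filter fun u => mulR u v = v).card := by
        apply Finset.card_lt_card
        rw [Finset.ssubset_iff_of_subset]
        · refine ⟨v, by simp [hv, hI v hv], ?_⟩
          simp only [Finset.mem_filter, hv, true_and, h]
          exact fun h => hne h.symm
        · intro u hu
          simp only [Finset.mem_filter] at hu ⊢
          refine ⟨hu.1, ?_⟩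
          have hvc : mulR v' v = v := by rw [mulR_comm (hC _ hv' _ hv), h]
          calc mulR u v = mulR u (mulR v' v) := by rw [hvc]
            _ = mulR (mulR u v') v := (hA _ hu.1 _ hv' _ hv).symm
            _ = v := by rw [hu.2, hvc]
      exact absurd (hmin v' hv') (by omega)
    have hprod : ∀ u ∈ U, ∀ v' ∈ U, mulR u v' = v → v' = v := by
      intro u hu v' hv' h
      apply hmax v' hv'
      rw [← h, hA _ hu _ hv' _ hv', hI v' hv']
    have hW : Tors (MF ((U.erase v : Finset (Fam G)) : Set (Fam G))) := by
      apply ih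
      · rw [Finset.card_erase_of_mem hv, hU]; rfl
      · exact fun f hf g hg => hC f (Finset.mem_of_mem_erase hf) g (Finset.mem_of_mem_erase hg)
      · exact fun f hf => hI f (Finset.mem_of_mem_erase hf)
      · exact fun f hf => hT f (Finset.mem_of_mem_erase hf)
      · intro f hf g hg
        rw [Finset.mem_erase] at hf hg ⊢
        exact ⟨fun h => hg.1 (hprod f hf.2 g hg.2 h), hM f hf.2 g hg.2⟩
      · exact fun f hf g hg h hh => hA f (Finset.mem_of_mem_erase hf) g
          (Finset.mem_of_mem_erase hg) h (Finset.mem_of_mem_erase hh)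
    have hgen : ∀ i j, ∀ x ∈ MF ((U.erase v : Finset (Fam G)) : Set (Fam G)),
        v i j * x * (v i j)⁻¹ ∈ MF ((U.erase v : Finset (Fam G)) : Set (Fam G)) := by
      intro i j x hx
      by_cases hij : i = j
      · subst hij; rw [idem_diag (hI v hv)]; simpa using hx
      have : MF ((U.erase v : Finset (Fam G)) : Set (Fam G)) ≤
          (MF ((U.erase v : Finset (Fam G)) : Set (Fam G))).comap
            (MulAut.conj (v i j)).toMonoidHom := by
        conv_lhs => rw [MF]
        rw [Subgroup.closure_le]
        rintro _ ⟨u, hu, k, l, rfl⟩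
        change v i j * u k l * (v i j)⁻¹ ∈ MF ((U.erase v : Finset (Fam G)) : Set (Fam G))
        have hu' : u ∈ U.erase v := hu
        rw [Finset.mem_erase] at hu'
        have h1 := conj_mem_core (hC v hv u hu'.2) (hC u hu'.2 u hu'.2) (hI u hu'.2) i j hij k l
        have hvu : mulR v u ∈ U.erase v := by
          rw [Finset.mem_erase]
          exact ⟨fun h => hu'.1 (hprod v hv u hu'.2 h), hM v hv u hu'.2⟩
        exact (sup_le (KF_le_MF hu) (KF_le_MF (Finset.mem_coe.2 hvu))) h1
      exact this hx
    have hgen2 : ∀ i j, ∀ x ∈ MF ((U.erase v : Finset (Fam G)) : Set (Fam G)),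
        (v i j)⁻¹ * x * v i j ∈ MF ((U.erase v : Finset (Fam G)) : Set (Fam G)) := by
      intro i j x hx
      obtain ⟨m, hm, hm2⟩ := isOfFinOrder_iff_pow_eq_one.1 (hT v hv _ (mem_KF v i j))
      have hp : ∀ r : ℕ, (v i j) ^ r * x * ((v i j) ^ r)⁻¹ ∈
          MF ((U.erase v : Finset (Fam G)) : Set (Fam G)) := by
        intro r
        induction r with
        | zero => simpa using hx
        | succ r ihr =>
          have := hgen i j _ ihr
          have e : (v i j) ^ (r + 1) * x * ((v i j) ^ (r + 1))⁻¹ =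
            v i j * ((v i j) ^ r * x * ((v i j) ^ r)⁻¹) * (v i j)⁻¹ := by
            rw [pow_succ']; group
          rw [e]; exact this
      have e : (v i j)⁻¹ = (v i j) ^ (m - 1) := by
        rw [inv_eq_iff_mul_eq_one, ← pow_succ', Nat.sub_add_cancel hm, hm2]
      have := hp (m - 1)
      rw [← e] at this
      simpa using this
    have hnorm : ∀ k ∈ KF v, ∀ h ∈ MF ((U.erase v : Finset (Fam G)) : Set (Fam G)),
        k * h * k⁻¹ ∈ MF ((U.erase v : Finset (Fam G)) : Set (Fam G)) := by
      intro k hk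
      induction hk using Subgroup.closure_induction'' with
      | mem g hg =>
        obtain ⟨i, j, rfl⟩ := hg
        exact hgen i j
      | inv_mem g hg =>
        obtain ⟨i, j, rfl⟩ := hg
        simpa using hgen2 i j
      | one => intro h hh; simpa using hh
      | mul a b ha hb iha ihb =>
        intro h hh
        have e : a * b * h * (a * b)⁻¹ = a * (b * h * b⁻¹) * a⁻¹ := by group
        rw [e]; exact iha _ (ihb _ hh)
    have hle : MF (U : Set (Fam G)) ≤ MF ((U.erase v : Finset (Fam G)) : Set (Fam G)) ⊔ KF v := by
      conv_lhs => rw [MF]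
      rw [Subgroup.closure_le]
      rintro _ ⟨u, hu, i, j, rfl⟩
      by_cases huv : u = v
      · subst huv; exact Subgroup.mem_sup_right (mem_KF u i j)
      · exact Subgroup.mem_sup_left (KF_le_MF (Finset.mem_coe.2 (Finset.mem_erase.2 ⟨huv, hu⟩))
          (mem_KF u i j))
    exact fun x hx => tors_sup hW (hT v hv) hnorm x (hle hx)

open Classical in
lemma cl_finite_closed (hS : ∀ s ∈ S, ∀ s' ∈ S, Compat s s') (hi : ∀ s ∈ S, mulR s s = s)
    (F : Finset (Fam G)) (hF : ∀ f ∈ F, f ∈ S) : ∃ U : Finset (Fam G), F ⊆ U ∧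
      (∀ f ∈ U, Cl S f) ∧ (∀ f ∈ U, ∀ g ∈ U, mulR f g ∈ U) := by
  induction F using Finset.induction_on with
  | empty => exact ⟨∅, by simp, by simp, by simp⟩
  | insert s F hs ih =>
    obtain ⟨U, h1, h2, h3⟩ := ih fun f hf => hF f (Finset.mem_insert_of_mem hf)
    have hsS := hF s (Finset.mem_insert_self s F)
    have hb := Cl.base hsS
    refine ⟨insert s U ∪ U.image (mulR s), ?_, ?_, ?_⟩
    · intro f hf
      rw [Finset.mem_insert] at hf
      rcases hf with rfl | hf
      · simp
      · simp [h1 hf]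
    · intro f hf
      simp only [Finset.mem_union, Finset.mem_insert, Finset.mem_image] at hf
      rcases hf with (rfl | hf) | ⟨u, hu, rfl⟩
      · exact hb
      · exact h2 f hf
      · exact Cl.step hsS (h2 u hu)
    · intro f hf g hg
      simp only [Finset.mem_union, Finset.mem_insert, Finset.mem_image] at hf hg ⊢
      rcases hf with (rfl | hf) | ⟨u, hu, rfl⟩ <;> rcases hg with (rfl | hg) | ⟨u', hu', rfl⟩
      · left; left; exact hi _ hsS
      · right; exact ⟨g, hg, rfl⟩
      · right; exact ⟨u', hu', by rw [← cl_assoc hS hb hb (h2 _ hu'), hi _ hsS]⟩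
      · right; exact ⟨f, hf, cl_comm hS hb (h2 _ hf)⟩
      · left; right; exact h3 f hf g hg
      · right
        refine ⟨mulR f u', h3 _ hf _ hu', ?_⟩
        rw [← cl_assoc hS hb (h2 _ hf) (h2 _ hu'), cl_comm hS hb (h2 _ hf),
          cl_assoc hS (h2 _ hf) hb (h2 _ hu')]
      · right
        refine ⟨u, hu, ?_⟩
        rw [cl_comm hS (Cl.step hsS (h2 _ hu)) hb, ← cl_assoc hS hb hb (h2 _ hu), hi _ hsS]
      · right
        exact ⟨mulR u g, h3 _ hu _ hg, (cl_assoc hS hb (h2 _ hu) (h2 _ hg)).symm⟩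
      · right
        refine ⟨mulR u u', h3 _ hu _ hu', ?_⟩
        rw [cl_assoc hS hb (h2 _ hu) (Cl.step hsS (h2 _ hu')),
          ← cl_assoc hS (h2 _ hu) hb (h2 _ hu'), cl_comm hS (h2 _ hu) hb,
          cl_assoc hS hb (h2 _ hu) (h2 _ hu'), ← cl_assoc hS hb hb (h2 _ (h3 _ hu _ hu')),
          hi _ hsS]

theorem MF_tors (hS : ∀ s ∈ S, ∀ s' ∈ S, Compat s s') (hi : ∀ s ∈ S, mulR s s = s)
    (hfin : ∀ s ∈ S, Finite (KF s)) : Tors (MF S) := by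
  classical
  have h1 : ∀ x ∈ MF S, ∃ F : Finset (Fam G), (∀ f ∈ F, f ∈ S) ∧ x ∈ MF (F : Set (Fam G)) := by
    have mono : ∀ A B : Finset (Fam G), A ⊆ B → MF (A : Set (Fam G)) ≤ MF (B : Set (Fam G)) := by
      intro A B h
      apply Subgroup.closure_mono
      rintro _ ⟨f, hf, i, j, rfl⟩
      exact ⟨f, h hf, i, j, rfl⟩
    intro x hx
    induction hx using Subgroup.closure_induction with
    | mem g hg =>
      obtain ⟨f, hf, i, j, rfl⟩ := hg
      exact ⟨{f}, by simpa using hf, Subgroup.subset_closure ⟨f, by simp, i, j, rfl⟩⟩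
    | one => exact ⟨∅, by simp, one_mem _⟩
    | mul a b ha hb iha ihb =>
      obtain ⟨A, hA, hA2⟩ := iha
      obtain ⟨B, hB, hB2⟩ := ihb
      refine ⟨A ∪ B, ?_, mul_mem (mono A _ Finset.subset_union_left hA2)
        (mono B _ Finset.subset_union_right hB2)⟩
      intro f hf
      rcases Finset.mem_union.1 hf with h | h
      · exact hA f h
      · exact hB f h
    | inv a ha iha =>
      obtain ⟨A, hA, hA2⟩ := iha
      exact ⟨A, hA, inv_mem hA2⟩
  intro x hx
  obtain ⟨F, hF, hxF⟩ := h1 x hx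
  obtain ⟨U, hFU, hU1, hU2⟩ := cl_finite_closed hS hi F hF
  refine MF_fin_tors _ U rfl (fun f hf g hg => cl_p2 hS (hU1 f hf) (hU1 g hg))
    (fun f hf => cl_idem hS hi (hU1 f hf)) ?_ hU2
    (fun f hf g hg h hh => cl_assoc hS (hU1 f hf) (hU1 g hg) (hU1 h hh)) x ?_
  · intro f hf
    obtain ⟨s, hs, hsf⟩ := cl_top hS hi (hU1 f hf)
    exact KF_tors (cl_p2 hS (hU1 f hf) (hU1 f hf)) (cl_p2 hS (Cl.base hs) (hU1 f hf))
      (cl_idem hS hi (hU1 f hf)) hsf (hi s hs) (hfin s hs)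
  · refine (Subgroup.closure_mono ?_ : MF (F : Set (Fam G)) ≤ MF (U : Set (Fam G))) hxF
    rintro _ ⟨f, hf, i, j, rfl⟩
    exact ⟨f, hFU hf, i, j, rfl⟩

end Steinberg

open scoped commutatorElement

/-- combinatorial data -/
structure Dat (A V : Type) [Group A] [Group V] where
  ρ : V ≃* V
  w1 : V →* A
  w2 : V →* A
  a1 : A
  a2 : A
  ne_comm : a1 * a2 ≠ a2 * a1
  ne12 : a1 * (a2⁻¹ * a1) ≠ a2
  cover : ∀ v, ∃ n : ℕ, w1 (ρ^[n] v) = 1 ∧ w2 (ρ^[n] v) = 1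
  gen : ∀ Q : Subgroup A, (∀ v u, ⁅w1 v, w2 u⁆ ∈ Q) → (∀ v, ∀ x ∈ Q, w1 v * x * (w1 v)⁻¹ ∈ Q) →
    (∀ v, ∀ x ∈ Q, w2 v * x * (w2 v)⁻¹ ∈ Q) → Q = ⊤

section E
variable {A V : Type} [Group A] [Group V]

lemma Dat.a1_ne (d : Dat A V) : d.a1 ≠ 1 := fun h => d.ne_comm (by simp [h])
lemma Dat.a2_ne (d : Dat A V) : d.a2 ≠ 1 := fun h => d.ne_comm (by simp [h])
lemma Dat.a12_ne (d : Dat A V) : d.a1 ≠ d.a2 := fun h => d.ne_comm (by simp [h])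

variable {G : Type} [Group G]

/-- conjugated copies -/
def cp (iA : A →* G) (t : G) (g : G) (a : A) : G := (t * iA a)⁻¹ * g * (t * iA a)

lemma cp_mul (iA : A →* G) (t g h : G) (a : A) : cp iA t (g * h) a = cp iA t g a * cp iA t h a := by
  unfold cp; group
lemma cp_one (iA : A →* G) (t : G) (a : A) : cp iA t 1 a = 1 := by
  unfold cp; group
lemma cp_inv (iA : A →* G) (t g : G) (a : A) : cp iA t g⁻¹ a = (cp iA t g a)⁻¹ := by
  unfold cp; group
lemma cp_conj (iA : A →* G) (t g : G) (a c : A) :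
    iA c * cp iA t g a * (iA c)⁻¹ = cp iA t g (a * c⁻¹) := by
  unfold cp; rw [map_mul, map_inv]; group

/-- the relations of E -/
structure ERel (d : Dat A V) (iA : A →* G) (iV : V →* G) (t : G) : Prop where
  r2 : ∀ y ∈ Set.range iA ∪ Set.range iV, ∀ y' ∈ Set.range iA ∪ Set.range iV, ∀ a : A, a ≠ 1 →
    Commute (cp iA t y 1) (cp iA t y' a)
  r3 : ∀ v, iV v = cp iA t (iV (d.ρ v)) 1 * cp iA t (iA (d.w1 v)) d.a1 *
    cp iA t (iA (d.w2 v)) d.a2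

/-- D -/
def DD (iA : A →* G) (iV : V →* G) : Subgroup G :=
  Subgroup.closure (Set.range iA ∪ Set.range iV)

lemma iA_mem (iA : A →* G) (iV : V →* G) (a : A) : iA a ∈ DD iA iV :=
  Subgroup.subset_closure (Or.inl ⟨a, rfl⟩)
lemma iV_mem (iA : A →* G) (iV : V →* G) (v : V) : iV v ∈ DD iA iV :=
  Subgroup.subset_closure (Or.inr ⟨v, rfl⟩)

/-- cp as hom -/
def cpH (iA : A →* G) (t : G) (a : A) : G →* G where
  toFun g := cp iA t g a
  map_one' := cp_one _ _ _
  map_mul' _ _ := cp_mul _ _ _ _ _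

variable {d : Dat A V} {iA : A →* G} {iV : V →* G} {t : G}

lemma cp_comm (R : ERel d iA iV t) {x y : G} (hx : x ∈ DD iA iV) (hy : y ∈ DD iA iV) {a b : A}
    (hab : a ≠ b) : Commute (cp iA t x a) (cp iA t y b) := by
  have h0 : ∀ y ∈ Set.range iA ∪ Set.range iV, ∀ y' ∈ Set.range iA ∪ Set.range iV,
      Commute (cp iA t y a) (cp iA t y' b) := by
    intro y hy y' hy'
    have h := R.r2 y hy y' hy' (b * a⁻¹) (fun h => hab (mul_inv_eq_one.1 h).symm)
    have e1 : cp iA t y a = (MulAut.conj (iA a⁻¹)) (cp iA t y 1) := by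
      rw [MulAut.conj_apply, cp_conj]; simp
    have e2 : cp iA t y' b = (MulAut.conj (iA a⁻¹)) (cp iA t y' (b * a⁻¹)) := by
      rw [MulAut.conj_apply, cp_conj]; simp
    rw [e1, e2]
    exact h.map _
  have h1 : ∀ x ∈ DD iA iV, ∀ y ∈ Set.range iA ∪ Set.range iV,
      Commute (cp iA t x a) (cp iA t y b) := by
    intro x hx y hy
    induction hx using Subgroup.closure_induction with
    | mem g hg => exact h0 g hg y hy
    | one => rw [cp_one]; exact Commute.one_left _
    | mul g h _ _ h1 h2 => rw [cp_mul]; exact h1.mul_left h2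
    | inv g _ h1 => rw [cp_inv]; exact h1.inv_left
  induction hy using Subgroup.closure_induction with
  | mem g hg => exact h1 x hx g hg
  | one => rw [cp_one]; exact Commute.one_right _
  | mul g h _ _ h1 h2 => rw [cp_mul]; exact h1.mul_right h2
  | inv g _ h1 => rw [cp_inv]; exact h1.inv_right

lemma comm_lem (y p y' p' : G) (h1 : Commute p y) (h2 : Commute p y') (h3 : Commute p p')
    (h4 : Commute p' y) (h5 : Commute p' y') : ⁅y * p, y' * p'⁆ = ⁅y, y'⁆ := by
  have e : ∀ z, Commute p z → ∀ w, p * (z * w) = z * (p * w) := by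
    intro z hz w; rw [← mul_assoc, hz.eq, mul_assoc]
  have e' : ∀ z, Commute p' z → ∀ w, p' * (z * w) = z * (p' * w) := by
    intro z hz w; rw [← mul_assoc, hz.eq, mul_assoc]
  simp only [commutatorElement_def, mul_inv_rev, mul_assoc]
  rw [e y' h2, e p' h3, mul_inv_cancel_left, e' _ h4.inv_right]
  simp

lemma cp_mem (R : ERel d iA iV t) {x : G} (hx : x ∈ DD iA iV) (a : A) :
    cp iA t x a ∈ DD iA iV := by
  have mA := iA_mem iA iV
  have mV := iV_mem iA iV
  have move : ∀ x (a b : A), cp iA t x a ∈ DD iA iV → cp iA t x b ∈ DD iA iV := by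
    intro x a b h
    have : cp iA t x b = iA (b⁻¹ * a) * cp iA t x a * (iA (b⁻¹ * a))⁻¹ := by
      rw [cp_conj]; simp
    rw [this]
    exact mul_mem (mul_mem (mA _) h) (inv_mem (mA _))
  set z := d.a2⁻¹ * d.a1 with hz
  have hz1 : z ≠ 1 := fun h => d.a12_ne (by rw [hz, inv_mul_eq_one] at h; exact h.symm)
  have hza1 : z ≠ d.a1 := fun h => d.a2_ne (by simpa [hz] using h)
  have hza2 : z ≠ d.a2 := fun h => d.ne_comm (by
    rw [hz, inv_mul_eq_iff_eq_mul] at h; rw [h]; group)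
  have ha1z1 : d.a1 * z ≠ 1 := fun h => d.ne_comm (by
    have : d.a2 = d.a1 * d.a1 := by
      have h2 : d.a2⁻¹ * d.a1 = d.a1⁻¹ := eq_inv_of_mul_eq_one_right h
      rw [inv_mul_eq_iff_eq_mul, eq_mul_inv_iff_mul_eq] at h2
      exact h2.symm
    rw [this]; group)
  have ha1za1 : d.a1 * z ≠ d.a1 := fun h => hz1 (by simpa using h)
  -- decomposition of `v`
  have dv : ∀ v, iV v = cp iA t (iA (d.w1 v)) d.a1 *
      (cp iA t (iV (d.ρ v)) 1 * cp iA t (iA (d.w2 v)) d.a2) := by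
    intro v
    rw [R.r3 v, (cp_comm R (mV (d.ρ v)) (mA (d.w1 v)) d.a1_ne.symm).eq, mul_assoc]
  have du : ∀ u, iA z⁻¹ * iV u * (iA z⁻¹)⁻¹ = cp iA t (iA (d.w2 u)) d.a1 *
      (cp iA t (iV (d.ρ u)) z * cp iA t (iA (d.w1 u)) (d.a1 * z)) := by
    intro u
    have e0 : d.a2 * z = d.a1 := by simp [hz]
    have e : iA z⁻¹ * iV u * (iA z⁻¹)⁻¹ = cp iA t (iV (d.ρ u)) z *
        cp iA t (iA (d.w1 u)) (d.a1 * z) * cp iA t (iA (d.w2 u)) d.a1 := by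
      rw [R.r3 u, ← MulAut.conj_apply, map_mul, map_mul, MulAut.conj_apply, MulAut.conj_apply,
        MulAut.conj_apply, cp_conj, cp_conj, cp_conj]
      simp [e0]
    rw [e]
    have c1 := cp_comm R (mV (d.ρ u)) (mA (d.w2 u)) hza1
    have c2 := cp_comm R (mA (d.w1 u)) (mA (d.w2 u)) ha1za1
    exact (c1.mul_left c2).eq
  have hcomm : ∀ v u, ⁅iV v, iA z⁻¹ * iV u * (iA z⁻¹)⁻¹⁆ = cp iA t (iA ⁅d.w1 v, d.w2 u⁆) d.a1 := by
    intro v u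
    rw [dv v, du u, comm_lem]
    · change ⁅cpH iA t d.a1 _, cpH iA t d.a1 _⁆ = cpH iA t d.a1 _
      rw [map_commutatorElement, map_commutatorElement]
    · exact (cp_comm R (mV _) (mA _) d.a1_ne.symm).mul_left (cp_comm R (mA _) (mA _) d.a12_ne.symm)
    · exact (cp_comm R (mV _) (mA _) d.a1_ne.symm).mul_left (cp_comm R (mA _) (mA _) d.a12_ne.symm)
    · refine Commute.mul_left (Commute.mul_right ?_ ?_) (Commute.mul_right ?_ ?_)
      · exact cp_comm R (mV _) (mV _) hz1.symm
      · exact cp_comm R (mV _) (mA _) ha1z1.symm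
      · exact cp_comm R (mA _) (mV _) hza2.symm
      · exact cp_comm R (mA _) (mA _) (fun h => d.ne12 h.symm)
    · exact (cp_comm R (mV _) (mA _) hza1).mul_left (cp_comm R (mA _) (mA _) ha1za1)
    · exact (cp_comm R (mV _) (mA _) hza1).mul_left (cp_comm R (mA _) (mA _) ha1za1)
  have hQ : (DD iA iV).comap ((cpH iA t d.a1).comp iA) = ⊤ := by
    have cj : ∀ x y p : G, Commute p x → (y * p) * x * (y * p)⁻¹ = y * x * y⁻¹ := by
      intro x y p h
      rw [mul_assoc y, h.eq]; group
    apply d.gen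
    · intro v u
      change cp iA t (iA _) d.a1 ∈ DD iA iV
      rw [← hcomm v u, commutatorElement_def]
      have h1 := mV v
      have h2 := mul_mem (mul_mem (mA z⁻¹) (mV u)) (inv_mem (mA z⁻¹))
      exact mul_mem (mul_mem (mul_mem h1 h2) (inv_mem h1)) (inv_mem h2)
    · intro v x hx
      change cp iA t (iA _) d.a1 ∈ DD iA iV
      have hx' : cp iA t (iA x) d.a1 ∈ DD iA iV := hx
      have h := mul_mem (mul_mem (mV v) hx') (inv_mem (mV v))
      rw [dv v, cj _ _ _ ((cp_comm R (mV _) (mA _) d.a1_ne.symm).mul_left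
        (cp_comm R (mA _) (mA _) d.a12_ne.symm)), ← cp_inv, ← cp_mul, ← cp_mul] at h
      simpa using h
    · intro u x hx
      change cp iA t (iA _) d.a1 ∈ DD iA iV
      have hx' : cp iA t (iA x) d.a1 ∈ DD iA iV := hx
      have h2 := mul_mem (mul_mem (mA z⁻¹) (mV u)) (inv_mem (mA z⁻¹))
      have h := mul_mem (mul_mem h2 hx') (inv_mem h2)
      rw [du u, cj _ _ _ ((cp_comm R (mV _) (mA _) hza1).mul_left
        (cp_comm R (mA _) (mA _) ha1za1)), ← cp_inv, ← cp_mul, ← cp_mul] at h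
      simpa using h
  have hA : ∀ x b, cp iA t (iA x) b ∈ DD iA iV := by
    intro x b
    have : x ∈ (DD iA iV).comap ((cpH iA t d.a1).comp iA) := by rw [hQ]; trivial
    exact move _ d.a1 b this
  have hV : ∀ v b, cp iA t (iV v) b ∈ DD iA iV := by
    intro v b
    apply move _ 1 b
    have h := R.r3 (d.ρ.symm v)
    rw [MulEquiv.apply_symm_apply] at h
    have e : cp iA t (iV v) 1 = iV (d.ρ.symm v) * (cp iA t (iA (d.w2 (d.ρ.symm v))) d.a2)⁻¹ *
      (cp iA t (iA (d.w1 (d.ρ.symm v))) d.a1)⁻¹ := by rw [h]; group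
    rw [e]
    exact mul_mem (mul_mem (mV _) (inv_mem (hA _ _))) (inv_mem (hA _ _))
  have : DD iA iV ≤ (DD iA iV).comap (cpH iA t a) := by
    conv_lhs => rw [DD]
    rw [Subgroup.closure_le]
    rintro _ (⟨x, rfl⟩ | ⟨v, rfl⟩)
    · exact hA x a
    · exact hV v a
  exact this hx

end E

open scoped commutatorElement

section Words
variable {A V : Type} [Group A] [Group V] [Fintype A] [DecidableEq A]
variable {G : Type} [Group G]

/-- number of V letters -/
def nV (w : List (A ⊕ V)) : ℕ := w.countP Sum.isRight
/-- number of A letters -/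
def nA (w : List (A ⊕ V)) : ℕ := w.countP Sum.isLeft

/-- letter sections -/
def lst (d : Dat A V) (v : V) (b : A) : List (A ⊕ V) :=
  if b = 1 then [Sum.inr (d.ρ v)] else if b = d.a1 ∧ d.w1 v ≠ 1 then [Sum.inl (d.w1 v)]
  else if b = d.a2 ∧ d.w2 v ≠ 1 then [Sum.inl (d.w2 v)] else []

/-- sections -/
def sec (d : Dat A V) : List (A ⊕ V) → A → List (A ⊕ V)
  | [], _ => []
  | Sum.inl a :: w, b => sec d w (b * a)
  | Sum.inr v :: w, b => lst d v b ++ sec d w b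

/-- top -/
def topw : List (A ⊕ V) → A
  | [] => 1
  | Sum.inl a :: w => a * topw w
  | Sum.inr _ :: w => topw w

/-- nontrivial letters -/
def nN (d : Dat A V) (w : List (A ⊕ V)) : ℕ :=
  w.countP fun x => match x with
    | Sum.inl _ => false
    | Sum.inr v => !(decide (d.w1 v = 1) && decide (d.w2 v = 1))

variable {d : Dat A V} {iA : A →* G} {iV : V →* G} {t : G}

/-- evaluation -/
def evD (iA : A →* G) (iV : V →* G) (w : List (A ⊕ V)) : DD iA iV :=
  (w.map fun x => match x with
    | Sum.inl a => (⟨iA a, iA_mem iA iV a⟩ : DD iA iV)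
    | Sum.inr v => ⟨iV v, iV_mem iA iV v⟩).prod

lemma evD_nil : evD iA iV [] = 1 := rfl
lemma evD_append (w w' : List (A ⊕ V)) : evD iA iV (w ++ w') = evD iA iV w * evD iA iV w' := by
  simp [evD]
lemma evD_inl (a : A) (w : List (A ⊕ V)) :
    evD iA iV (Sum.inl a :: w) = ⟨iA a, iA_mem iA iV a⟩ * evD iA iV w := by
  simp [evD]
lemma evD_inr (v : V) (w : List (A ⊕ V)) :
    evD iA iV (Sum.inr v :: w) = ⟨iV v, iV_mem iA iV v⟩ * evD iA iV w := by
  simp [evD]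

lemma evD_surj (x : G) (hx : x ∈ DD iA iV) : ∃ w, (evD iA iV w : G) = x := by
  induction hx using Subgroup.closure_induction with
  | mem g hg =>
    rcases hg with ⟨a, rfl⟩ | ⟨v, rfl⟩
    · exact ⟨[Sum.inl a], by simp [evD]⟩
    · exact ⟨[Sum.inr v], by simp [evD]⟩
  | one => exact ⟨[], rfl⟩
  | mul g h _ _ h1 h2 =>
    obtain ⟨w, rfl⟩ := h1
    obtain ⟨w', rfl⟩ := h2
    exact ⟨w ++ w', by rw [evD_append]; rfl⟩
  | inv g _ h1 =>
    obtain ⟨w, rfl⟩ := h1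
    clear * -
    induction w with
    | nil => exact ⟨[], by simp [evD]⟩
    | cons x w ih =>
      obtain ⟨w', hw'⟩ := ih
      rcases x with a | v
      · refine ⟨w' ++ [Sum.inl a⁻¹], ?_⟩
        rw [evD_append, evD_inl, evD_inl, Subgroup.coe_mul, hw']; simp [evD]
      · refine ⟨w' ++ [Sum.inr v⁻¹], ?_⟩
        rw [evD_append, evD_inr, evD_inr, Subgroup.coe_mul, hw']; simp [evD]

/-- the product map -/
def Psi (R : ERel d iA iV t) : (A → DD iA iV) →* G :=
  MonoidHom.noncommPiCoprod (fun b => (cpH iA t b).comp (DD iA iV).subtype)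
    (fun _ _ hab x y => cp_comm R x.2 y.2 hab)

lemma Psi_single (R : ERel d iA iV t) (b : A) (x : DD iA iV) :
    Psi R (Pi.mulSingle b x) = cp iA t x b :=
  MonoidHom.noncommPiCoprod_mulSingle _ _ _

lemma Psi_conj (R : ERel d iA iV t) (a : A) (g : A → DD iA iV) :
    iA a * Psi R g * (iA a)⁻¹ = Psi R (fun b => g (b * a)) := by
  let sh : (A → DD iA iV) →* (A → DD iA iV) :=
    { toFun := fun g b => g (b * a), map_one' := rfl, map_mul' := fun _ _ => rfl }
  have : (MulAut.conj (iA a)).toMonoidHom.comp (Psi R) = (Psi R).comp sh := by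
    apply MonoidHom.pi_ext
    intro b x
    have e : sh (Pi.mulSingle b x) = Pi.mulSingle (b * a⁻¹) x := by
      funext c
      change (Pi.mulSingle b x : A → DD iA iV) (c * a) = _
      by_cases h : c = b * a⁻¹
      · subst h; simp
      · rw [Pi.mulSingle_eq_of_ne h, Pi.mulSingle_eq_of_ne]
        intro h2; exact h (by rw [← h2]; simp)
    rw [MonoidHom.comp_apply, MonoidHom.comp_apply, e, Psi_single, Psi_single]
    exact cp_conj _ _ _ _ _
  exact DFunLike.congr_fun this g

lemma Psi_lst (R : ERel d iA iV t) (v : V) :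
    iV v = Psi R (fun b => evD iA iV (lst d v b)) := by
  have e : (fun b => evD iA iV (lst d v b)) =
      Pi.mulSingle 1 (⟨iV (d.ρ v), iV_mem iA iV _⟩ : DD iA iV) *
      Pi.mulSingle d.a1 (⟨iA (d.w1 v), iA_mem iA iV _⟩ : DD iA iV) *
      Pi.mulSingle d.a2 (⟨iA (d.w2 v), iA_mem iA iV _⟩ : DD iA iV) := by
    funext b
    have h1 := d.a1_ne
    have h2 := d.a2_ne
    have h3 := d.a12_ne
    simp only [Pi.mul_apply, lst]
    by_cases hb : b = 1
    · subst hb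
      simp [evD, Pi.mulSingle_eq_of_ne h1.symm, Pi.mulSingle_eq_of_ne h2.symm]
    · by_cases hb1 : b = d.a1
      · subst hb1
        by_cases hw : d.w1 v = 1
        · simp [evD, hb, hw, h3, Pi.mulSingle_eq_of_ne h3, Pi.mulSingle_eq_of_ne hb]
          rfl
        · simp [evD, hb, hw, h3, Pi.mulSingle_eq_of_ne h3, Pi.mulSingle_eq_of_ne hb]
      · by_cases hb2 : b = d.a2
        · subst hb2
          by_cases hw : d.w2 v = 1
          · simp [evD, hb, hw, hb1, Pi.mulSingle_eq_of_ne hb1, Pi.mulSingle_eq_of_ne hb]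
            rfl
          · simp [evD, hb, hw, hb1, Pi.mulSingle_eq_of_ne hb1, Pi.mulSingle_eq_of_ne hb]
        · simp [evD, hb, hb1, hb2, Pi.mulSingle_eq_of_ne hb1, Pi.mulSingle_eq_of_ne hb,
            Pi.mulSingle_eq_of_ne hb2]
  rw [e, map_mul, map_mul, Psi_single, Psi_single, Psi_single]
  exact R.r3 v

lemma evD_eq (R : ERel d iA iV t) (w : List (A ⊕ V)) :
    (evD iA iV w : G) = Psi R (fun b => evD iA iV (sec d w b)) * iA (topw w) := by
  induction w with
  | nil =>
    have : (fun b : A => evD iA iV (sec d [] b)) = 1 := rfl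
    rw [this, map_one]; simp [evD, topw]
  | cons x w ih =>
    rcases x with a | v
    · have h := Psi_conj R a (fun b => evD iA iV (sec d w b))
      rw [evD_inl, Subgroup.coe_mul, ih]
      change _ = Psi R (fun b => evD iA iV (sec d w (b * a))) * iA (a * topw w)
      rw [← h, map_mul]; group
    · have h : (fun b => evD iA iV (sec d (Sum.inr v :: w) b)) =
        (fun b => evD iA iV (lst d v b)) * (fun b => evD iA iV (sec d w b)) := by
        funext b; simp only [sec, evD_append, Pi.mul_apply]
      rw [evD_inr, Subgroup.coe_mul, ih, h, map_mul, ← Psi_lst R v]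
      simp only [topw, mul_assoc]

lemma nV_append (w w' : List (A ⊕ V)) : nV (w ++ w') = nV w + nV w' := by simp [nV]
lemma nA_append (w w' : List (A ⊕ V)) : nA (w ++ w') = nA w + nA w' := by simp [nA]
lemma nV_inl (a : A) (w : List (A ⊕ V)) : nV (Sum.inl a :: w) = nV w := by simp [nV]
lemma nV_inr (v : V) (w : List (A ⊕ V)) : nV (Sum.inr v :: w) = nV w + 1 :=
  List.countP_cons_of_pos rfl
lemma nA_inl (a : A) (w : List (A ⊕ V)) : nA (Sum.inl a :: w) = nA w + 1 :=
  List.countP_cons_of_pos rfl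
lemma nA_inr (v : V) (w : List (A ⊕ V)) : nA (Sum.inr v :: w) = nA w := by simp [nA]

lemma nV_lst (v : V) (b : A) : nV (lst d v b) = if b = 1 then 1 else 0 := by
  unfold lst
  split_ifs <;> simp [nV]

lemma sum_sec_inl (F : List (A ⊕ V) → ℕ) (a : A) (w : List (A ⊕ V)) (C : Finset A) :
    ∑ x ∈ C, F (sec d (Sum.inl a :: w) x) = ∑ x ∈ C.image (· * a), F (sec d w x) := by
  rw [Finset.sum_image (fun x _ y _ h => mul_right_cancel h)]; rfl

lemma sum_sec_inr (F : List (A ⊕ V) → ℕ) (hF : ∀ w w', F (w ++ w') = F w + F w') (v : V)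
    (w : List (A ⊕ V)) (C : Finset A) :
    ∑ x ∈ C, F (sec d (Sum.inr v :: w) x) =
      ∑ x ∈ C, F (lst d v x) + ∑ x ∈ C, F (sec d w x) := by
  simp only [sec, hF, Finset.sum_add_distrib]

lemma sum_nV_lst (v : V) (C : Finset A) :
    ∑ x ∈ C, nV (lst d v x) = if (1 : A) ∈ C then 1 else 0 := by
  simp only [nV_lst, Finset.sum_ite_eq']

lemma F1 (w : List (A ⊕ V)) (C : Finset A) : ∑ x ∈ C, nV (sec d w x) ≤ nV w := by
  induction w generalizing C with
  | nil => simp [sec, nV]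
  | cons x w ih =>
    rcases x with a | v
    · rw [sum_sec_inl, nV_inl]; exact ih _
    · rw [sum_sec_inr nV nV_append, nV_inr, sum_nV_lst]
      have := ih C
      split_ifs <;> omega

lemma sum_nA_lst (v : V) (C : Finset A) (h1 : (1 : A) ∈ C) (hC : ¬ (d.a1 ∈ C ∧ d.a2 ∈ C)) :
    ∑ x ∈ C, nA (lst d v x) ≤ if d.w1 v = 1 ∧ d.w2 v = 1 then 0 else 1 := by
  have e : ∀ x, nA (lst d v x) ≤ (if x = d.a1 then (if d.w1 v = 1 then 0 else 1) else 0) +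
      (if x = d.a2 then (if d.w2 v = 1 then 0 else 1) else 0) := by
    intro x
    have h1 := d.a1_ne
    have h2 := d.a2_ne
    have h3 := d.a12_ne
    unfold lst
    split_ifs <;> simp_all [nA]
  refine (Finset.sum_le_sum fun x _ => e x).trans ?_
  rw [Finset.sum_add_distrib, Finset.sum_ite_eq', Finset.sum_ite_eq']
  split_ifs <;> simp_all

lemma F2 (w : List (A ⊕ V)) (C : Finset A) (hC : ∀ x ∈ C, ¬ (d.a1 * x ∈ C ∧ d.a2 * x ∈ C))
    (h : ∑ x ∈ C, nV (sec d w x) = nV w) : ∑ x ∈ C, nA (sec d w x) ≤ nN d w := by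
  induction w generalizing C with
  | nil => simp [sec, nA]
  | cons x w ih =>
    rcases x with a | v
    · rw [sum_sec_inl, nV_inl] at h
      rw [sum_sec_inl]
      have := ih _ ?_ h
      · simpa [nN] using this
      · intro x hx
        simp only [Finset.mem_image] at hx
        obtain ⟨y, hy, rfl⟩ := hx
        rintro ⟨h1, h2⟩
        simp only [← mul_assoc, Finset.mem_image, mul_left_inj, exists_eq_right] at h1 h2
        exact hC y hy ⟨h1, h2⟩
    · rw [sum_sec_inr nV nV_append, nV_inr, sum_nV_lst] at h
      have h3 := F1 (d := d) w C
      have h1 : (1 : A) ∈ C := by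
        by_contra h1
        rw [if_neg h1] at h; omega
      rw [if_pos h1] at h
      rw [sum_sec_inr nA nA_append]
      have h4 := ih C hC (by omega)
      have h5 := sum_nA_lst (d := d) v C h1 (by simpa using hC 1 h1)
      have h6 : nN d (Sum.inr v :: w) = nN d w + if d.w1 v = 1 ∧ d.w2 v = 1 then 0 else 1 := by
        simp only [nN, List.countP_cons]
        congr 1
        by_cases h1 : d.w1 v = 1 <;> by_cases h2 : d.w2 v = 1 <;> simp [h1, h2]
      omega

lemma F3 (w : List (A ⊕ V)) (C : Finset A) (h : ∑ x ∈ C, nV (sec d w x) = nV w) (v : V)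
    (hv : Sum.inr v ∈ w) : ∃ x ∈ C, Sum.inr (d.ρ v) ∈ sec d w x := by
  induction w generalizing C with
  | nil => simp at hv
  | cons x w ih =>
    rcases x with a | v'
    · rw [sum_sec_inl, nV_inl] at h
      obtain ⟨x, hx, hx2⟩ := ih _ h (by simpa using hv)
      simp only [Finset.mem_image] at hx
      obtain ⟨y, hy, rfl⟩ := hx
      exact ⟨y, hy, hx2⟩
    · rw [sum_sec_inr nV nV_append, nV_inr, sum_nV_lst] at h
      have h3 := F1 (d := d) w C
      have h1 : (1 : A) ∈ C := by
        by_contra h1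
        rw [if_neg h1] at h; omega
      rw [if_pos h1] at h
      rcases List.mem_cons.1 hv with h' | h'
      · cases h'
        exact ⟨1, h1, by simp [sec, lst]⟩
      · obtain ⟨x, hx, hx2⟩ := ih C (by omega) h'
        exact ⟨x, hx, by simp [sec, hx2]⟩

/-- word for powers -/
def LL (d : Dat A V) (w : List (A ⊕ V)) (α : A) : ℕ → A → List (A ⊕ V)
  | 0, _ => []
  | n + 1, b => sec d w b ++ LL d w α n (b * α)

lemma pow_eq (R : ERel d iA iV t) (w : List (A ⊕ V)) (n : ℕ) :
    (evD iA iV w : G) ^ n = Psi R (fun b => evD iA iV (LL d w (topw w) n b)) * iA (topw w) ^ n := by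
  induction n with
  | zero =>
    have : (fun b : A => evD iA iV (LL d w (topw w) 0 b)) = 1 := rfl
    rw [this]; simp
  | succ n ih =>
    have e : (fun b => evD iA iV (LL d w (topw w) (n + 1) b)) =
      (fun b => evD iA iV (sec d w b)) *
      (fun b => evD iA iV (LL d w (topw w) n (b * topw w))) := by
      funext b; simp only [LL, evD_append, Pi.mul_apply]
    rw [pow_succ', ih, evD_eq R w, e, map_mul,
      ← Psi_conj R (topw w) (fun b => evD iA iV (LL d w (topw w) n b)), pow_succ']
    group

lemma LL_count (F : List (A ⊕ V) → ℕ) (hF : ∀ w w', F (w ++ w') = F w + F w') (h0 : F [] = 0)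
    (w : List (A ⊕ V)) (α : A) (n : ℕ) (b : A) :
    F (LL d w α n b) = ∑ i ∈ Finset.range n, F (sec d w (b * α ^ i)) := by
  induction n generalizing b with
  | zero => simp [LL, h0]
  | succ n ih =>
    rw [LL, hF, ih, Finset.sum_range_succ']
    simp only [pow_zero, mul_one, pow_succ', mul_assoc]
    omega

lemma LL_mem (w : List (A ⊕ V)) (α : A) (n : ℕ) (b : A) (i : ℕ) (hi : i < n) (y : A ⊕ V)
    (hy : y ∈ sec d w (b * α ^ i)) : y ∈ LL d w α n b := by
  induction n generalizing b i with
  | zero => omega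
  | succ n ih =>
    rw [LL, List.mem_append]
    cases i with
    | zero => left; simpa using hy
    | succ i => right; exact ih (b * α) i (by omega) (by rw [pow_succ', ← mul_assoc] at hy; exact hy)

/-- orbit -/
noncomputable def orb (b α : A) : Finset A := (Finset.range (orderOf α)).image fun i => b * α ^ i

lemma orb_sum (F : A → ℕ) (b α : A) :
    ∑ x ∈ orb b α, F x = ∑ i ∈ Finset.range (orderOf α), F (b * α ^ i) := by
  rw [orb, Finset.sum_image]
  intro i hi j hj h
  simp only [Finset.coe_range, Set.mem_Iio] at hi hj
  exact pow_injOn_Iio_orderOf hi hj (mul_left_cancel h)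

lemma orb_good (d : Dat A V) (b α : A) : ∀ x ∈ orb b α,
    ¬ (d.a1 * x ∈ orb b α ∧ d.a2 * x ∈ orb b α) := by
  rintro x hx ⟨h1, h2⟩
  simp only [orb, Finset.mem_image] at hx h1 h2
  obtain ⟨i, -, rfl⟩ := hx
  obtain ⟨j, -, hj⟩ := h1
  obtain ⟨k, -, hk⟩ := h2
  apply d.ne_comm
  have e1 : d.a1 = b * (α ^ j * (α ^ i)⁻¹) * b⁻¹ := by
    rw [eq_mul_inv_iff_mul_eq, ← mul_assoc b, eq_mul_inv_iff_mul_eq, mul_assoc, ← hj]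
  have e2 : d.a2 = b * (α ^ k * (α ^ i)⁻¹) * b⁻¹ := by
    rw [eq_mul_inv_iff_mul_eq, ← mul_assoc b, eq_mul_inv_iff_mul_eq, mul_assoc, ← hk]
  have e3 : (α ^ j * (α ^ i)⁻¹) * (α ^ k * (α ^ i)⁻¹) = (α ^ k * (α ^ i)⁻¹) * (α ^ j * (α ^ i)⁻¹) := by
    simp only [← zpow_natCast, ← zpow_neg, ← zpow_add]
    congr 1; ring
  rw [e1, e2]
  calc _ = b * ((α ^ j * (α ^ i)⁻¹) * (α ^ k * (α ^ i)⁻¹)) * b⁻¹ := by group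
    _ = _ := by rw [e3]; group

/-- head is V -/
def headV : List (A ⊕ V) → ℕ
  | Sum.inr _ :: _ => 1
  | _ => 0

/-- adjacent V letters -/
def HasVV (L : List (A ⊕ V)) : Prop :=
  ∃ l1 v v' l2, L = l1 ++ Sum.inr v :: Sum.inr v' :: l2

lemma vv_lem (L : List (A ⊕ V)) : HasVV L ∨ nV L ≤ nA L + headV L := by
  induction L with
  | nil => right; simp [nV]
  | cons x M ih =>
    rcases ih with ⟨l1, v, v', l2, rfl⟩ | ih
    · left; exact ⟨x :: l1, v, v', l2, rfl⟩
    rcases x with a | v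
    · right; rw [nV_inl, nA_inl]
      have : headV M ≤ 1 := by unfold headV; split <;> simp
      omega
    · rcases M with _ | ⟨y, M⟩
      · right; simp [nV, nA, headV]
      rcases y with a | v'
      · right
        rw [nV_inr, nA_inr]
        simp only [headV] at ih ⊢
        omega
      · left; exact ⟨[], v, v', M, rfl⟩

lemma vv_red {L : List (A ⊕ V)} (h : HasVV L) : ∃ L', nV L' < nV L ∧
    evD iA iV L' = evD iA iV L := by
  obtain ⟨l1, v, v', l2, rfl⟩ := h
  refine ⟨l1 ++ Sum.inr (v * v') :: l2, ?_, ?_⟩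
  · simp [nV_append, nV_inr]
  · rw [evD_append, evD_append, evD_inr, evD_inr, evD_inr]
    apply Subtype.ext
    simp [mul_assoc]

variable [Finite V]

lemma iV_tors (v : V) : IsOfFinOrder (iV v) := iV.isOfFinOrder (isOfFinOrder_of_finite v)
lemma iA_tors (a : A) : IsOfFinOrder (iA a) := iA.isOfFinOrder (isOfFinOrder_of_finite a)

lemma merge_tors (L : List (A ⊕ V)) (hL : nA L < nV L)
    (IH : ∀ L', nV L' < nV L → IsOfFinOrder (evD iA iV L' : G)) :
    IsOfFinOrder (evD iA iV L : G) := by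
  have red : ∀ M, nV M = nV L → HasVV M → IsOfFinOrder (evD iA iV M : G) := by
    intro M hM h
    obtain ⟨L', h1, h2⟩ := vv_red (iA := iA) (iV := iV) h
    rw [← h2]; exact IH L' (by omega)
  rcases vv_lem L with h | h
  · exact red L rfl h
  rcases L with _ | ⟨x, M⟩
  · simp [nV] at hL
  rcases x with a | v
  · simp only [headV] at h; omega
  have hconj : IsOfFinOrder (evD iA iV (M ++ [Sum.inr v]) : G) →
      IsOfFinOrder (evD iA iV (Sum.inr v :: M) : G) := by
    intro h
    have e : (evD iA iV (Sum.inr v :: M) : G) =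
        iV v * (evD iA iV (M ++ [Sum.inr v]) : G) * (iV v)⁻¹ := by
      rw [evD_append, evD_inr, evD_inr, evD_nil]; simp; group
    rw [e]
    exact (MulAut.conj (iV v)).toMonoidHom.isOfFinOrder h
  have hnV : nV (M ++ [Sum.inr v]) = nV (Sum.inr v :: M) := by
    rw [nV_append, nV_inr, nV_inr]; simp [nV]
  have hnA : nA (M ++ [Sum.inr v]) = nA (Sum.inr v :: M) := by
    rw [nA_append, nA_inr, nA_inr]; simp [nA]
  rcases vv_lem (M ++ [Sum.inr v]) with h' | h'
  · exact hconj (red _ hnV h')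
  rcases M with _ | ⟨y, M⟩
  · have : (evD iA iV [Sum.inr v] : G) = iV v := by rw [evD_inr, evD_nil]; simp
    rw [this]; exact iV_tors v
  rcases y with a | v'
  · simp only [List.cons_append, headV] at h'
    simp only [List.cons_append] at hnV hnA
    omega
  · exact red _ rfl ⟨[], v, v', M, rfl⟩

lemma nV_zero (w : List (A ⊕ V)) (h : nV w = 0) : ∃ a, (evD iA iV w : G) = iA a := by
  induction w with
  | nil => exact ⟨1, by simp [evD]⟩
  | cons x w ih =>
    rcases x with a | v
    · obtain ⟨b, hb⟩ := ih (by rwa [nV_inl] at h)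
      exact ⟨a * b, by rw [evD_inl, Subgroup.coe_mul, hb, map_mul]⟩
    · rw [nV_inr] at h; omega

lemma nN_lt (w : List (A ⊕ V)) (v : V) (hv : Sum.inr v ∈ w) (h1 : d.w1 v = 1)
    (h2 : d.w2 v = 1) : nN d w < nV w := by
  have hle : ∀ w, nN d w ≤ nV w := by
    intro w
    apply List.countP_mono_left
    rintro (a | v) _ h
    · simp at h
    · rfl
  obtain ⟨l1, l2, rfl⟩ := List.append_of_mem hv
  have a1 := hle l1
  have a2 := hle l2
  rw [nV_append, nV_inr]
  have : nN d (l1 ++ Sum.inr v :: l2) = nN d l1 + nN d l2 := by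
    simp [nN, h1, h2]
  omega

lemma pi_tors {N : Type} [Group N] (g : A → N) (h : ∀ a, IsOfFinOrder (g a)) :
    IsOfFinOrder g := by
  rw [isOfFinOrder_iff_pow_eq_one]
  refine ⟨∏ a, orderOf (g a), Finset.prod_pos fun a _ => (h a).orderOf_pos, ?_⟩
  funext a
  rw [Pi.pow_apply, Pi.one_apply, ← orderOf_dvd_iff_pow_eq_one]
  exact Finset.dvd_prod_of_mem _ (Finset.mem_univ a)

lemma sub_tors {H : Subgroup G} {x : H} : IsOfFinOrder (x : G) ↔ IsOfFinOrder x :=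
  Subgroup.subtype_injective H |>.isOfFinOrder_iff (f := H.subtype)

lemma words_tors (R : ERel d iA iV t) (k : ℕ) : ∀ w, nV w = k → IsOfFinOrder (evD iA iV w : G) := by
  induction k using Nat.strong_induction_on with
  | _ k IHk =>
    have inner : ∀ m : ℕ, ∀ w, nV w = k → (∃ v, Sum.inr v ∈ w ∧ d.w1 (d.ρ^[m] v) = 1 ∧
        d.w2 (d.ρ^[m] v) = 1) → IsOfFinOrder (evD iA iV w : G) := by
      intro m
      induction m with
      | zero =>
        rintro w hw ⟨v, hv, h1, h2⟩
        have key : ∀ b, IsOfFinOrder (evD iA iV (LL d w (topw w) (orderOf (topw w)) b)) := by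
          intro b
          rw [← sub_tors]
          have cV : nV (LL d w (topw w) (orderOf (topw w)) b) =
              ∑ x ∈ orb b (topw w), nV (sec d w x) := by
            rw [LL_count nV nV_append rfl, orb_sum (fun x => nV (sec d w x))]
          have cA : nA (LL d w (topw w) (orderOf (topw w)) b) =
              ∑ x ∈ orb b (topw w), nA (sec d w x) := by
            rw [LL_count nA nA_append rfl, orb_sum (fun x => nA (sec d w x))]
          have hle := F1 (d := d) w (orb b (topw w))
          by_cases hlt : nV (LL d w (topw w) (orderOf (topw w)) b) < k
          · exact IHk _ hlt _ rfl
          have heq : ∑ x ∈ orb b (topw w), nV (sec d w x) = nV w := by omega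
          have h3 := F2 w _ (orb_good d b (topw w)) heq
          have h4 := nN_lt w v hv h1 h2
          exact merge_tors _ (by omega) (fun L' hL' => IHk _ (by omega) L' rfl)
        have hp := pow_eq R w (orderOf (topw w))
        rw [← map_pow, pow_orderOf_eq_one, map_one, mul_one] at hp
        have h5 := (Psi R).isOfFinOrder (pi_tors _ key)
        rw [← hp] at h5
        exact (isOfFinOrder_pow.1 h5).resolve_right (orderOf_pos _).ne'
      | succ m IHm =>
        rintro w hw ⟨v, hv, h1, h2⟩
        have key : ∀ b, IsOfFinOrder (evD iA iV (LL d w (topw w) (orderOf (topw w)) b)) := by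
          intro b
          rw [← sub_tors]
          have cV : nV (LL d w (topw w) (orderOf (topw w)) b) =
              ∑ x ∈ orb b (topw w), nV (sec d w x) := by
            rw [LL_count nV nV_append rfl, orb_sum (fun x => nV (sec d w x))]
          have hle := F1 (d := d) w (orb b (topw w))
          by_cases hlt : nV (LL d w (topw w) (orderOf (topw w)) b) < k
          · exact IHk _ hlt _ rfl
          have heq : ∑ x ∈ orb b (topw w), nV (sec d w x) = nV w := by omega
          obtain ⟨x, hx, hx2⟩ := F3 w _ heq v hv
          simp only [orb, Finset.mem_image, Finset.mem_range] at hx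
          obtain ⟨i, hi, rfl⟩ := hx
          exact IHm _ (by omega) ⟨d.ρ v, LL_mem w _ _ b i hi _ hx2, by
            simpa using h1, by simpa using h2⟩
        have hp := pow_eq R w (orderOf (topw w))
        rw [← map_pow, pow_orderOf_eq_one, map_one, mul_one] at hp
        have h5 := (Psi R).isOfFinOrder (pi_tors _ key)
        rw [← hp] at h5
        exact (isOfFinOrder_pow.1 h5).resolve_right (orderOf_pos _).ne'
    intro w hw
    by_cases h : ∃ v, Sum.inr v ∈ w
    · obtain ⟨v, hv⟩ := h
      obtain ⟨n, hn⟩ := d.cover v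
      exact inner n w hw ⟨v, hv, hn⟩
    · have : nV w = 0 := by
        rw [nV, List.countP_eq_zero]
        rintro (a | v) hx
        · simp
        · exact absurd ⟨v, hx⟩ h
      obtain ⟨a, ha⟩ := nV_zero (iA := iA) (iV := iV) w this
      rw [ha]; exact iA_tors a

lemma DD_tors (R : ERel d iA iV t) (x : G) (hx : x ∈ DD iA iV) : IsOfFinOrder x := by
  obtain ⟨w, rfl⟩ := evD_surj x hx
  exact words_tors R _ w rfl

end Words

open scoped commutatorElement

section EEsec
variable {A V : Type} [Group A] [Group V]
variable {G : Type} [Group G]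

/-- E -/
def EE (iA : A →* G) (iV : V →* G) (t : G) : Subgroup G :=
  Subgroup.closure (Set.range iA ∪ Set.range iV ∪ {t})

/-- generators of P -/
def PG (iA : A →* G) (iV : V →* G) (t : G) : Set G :=
  {t} ∪ Set.range iV ∪ {x | ∃ y ∈ Set.range iA ∪ Set.range iV, ∃ a : A, a ≠ 1 ∧ x = cp iA t y a}

/-- P -/
def PP (iA : A →* G) (iV : V →* G) (t : G) : Subgroup G := Subgroup.closure (PG iA iV t)

variable {d : Dat A V} {iA : A →* G} {iV : V →* G} {t : G}

lemma DD_le_EE : DD iA iV ≤ EE iA iV t := Subgroup.closure_mono Set.subset_union_left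

lemma t_mem_EE : t ∈ EE iA iV t := Subgroup.subset_closure (Or.inr rfl)

lemma cp1 (x : G) : cp iA t x 1 = t⁻¹ * x * t := by simp [cp]

lemma EE_form (R : ERel d iA iV t) (g : G) (hg : g ∈ EE iA iV t) :
    ∃ i j : ℕ, ∃ x ∈ DD iA iV, g = t ^ i * x * (t ^ j)⁻¹ := by
  have tm : ∀ x ∈ DD iA iV, t⁻¹ * x * t ∈ DD iA iV := by
    intro x hx
    rw [← cp1 (iA := iA)]; exact cp_mem R hx 1
  have tmi : ∀ i : ℕ, ∀ x ∈ DD iA iV, (t ^ i)⁻¹ * x * t ^ i ∈ DD iA iV := by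
    intro i
    induction i with
    | zero => intro x hx; simpa using hx
    | succ i ih =>
      intro x hx
      have := tm _ (ih x hx)
      convert this using 1
      rw [pow_succ]; group
  have dm : ∀ y ∈ DD iA iV, ∀ g, (∃ i j : ℕ, ∃ x ∈ DD iA iV, g = t ^ i * x * (t ^ j)⁻¹) →
      ∃ i j : ℕ, ∃ x ∈ DD iA iV, y * g = t ^ i * x * (t ^ j)⁻¹ := by
    rintro y hy g ⟨i, j, x, hx, rfl⟩
    exact ⟨i, j, _, mul_mem (tmi i y hy) hx, by group⟩
  have gm : ∀ y ∈ Set.range iA ∪ Set.range iV, y ∈ DD iA iV := fun y hy =>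
    Subgroup.subset_closure hy
  induction hg using Subgroup.closure_induction_left with
  | one => exact ⟨0, 0, 1, one_mem _, by simp⟩
  | mul_left y hy g _ ih =>
    rcases hy with hy | hy
    · exact dm y (gm y hy) g ih
    · rw [Set.mem_singleton_iff] at hy
      subst hy
      obtain ⟨i, j, x, hx, rfl⟩ := ih
      exact ⟨i + 1, j, x, hx, by rw [pow_succ']; group⟩
  | inv_mul_cancel y hy g _ ih =>
    rcases hy with hy | hy
    · exact dm _ (inv_mem (gm y hy)) g ih
    · rw [Set.mem_singleton_iff] at hy
      subst hy
      obtain ⟨i, j, x, hx, rfl⟩ := ih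
      cases i with
      | zero => exact ⟨0, j + 1, _, tm x hx, by rw [pow_succ]; simp [mul_assoc]⟩
      | succ i => exact ⟨i, j, x, hx, by rw [pow_succ']; simp [mul_assoc]⟩

lemma cpP {x : G} (hx : x ∈ DD iA iV) {b : A} (hb : b ≠ 1) : cp iA t x b ∈ PP iA iV t := by
  induction hx using Subgroup.closure_induction with
  | mem y hy => exact Subgroup.subset_closure (Or.inr ⟨y, hy, b, hb, rfl⟩)
  | one => rw [cp_one]; exact one_mem _
  | mul g h _ _ h1 h2 => rw [cp_mul]; exact mul_mem h1 h2
  | inv g _ h1 => rw [cp_inv]; exact inv_mem h1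

lemma t_mem_PP : t ∈ PP iA iV t := Subgroup.subset_closure (Or.inl (Or.inl rfl))
lemma iV_mem_PP (v : V) : iV v ∈ PP iA iV t :=
  Subgroup.subset_closure (Or.inl (Or.inr ⟨v, rfl⟩))

variable [Fintype A] [DecidableEq A]

lemma EE_tors [Finite V] (R : ERel d iA iV t) (χ : G →* Multiplicative ℤ)
    (hA : ∀ a, χ (iA a) = 1)
    (hV : ∀ v, χ (iV v) = 1) (ht : χ t = Multiplicative.ofAdd 1) (g : G) (hg : g ∈ EE iA iV t)
    (h : χ g = 1) : IsOfFinOrder g := by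
  obtain ⟨i, j, x, hx, rfl⟩ := EE_form R g hg
  have hD : DD iA iV ≤ χ.ker := by
    rw [DD, Subgroup.closure_le]
    rintro _ (⟨a, rfl⟩ | ⟨v, rfl⟩)
    · exact hA a
    · exact hV v
  have hxx : χ x = 1 := hD hx
  rw [map_mul, map_mul, map_inv, map_pow, map_pow, hxx, ht, mul_one, mul_inv_eq_one] at h
  have hij : i = j := by
    have := congrArg Multiplicative.toAdd h
    simpa using this
  subst hij
  exact (MulAut.conj (t ^ i)).toMonoidHom.isOfFinOrder (DD_tors R x hx)

lemma Psi_PP (R : ERel d iA iV t) (g : A → DD iA iV) (h1 : g 1 = 1) : Psi R g ∈ PP iA iV t := by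
  change g ∈ (PP iA iV t).comap (Psi R)
  apply Subgroup.pi_mem_of_mulSingle_mem
  intro b
  change Psi R _ ∈ PP iA iV t
  rw [Psi_single]
  by_cases hb : b = 1
  · subst hb; rw [h1]; simp [cp_one]
  · exact cpP (g b).2 hb

lemma full_sec (w : List (A ⊕ V)) (b : A) (h : nV (sec d w b) = nV w) :
    ∃ v, (evD iA iV w : G) = iA b⁻¹ * iV v * iA (b * topw w) := by
  induction w generalizing b with
  | nil => exact ⟨1, by simp [evD, topw]⟩
  | cons x w ih =>
    rcases x with a | v
    · rw [nV_inl] at h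
      obtain ⟨v, hv⟩ := ih (b * a) h
      refine ⟨v, ?_⟩
      rw [evD_inl, Subgroup.coe_mul, hv]
      simp [topw, mul_assoc]
    · have h1 := F1 (d := d) w {b}
      rw [Finset.sum_singleton] at h1
      rw [nV_inr, sec, nV_append, nV_lst] at h
      by_cases hb : b = 1
      · subst hb
        rw [if_pos rfl] at h
        obtain ⟨u, hu⟩ := ih 1 (by omega)
        refine ⟨v * u, ?_⟩
        rw [evD_inr, Subgroup.coe_mul, hu]
        simp [topw, mul_assoc]
      · rw [if_neg hb] at h; omega

lemma dcos_word (R : ERel d iA iV t) (k : ℕ) : ∀ w, nV w = k →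
    ∃ p ∈ PP iA iV t, ∃ α, ∃ q ∈ PP iA iV t, (evD iA iV w : G) = p * iA α * q := by
  induction k using Nat.strong_induction_on with
  | _ k ih =>
    intro w hw
    set g : A → DD iA iV := fun b => evD iA iV (sec d w b) with hg
    have e0 : (evD iA iV w : G) = Psi R g * iA (topw w) := evD_eq R w
    have e1 : g = Function.update g 1 1 * Pi.mulSingle 1 (g 1) := by
      funext b
      by_cases hb : b = 1
      · subst hb; simp
      · simp [hb]
    have hP : Psi R (Function.update g 1 1) ∈ PP iA iV t := Psi_PP R _ (by simp)
    rw [e1, map_mul, Psi_single] at e0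
    by_cases ht : topw w = 1
    · by_cases hn : nV (sec d w 1) < k
      · obtain ⟨p, hp, α, q, hq, h⟩ := ih _ hn _ rfl
        refine ⟨Psi R (Function.update g 1 1) * t⁻¹ * p, mul_mem (mul_mem hP (inv_mem t_mem_PP)) hp,
          α, q * t, mul_mem hq t_mem_PP, ?_⟩
        rw [e0, ht, map_one, mul_one, cp1, h]; group
      · have h1 := F1 (d := d) w {1}
        rw [Finset.sum_singleton] at h1
        obtain ⟨v, hv⟩ := full_sec (iA := iA) (iV := iV) (d := d) w 1 (by omega)
        refine ⟨iV v, iV_mem_PP v, 1, 1, one_mem _, ?_⟩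
        rw [hv, ht]; simp
    · refine ⟨_, hP, topw w, cp iA t (g 1) (topw w), cpP (g 1).2 ht, ?_⟩
      have := cp_conj iA t (g 1 : G) 1 (topw w)⁻¹
      rw [inv_inv, one_mul, map_inv, inv_inv] at this
      rw [e0, ← this]; group

lemma dcos (R : ERel d iA iV t) (g : G) (hg : g ∈ EE iA iV t) :
    ∃ p ∈ PP iA iV t, ∃ α, ∃ q ∈ PP iA iV t, g = p * iA α * q := by
  obtain ⟨i, j, x, hx, rfl⟩ := EE_form R g hg
  obtain ⟨w, rfl⟩ := evD_surj x hx
  obtain ⟨p, hp, α, q, hq, h⟩ := dcos_word R _ w rfl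
  refine ⟨t ^ i * p, mul_mem (pow_mem t_mem_PP _) hp, α, q * (t ^ j)⁻¹,
    mul_mem hq (inv_mem (pow_mem t_mem_PP _)), ?_⟩
  rw [h]; group

end EEsec

section GGsec
variable {A V K : Type} [Group A] [Group V] [Group K]
variable {G : Type} [Group G]

/-- conjugate family -/
def conjF (g : G) (f : Fam G) : Fam G := fun i j => g * f i j * g⁻¹

lemma conjF_mul (g h : G) (f : Fam G) : conjF (g * h) f = conjF g (conjF h f) := by
  funext i j; simp only [conjF]; group

lemma conjF_one (f : Fam G) : conjF 1 f = f := by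
  funext i j; simp [conjF]

/-- mapped family -/
def mapF {H : Type} [Group H] (φ : H →* G) (f : Fam H) : Fam G := fun i j => φ (f i j)

lemma Compat.mapF {H : Type} [Group H] (φ : H →* G) {f g : Fam H} (h : Compat f g) :
    Compat (mapF φ f) (mapF φ g) where
  c1 i j k l h1 h2 h3 h4 := (h.c1 i j k l h1 h2 h3 h4).map φ
  c2 i j k j' h1 h2 h3 h4 h5 := by
    have := congrArg φ (h.c2 i j k j' h1 h2 h3 h4 h5)
    rwa [map_commutatorElement, map_commutatorElement] at this
  c3 i j k h1 h2 h3 := by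
    have := congrArg φ (h.c3 i j k h1 h2 h3)
    rwa [map_commutatorElement, map_commutatorElement] at this

lemma mulR_mapF {H : Type} [Group H] (φ : H →* G) (f g : Fam H) :
    mulR (mapF φ f) (mapF φ g) = mapF φ (mulR f g) := by
  funext i k
  simp only [mulR, mapF]
  split_ifs
  · simp
  · rw [map_commutatorElement]

lemma conjF_eq (g : G) (f : Fam G) : conjF g f = mapF (MulAut.conj g).toMonoidHom f := rfl

lemma Compat.conjF {f f' : Fam G} (h : Compat f f') (g : G) : Compat (conjF g f) (conjF g f') := by
  rw [conjF_eq, conjF_eq]; exact h.mapF _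

lemma mulR_conjF (g : G) (f f' : Fam G) :
    mulR (conjF g f) (conjF g f') = conjF g (mulR f f') := by
  rw [conjF_eq, conjF_eq, mulR_mapF]; rfl

lemma KF_mapF {H : Type} [Group H] (φ : H →* G) (f : Fam H) : KF (mapF φ f) = (KF f).map φ := by
  rw [KF, KF, MonoidHom.map_closure]
  congr 1
  ext x
  constructor
  · rintro ⟨i, j, rfl⟩; exact ⟨f i j, ⟨i, j, rfl⟩, rfl⟩
  · rintro ⟨_, ⟨i, j, rfl⟩, rfl⟩; exact ⟨i, j, rfl⟩

/-- all the relations of G -/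
structure GRel (d : Dat A V) (iA : A →* G) (iV : V →* G) (t : G) (iK : K →* G) (E : Fam K) :
    Prop where
  e : ERel d iA iV t
  kc : ∀ k, ∀ p ∈ PG iA iV t, Commute (iK k) p
  cmp : ∀ α, Compat (mapF iK E) (conjF (iA α) (mapF iK E))

/-- all conjugates -/
def SS (iA : A →* G) (iV : V →* G) (t : G) (iK : K →* G) (E : Fam K) : Set (Fam G) :=
  {f | ∃ g ∈ EE iA iV t, f = conjF g (mapF iK E)}

variable {d : Dat A V} {iA : A →* G} {iV : V →* G} {t : G} {iK : K →* G} {E : Fam K}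

lemma P_fix (R : GRel d iA iV t iK E) {p : G} (hp : p ∈ PP iA iV t) :
    conjF p (mapF iK E) = mapF iK E := by
  have h : ∀ k, Commute (iK k) p := by
    intro k
    induction hp using Subgroup.closure_induction with
    | mem y hy => exact R.kc k y hy
    | one => exact Commute.one_right _
    | mul g h _ _ h1 h2 => exact h1.mul_right h2
    | inv g _ h1 => exact h1.inv_right
  funext i j
  simp only [conjF, mapF]
  rw [← (h _).eq]; group

variable [Fintype A] [DecidableEq A]

lemma SS_compat (R : GRel d iA iV t iK E) : ∀ s ∈ SS iA iV t iK E, ∀ s' ∈ SS iA iV t iK E,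
    Compat s s' := by
  rintro _ ⟨g, hg, rfl⟩ _ ⟨h, hh, rfl⟩
  obtain ⟨p, hp, α, q, hq, e⟩ := dcos R.e (g⁻¹ * h) (mul_mem (inv_mem hg) hh)
  have e2 : h = g * p * iA α * q := by
    rw [inv_mul_eq_iff_eq_mul] at e; rw [e]; group
  rw [e2, conjF_mul _ q, P_fix R hq, conjF_mul (g * p)]
  have : conjF g (mapF iK E) = conjF (g * p) (mapF iK E) := by rw [conjF_mul, P_fix R hp]
  rw [this]
  exact (R.cmp α).conjF _

lemma SS_idem (hE : mulR E E = E) : ∀ s ∈ SS iA iV t iK E, mulR s s = s := by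
  rintro _ ⟨g, hg, rfl⟩
  rw [mulR_conjF, mulR_mapF, hE]

lemma SS_fin [Finite K] : ∀ s ∈ SS iA iV t iK E, Finite (KF s) := by
  rintro _ ⟨g, hg, rfl⟩
  rw [conjF_eq, KF_mapF, KF_mapF]
  have : (KF E : Set K).Finite := Set.toFinite _
  have h2 := (this.image iK).image (MulAut.conj g).toMonoidHom
  exact h2.to_subtype

lemma SS_conj (x : G) (hx : x ∈ EE iA iV t) (y : G) (hy : y ∈ MF (SS iA iV t iK E)) :
    x * y * x⁻¹ ∈ MF (SS iA iV t iK E) := by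
  have : MF (SS iA iV t iK E) ≤ (MF (SS iA iV t iK E)).comap (MulAut.conj x).toMonoidHom := by
    conv_lhs => rw [MF]
    rw [Subgroup.closure_le]
    rintro _ ⟨_, ⟨g, hg, rfl⟩, i, j, rfl⟩
    refine Subgroup.subset_closure ⟨_, ⟨x * g, mul_mem hx hg, rfl⟩, i, j, ?_⟩
    rw [conjF_mul]; rfl
  exact this hy

lemma G_tors [Finite V] [Finite K] (R : GRel d iA iV t iK E) (hE : mulR E E = E) (hK : KF E = ⊤)
    (hgen : Subgroup.closure (Set.range iA ∪ Set.range iV ∪ {t} ∪ Set.range iK) = ⊤)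
    (χ : G →* Multiplicative ℤ) (hA : ∀ a, χ (iA a) = 1)
    (hV : ∀ v, χ (iV v) = 1) (ht : χ t = Multiplicative.ofAdd 1) (hKχ : ∀ k, χ (iK k) = 1) (g : G)
    (h : χ g = 1) : IsOfFinOrder g := by
  set M := MF (SS iA iV t iK E) with hM
  have hT : Tors M := MF_tors (SS_compat R) (SS_idem hE) SS_fin
  have hKM : ∀ k, iK k ∈ M := by
    intro k
    have h1 : KF (mapF iK E) ≤ M := KF_le_MF ⟨1, one_mem _, (conjF_one _).symm⟩
    apply h1
    rw [KF_mapF, hK]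
    exact ⟨k, trivial, rfl⟩
  have hMχ : M ≤ χ.ker := by
    rw [hM, MF, Subgroup.closure_le]
    rintro _ ⟨_, ⟨g, hg, rfl⟩, i, j, rfl⟩
    change χ _ = 1
    simp [conjF, mapF, hKχ]
  have hEN : ∀ x ∈ EE iA iV t, x ∈ Subgroup.normalizer (M : Set G) := by
    intro x hx
    rw [Subgroup.mem_normalizer_iff]
    intro y
    refine ⟨SS_conj x hx y, fun h => ?_⟩
    have := SS_conj x⁻¹ (inv_mem hx) _ h
    convert this using 1
    group
  have hN : Subgroup.normalizer (M : Set G) = ⊤ := by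
    rw [eq_top_iff, ← hgen, Subgroup.closure_le]
    rintro x (hx | ⟨k, rfl⟩)
    · exact hEN x (Subgroup.subset_closure hx)
    · exact Subgroup.le_normalizer (hKM k)
  haveI : M.Normal := Subgroup.normalizer_eq_top_iff.1 hN
  have hsup : M ⊔ EE iA iV t = ⊤ := by
    rw [eq_top_iff, ← hgen, Subgroup.closure_le]
    rintro x (hx | ⟨k, rfl⟩)
    · exact (le_sup_right : EE iA iV t ≤ _) (Subgroup.subset_closure hx)
    · exact (le_sup_left : M ≤ _) (hKM k)
  have hg : g ∈ M ⊔ EE iA iV t := by rw [hsup]; trivial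
  obtain ⟨n, hn, x, hx, rfl⟩ := Subgroup.mem_sup_of_normal_left.1 hg
  have hχx : χ x = 1 := by
    have hn' : χ n = 1 := hMχ hn
    rw [map_mul, hn', one_mul] at h; exact h
  obtain ⟨m, hm, hxm⟩ := isOfFinOrder_iff_pow_eq_one.1 (EE_tors R.e χ hA hV ht x hx hχx)
  have hmem : (n * x) ^ m ∈ M := by
    rw [← QuotientGroup.eq_one_iff, QuotientGroup.mk_pow, QuotientGroup.mk_mul,
      (QuotientGroup.eq_one_iff n).2 hn, one_mul, ← QuotientGroup.mk_pow, hxm]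
    rfl
  exact (isOfFinOrder_pow.1 (hT _ hmem)).resolve_right hm.ne'

end GGsec

open scoped commutatorElement

section Pres
variable {A V K : Type} [Group A] [Group V] [Group K]

/-- relator set in a group -/
inductive RelS (d : Dat A V) (E : Fam K) {Γ : Type} [Group Γ] (fA : A → Γ) (fV : V → Γ) (ft : Γ)
    (fK : K → Γ) : Γ → Prop
  | ma (a b : A) : RelS d E fA fV ft fK (fA a * fA b * (fA (a * b))⁻¹)
  | mv (a b : V) : RelS d E fA fV ft fK (fV a * fV b * (fV (a * b))⁻¹)
  | mk (a b : K) : RelS d E fA fV ft fK (fK a * fK b * (fK (a * b))⁻¹)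
  | r2 (y y' : A ⊕ V) (a : A) (h : a ≠ 1) : RelS d E fA fV ft fK
      ⁅(ft * fA 1)⁻¹ * Sum.elim fA fV y * (ft * fA 1), (ft * fA a)⁻¹ * Sum.elim fA fV y' * (ft * fA a)⁆
  | r3 (v : V) : RelS d E fA fV ft fK ((fV v)⁻¹ * (((ft * fA 1)⁻¹ * fV (d.ρ v) * (ft * fA 1)) *
      ((ft * fA d.a1)⁻¹ * fA (d.w1 v) * (ft * fA d.a1)) *
      ((ft * fA d.a2)⁻¹ * fA (d.w2 v) * (ft * fA d.a2))))
  | kt (k : K) : RelS d E fA fV ft fK ⁅fK k, ft⁆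
  | kv (k : K) (v : V) : RelS d E fA fV ft fK ⁅fK k, fV v⁆
  | kp (k : K) (y : A ⊕ V) (a : A) (h : a ≠ 1) : RelS d E fA fV ft fK
      ⁅fK k, (ft * fA a)⁻¹ * Sum.elim fA fV y * (ft * fA a)⁆
  | c1 (α : A) (i j k l : Fin 5) (h1 : i ≠ j) (h2 : k ≠ l) (h3 : j ≠ k) (h4 : i ≠ l) :
      RelS d E fA fV ft fK ⁅fK (E i j), fA α * fK (E k l) * (fA α)⁻¹⁆
  | c2 (α : A) (i j k j' : Fin 5) (h1 : i ≠ j) (h2 : j ≠ k) (h3 : i ≠ k) (h4 : j' ≠ i)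
      (h5 : j' ≠ k) : RelS d E fA fV ft fK
      (⁅fK (E i j), fA α * fK (E j k) * (fA α)⁻¹⁆ * ⁅fK (E i j'), fA α * fK (E j' k) * (fA α)⁻¹⁆⁻¹)
  | c3 (α : A) (i j k : Fin 5) (h1 : i ≠ j) (h2 : j ≠ k) (h3 : i ≠ k) : RelS d E fA fV ft fK
      (⁅fK (E i j), fA α * fK (E j k) * (fA α)⁻¹⁆ * ⁅fA α * fK (E i j) * (fA α)⁻¹, fK (E j k)⁆⁻¹)

variable {d : Dat A V} {E : Fam K} {Γ : Type} [Group Γ]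

lemma RelS_finite [Finite A] [Finite V] [Finite K] (fA : A → Γ) (fV : V → Γ) (ft : Γ)
    (fK : K → Γ) : (setOf (RelS d E fA fV ft fK)).Finite := by
  have h : ∀ (ι : Type) [Finite ι] (f : ι → Γ), (Set.range f).Finite := fun ι _ f =>
    Set.finite_range f
  refine Set.Finite.subset (((((((((((
    (h (A × A) fun p => (fA p.1 * fA p.2 * (fA (p.1 * p.2))⁻¹)).union
    (h (V × V) fun p => (fV p.1 * fV p.2 * (fV (p.1 * p.2))⁻¹))).union
    (h (K × K) fun p => (fK p.1 * fK p.2 * (fK (p.1 * p.2))⁻¹))).union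
    (h ((A ⊕ V) × (A ⊕ V) × A) fun p => ⁅(ft * fA 1)⁻¹ * Sum.elim fA fV p.1 * (ft * fA 1),
      (ft * fA p.2.2)⁻¹ * Sum.elim fA fV p.2.1 * (ft * fA p.2.2)⁆)).union
    (h V fun v => ((fV v)⁻¹ * (((ft * fA 1)⁻¹ * fV (d.ρ v) * (ft * fA 1)) *
      ((ft * fA d.a1)⁻¹ * fA (d.w1 v) * (ft * fA d.a1)) *
      ((ft * fA d.a2)⁻¹ * fA (d.w2 v) * (ft * fA d.a2)))))).union
    (h K fun k => ⁅fK k, ft⁆)).union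
    (h (K × V) fun p => ⁅fK p.1, fV p.2⁆)).union
    (h (K × (A ⊕ V) × A) fun p =>
      ⁅fK p.1, (ft * fA p.2.2)⁻¹ * Sum.elim fA fV p.2.1 * (ft * fA p.2.2)⁆)).union
    (h (A × Fin 5 × Fin 5 × Fin 5 × Fin 5) fun p => 
      ⁅fK (E p.2.1 p.2.2.1), fA p.1 * fK (E p.2.2.2.1 p.2.2.2.2) * (fA p.1)⁻¹⁆)).union
    (h (A × Fin 5 × Fin 5 × Fin 5 × Fin 5) fun p => 
      (⁅fK (E p.2.1 p.2.2.1), fA p.1 * fK (E p.2.2.1 p.2.2.2.1) * (fA p.1)⁻¹⁆ *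
      ⁅fK (E p.2.1 p.2.2.2.2), fA p.1 * fK (E p.2.2.2.2 p.2.2.2.1) * (fA p.1)⁻¹⁆⁻¹))).union
    (h (A × Fin 5 × Fin 5 × Fin 5) fun p => 
      (⁅fK (E p.2.1 p.2.2.1), fA p.1 * fK (E p.2.2.1 p.2.2.2) * (fA p.1)⁻¹⁆ *
      ⁅fA p.1 * fK (E p.2.1 p.2.2.1) * (fA p.1)⁻¹, fK (E p.2.2.1 p.2.2.2)⁆⁻¹)))) ?_
  rintro x hx
  simp only [Set.mem_union]
  cases hx with
  | ma a b => iterate 10 left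
              exact ⟨(a, b), rfl⟩
  | mv a b => iterate 9 left
              right; exact ⟨(a, b), rfl⟩
  | mk a b => iterate 8 left
              right; exact ⟨(a, b), rfl⟩
  | r2 y y' a => iterate 7 left
                 right; exact ⟨(y, y', a), rfl⟩
  | r3 v => iterate 6 left
            right; exact ⟨v, rfl⟩
  | kt k => iterate 5 left
            right; exact ⟨k, rfl⟩
  | kv k v => iterate 4 left
              right; exact ⟨(k, v), rfl⟩
  | kp k y a => iterate 3 left
                right; exact ⟨(k, y, a), rfl⟩
  | c1 α i j k l => iterate 2 left
                    right; exact ⟨(α, i, j, k, l), rfl⟩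
  | c2 α i j k j' => left; right; exact ⟨(α, i, j, k, j'), rfl⟩
  | c3 α i j k => right; exact ⟨(α, i, j, k), rfl⟩

lemma RelS_map {Δ : Type} [Group Δ] (φ : Γ →* Δ) (fA : A → Γ) (fV : V → Γ) (ft : Γ)
    (fK : K → Γ) (x : Δ) (hx : RelS d E (φ ∘ fA) (φ ∘ fV) (φ ft) (φ ∘ fK) x) :
    ∃ y, RelS d E fA fV ft fK y ∧ φ y = x := by
  have hs : ∀ y, Sum.elim (φ ∘ fA) (φ ∘ fV) y = φ (Sum.elim fA fV y) := by
    rintro (a | v) <;> rfl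
  cases hx with
  | ma a b => exact ⟨_, .ma a b, by simp⟩
  | mv a b => exact ⟨_, .mv a b, by simp⟩
  | mk a b => exact ⟨_, .mk a b, by simp⟩
  | r2 y y' a h => exact ⟨_, .r2 y y' a h, by simp [map_commutatorElement, hs]⟩
  | r3 v => exact ⟨_, .r3 v, by simp⟩
  | kt k => exact ⟨_, .kt k, by simp [map_commutatorElement]⟩
  | kv k v => exact ⟨_, .kv k v, by simp [map_commutatorElement]⟩
  | kp k y a h => exact ⟨_, .kp k y a h, by simp [map_commutatorElement, hs]⟩
  | c1 α i j k l h1 h2 h3 h4 => exact ⟨_, .c1 α i j k l h1 h2 h3 h4, by simp [map_commutatorElement]⟩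
  | c2 α i j k l h1 h2 h3 h4 h5 =>
    exact ⟨_, .c2 α i j k l h1 h2 h3 h4 h5, by simp [map_commutatorElement]⟩
  | c3 α i j k h1 h2 h3 => exact ⟨_, .c3 α i j k h1 h2 h3, by simp [map_commutatorElement]⟩

lemma RelS_map' {Δ : Type} [Group Δ] (φ : Γ →* Δ) (fA : A → Γ) (fV : V → Γ) (ft : Γ)
    (fK : K → Γ) (y : Γ) (hx : RelS d E fA fV ft fK y) :
    RelS d E (φ ∘ fA) (φ ∘ fV) (φ ft) (φ ∘ fK) (φ y) := by
  have hs : ∀ y, φ (Sum.elim fA fV y) = Sum.elim (φ ∘ fA) (φ ∘ fV) y := by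
    rintro (a | v) <;> rfl
  cases hx with
  | ma a b => simpa using RelS.ma (d := d) (E := E) (fA := φ ∘ fA) (fV := φ ∘ fV) (ft := φ ft) (fK := φ ∘ fK) a b
  | mv a b => simpa using RelS.mv (d := d) (E := E) (fA := φ ∘ fA) (fV := φ ∘ fV) (ft := φ ft) (fK := φ ∘ fK) a b
  | mk a b => simpa using RelS.mk (d := d) (E := E) (fA := φ ∘ fA) (fV := φ ∘ fV) (ft := φ ft) (fK := φ ∘ fK) a b
  | r2 y y' a h =>
    simp only [map_commutatorElement, map_mul, map_inv, hs]
    exact RelS.r2 (fA := φ ∘ fA) (fV := φ ∘ fV) (ft := φ ft) (fK := φ ∘ fK) y y' a h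
  | r3 v =>
    simp only [map_mul, map_inv]
    exact RelS.r3 (fA := φ ∘ fA) (fV := φ ∘ fV) (ft := φ ft) (fK := φ ∘ fK) v
  | kt k =>
    simp only [map_commutatorElement]
    exact RelS.kt (fA := φ ∘ fA) (fV := φ ∘ fV) (ft := φ ft) (fK := φ ∘ fK) k
  | kv k v =>
    simp only [map_commutatorElement]
    exact RelS.kv (fA := φ ∘ fA) (fV := φ ∘ fV) (ft := φ ft) (fK := φ ∘ fK) k v
  | kp k y a h =>
    simp only [map_commutatorElement, map_mul, map_inv, hs]
    exact RelS.kp (fA := φ ∘ fA) (fV := φ ∘ fV) (ft := φ ft) (fK := φ ∘ fK) k y a h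
  | c1 α i j k l h1 h2 h3 h4 =>
    simp only [map_commutatorElement, map_mul, map_inv]
    exact RelS.c1 (fA := φ ∘ fA) (fV := φ ∘ fV) (ft := φ ft) (fK := φ ∘ fK) α i j k l h1 h2 h3 h4
  | c2 α i j k l h1 h2 h3 h4 h5 =>
    simp only [map_commutatorElement, map_mul, map_inv]
    exact RelS.c2 (fA := φ ∘ fA) (fV := φ ∘ fV) (ft := φ ft) (fK := φ ∘ fK) α i j k l h1 h2 h3 h4 h5
  | c3 α i j k h1 h2 h3 =>
    simp only [map_commutatorElement, map_mul, map_inv]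
    exact RelS.c3 (fA := φ ∘ fA) (fV := φ ∘ fV) (ft := φ ft) (fK := φ ∘ fK) α i j k h1 h2 h3

lemma RelS_of_GRel {iA : A →* Γ} {iV : V →* Γ} {t : Γ} {iK : K →* Γ} (R : GRel d iA iV t iK E)
    (x : Γ) (hx : RelS d E iA iV t iK x) : x = 1 := by
  have hs : ∀ y, Sum.elim iA iV y ∈ Set.range iA ∪ Set.range iV := by
    rintro (a | v)
    · exact Or.inl ⟨a, rfl⟩
    · exact Or.inr ⟨v, rfl⟩
  cases hx with
  | ma a b => simp
  | mv a b => simp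
  | mk a b => simp
  | r2 y y' a h => exact commutatorElement_eq_one_iff_commute.2 (R.e.r2 _ (hs y) _ (hs y') a h)
  | r3 v => rw [inv_mul_eq_one]; exact R.e.r3 v
  | kt k => exact commutatorElement_eq_one_iff_commute.2 (R.kc k _ (Or.inl (Or.inl rfl)))
  | kv k v => exact commutatorElement_eq_one_iff_commute.2 (R.kc k _ (Or.inl (Or.inr ⟨v, rfl⟩)))
  | kp k y a h =>
    exact commutatorElement_eq_one_iff_commute.2 (R.kc k _ (Or.inr ⟨_, hs y, a, h, rfl⟩))
  | c1 α i j k l h1 h2 h3 h4 =>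
    exact commutatorElement_eq_one_iff_commute.2 ((R.cmp α).c1 i j k l h1 h2 h3 h4)
  | c2 α i j k l h1 h2 h3 h4 h5 =>
    rw [mul_inv_eq_one]; exact (R.cmp α).c2 i j k l h1 h2 h3 h4 h5
  | c3 α i j k h1 h2 h3 =>
    rw [mul_inv_eq_one]; exact (R.cmp α).c3 i j k h1 h2 h3

lemma GRel_of_RelS {iA : A →* Γ} {iV : V →* Γ} {t : Γ} {iK : K →* Γ}
    (h : ∀ x, RelS d E iA iV t iK x → x = 1) : GRel d iA iV t iK E where
  e := 
    { r2 := by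
        have key : ∀ y y' : A ⊕ V, ∀ a : A, a ≠ 1 →
            Commute (cp iA t (Sum.elim iA iV y) 1) (cp iA t (Sum.elim iA iV y') a) := 
          fun y y' a ha => commutatorElement_eq_one_iff_commute.1 (h _ (.r2 y y' a ha))
        rintro _ (⟨a, rfl⟩ | ⟨v, rfl⟩) _ (⟨a', rfl⟩ | ⟨v', rfl⟩) b hb
        · exact key (.inl a) (.inl a') b hb
        · exact key (.inl a) (.inr v') b hb
        · exact key (.inr v) (.inl a') b hb
        · exact key (.inr v) (.inr v') b hb
      r3 := fun v => inv_mul_eq_one.1 (h _ (.r3 v)) }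
  kc := by
    have key : ∀ k (y : A ⊕ V), ∀ a : A, a ≠ 1 → Commute (iK k) (cp iA t (Sum.elim iA iV y) a) :=
      fun k y a ha => commutatorElement_eq_one_iff_commute.1 (h _ (.kp k y a ha))
    rintro k _ ((rfl | ⟨v, rfl⟩) | ⟨_, (⟨y, rfl⟩ | ⟨y, rfl⟩), a, ha, rfl⟩)
    · exact commutatorElement_eq_one_iff_commute.1 (h _ (.kt k))
    · exact commutatorElement_eq_one_iff_commute.1 (h _ (.kv k v))
    · exact key k (.inl y) a ha
    · exact key k (.inr y) a ha
  cmp := fun α =>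
    { c1 := fun i j k l h1 h2 h3 h4 =>
        commutatorElement_eq_one_iff_commute.1 (h _ (.c1 α i j k l h1 h2 h3 h4))
      c2 := fun i j k l h1 h2 h3 h4 h5 => mul_inv_eq_one.1 (h _ (.c2 α i j k l h1 h2 h3 h4 h5))
      c3 := fun i j k h1 h2 h3 => mul_inv_eq_one.1 (h _ (.c3 α i j k h1 h2 h3)) }

/-- generating set -/
abbrev YY (A V K : Type) := (A ⊕ V) ⊕ (Unit ⊕ K)

/-- relators -/
def RR (d : Dat A V) (E : Fam K) : Set (FreeGroup (YY A V K)) :=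
  setOf (RelS d E (fun a => FreeGroup.of (Sum.inl (Sum.inl a)))
    (fun v => FreeGroup.of (Sum.inl (Sum.inr v))) (FreeGroup.of (Sum.inr (Sum.inl ())))
    (fun k => FreeGroup.of (Sum.inr (Sum.inr k))))

/-- the group -/
abbrev GG (d : Dat A V) (E : Fam K) := PresentedGroup (RR d E)

lemma GG_rel (d : Dat A V) (E : Fam K) (x : GG d E) (h : RelS d E
    (fun a => (PresentedGroup.of (Sum.inl (Sum.inl a)) : GG d E))
    (fun v => PresentedGroup.of (Sum.inl (Sum.inr v))) (PresentedGroup.of (Sum.inr (Sum.inl ())))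
    (fun k => PresentedGroup.of (Sum.inr (Sum.inr k))) x) : x = 1 := by
  obtain ⟨y, hy, rfl⟩ := RelS_map (PresentedGroup.mk (RR d E)) _ _ _ _ x h
  exact PresentedGroup.one_of_mem hy

/-- A -/
def gA (d : Dat A V) (E : Fam K) : A →* GG d E :=
  MonoidHom.mk' (fun a => PresentedGroup.of (Sum.inl (Sum.inl a)))
    fun a b => (mul_inv_eq_one.1 (GG_rel d E _ (.ma a b))).symm
/-- V -/
def gV (d : Dat A V) (E : Fam K) : V →* GG d E :=
  MonoidHom.mk' (fun a => PresentedGroup.of (Sum.inl (Sum.inr a)))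
    fun a b => (mul_inv_eq_one.1 (GG_rel d E _ (.mv a b))).symm
/-- K -/
def gK (d : Dat A V) (E : Fam K) : K →* GG d E :=
  MonoidHom.mk' (fun a => PresentedGroup.of (Sum.inr (Sum.inr a)))
    fun a b => (mul_inv_eq_one.1 (GG_rel d E _ (.mk a b))).symm
/-- t -/
def gt (d : Dat A V) (E : Fam K) : GG d E := PresentedGroup.of (Sum.inr (Sum.inl ()))

lemma GG_GRel (d : Dat A V) (E : Fam K) : GRel d (gA d E) (gV d E) (gt d E) (gK d E) E :=
  GRel_of_RelS fun x hx => GG_rel d E x hx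

lemma GG_gen (d : Dat A V) (E : Fam K) : Subgroup.closure (Set.range (gA d E) ∪ Set.range (gV d E) ∪
    {gt d E} ∪ Set.range (gK d E)) = ⊤ := by
  rw [eq_top_iff, ← PresentedGroup.closure_range_of, Subgroup.closure_le]
  rintro _ ⟨((a | v) | (⟨⟩ | k)), rfl⟩
  · exact Subgroup.subset_closure (Or.inl (Or.inl (Or.inl ⟨a, rfl⟩)))
  · exact Subgroup.subset_closure (Or.inl (Or.inl (Or.inr ⟨v, rfl⟩)))
  · exact Subgroup.subset_closure (Or.inl (Or.inr rfl))
  · exact Subgroup.subset_closure (Or.inr ⟨k, rfl⟩)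

lemma GG_lift {iA : A →* Γ} {iV : V →* Γ} {t : Γ} {iK : K →* Γ} (R : GRel d iA iV t iK E) :
    ∃ Φ : GG d E →* Γ, (∀ a, Φ (gA d E a) = iA a) ∧ (∀ a, Φ (gV d E a) = iV a) ∧
      Φ (gt d E) = t ∧ (∀ a, Φ (gK d E a) = iK a) := by
  let f : YY A V K → Γ := Sum.elim (Sum.elim iA iV) (Sum.elim (fun _ => t) iK)
  have hf : ∀ r ∈ RR d E, FreeGroup.lift f r = 1 := by
    intro r hr
    have := RelS_map' (FreeGroup.lift f) _ _ _ _ r hr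
    apply RelS_of_GRel R
    convert this using 1
    · funext a; simp [f]
    · funext a; simp [f]
    · simp [f]
    · funext a; simp [f]
  refine ⟨PresentedGroup.toGroup hf, fun a => ?_, fun a => ?_, ?_, fun a => ?_⟩ <;>
  exact PresentedGroup.toGroup.of hf

lemma GG_chi (d : Dat A V) (E : Fam K) : ∃ χ : GG d E →* Multiplicative ℤ,
    (∀ a, χ (gA d E a) = 1) ∧ (∀ a, χ (gV d E a) = 1) ∧
      χ (gt d E) = Multiplicative.ofAdd 1 ∧ (∀ a, χ (gK d E a) = 1) := by
  have R : GRel d (1 : A →* Multiplicative ℤ) 1 (Multiplicative.ofAdd 1) (1 : K →* _) E := by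
    apply GRel_of_RelS
    intro x hx
    have hs : ∀ y : A ⊕ V, Sum.elim (1 : A →* Multiplicative ℤ) (1 : V →* Multiplicative ℤ) y = 1 := by
      rintro (a | v) <;> rfl
    have hc : ∀ x y : Multiplicative ℤ, ⁅x, y⁆ = 1 := fun x y =>
      commutatorElement_eq_one_iff_commute.2 (Commute.all _ _)
    cases hx <;> simp [hc]
  obtain ⟨Φ, h1, h2, h3, h4⟩ := GG_lift R
  exact ⟨Φ, h1, h2, h3, h4⟩

end Pres

open scoped commutatorElement

lemma ifc {P Q : Prop} {α : Type} {a b a' b' : α} {_ : Decidable P} {_ : Decidable Q} (h : P ↔ Q)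
    (h1 : a = a') (h2 : b = b') : (if P then a else b) = if Q then a' else b' := by
  subst h1 h2; by_cases hp : P
  · rw [if_pos hp, if_pos (h.1 hp)]
  · rw [if_neg hp, if_neg (fun hq => hp (h.2 hq))]

section Model
variable {A V : Type} [Group A] [Group V] [DecidableEq A]

/-- agreement below s -/
def Agr (ξ η : ℤ → A) (s : ℤ) : Prop := ∀ i < s, ξ i = η i

/-- triangular action data -/
structure TriA (H : Type) [Group H] (c : H → (ℤ → A) → ℤ → A) : Prop where
  one : ∀ ξ i, c 1 ξ i = 1
  mul : ∀ g h ξ i, c (g * h) ξ i = c g ξ i * c h ξ i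
  inv : ∀ g h ξ i, c g (fun j => c h ξ j * ξ j) i = c g ξ i
  low : ∀ g ξ η i, Agr ξ η i → c g ξ i = c g η i

/-- action -/
def TriA.act {H : Type} [Group H] {c : H → (ℤ → A) → ℤ → A} (T : TriA H c) :
    H →* Equiv.Perm (ℤ → A) :=
  MonoidHom.toHomPerm
  { toFun := fun g ξ j => c g ξ j * ξ j
    map_one' := by funext ξ j; simp [T.one]; rfl
    map_mul' := by
      intro g h
      funext ξ j
      change c (g * h) ξ j * ξ j = c g (fun j => c h ξ j * ξ j) j * (c h ξ j * ξ j)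
      rw [T.inv, T.mul, mul_assoc] }

lemma TriA.act_apply {H : Type} [Group H] {c : H → (ℤ → A) → ℤ → A} (T : TriA H c) (g : H)
    (ξ : ℤ → A) (j : ℤ) : T.act g ξ j = c g ξ j * ξ j := rfl

lemma TriA.agr {H : Type} [Group H] {c : H → (ℤ → A) → ℤ → A} (T : TriA H c) (g : H)
    (ξ η : ℤ → A) (s : ℤ) : Agr (T.act g ξ) (T.act g η) s ↔ Agr ξ η s := by
  have h : ∀ g ξ η, Agr ξ η s → Agr (T.act g ξ) (T.act g η) s := by
    intro g ξ η h i hi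
    rw [T.act_apply, T.act_apply, h i hi, T.low g ξ η i (fun j hj => h j (hj.trans hi))]
  refine ⟨fun h' => ?_, h g ξ η⟩
  have := h g⁻¹ _ _ h'
  rw [map_inv] at this
  simpa using this

open Classical in
/-- cocycle for A -/
noncomputable def cA (a : A) (ξ : ℤ → A) (i : ℤ) : A :=
  if i = 0 ∧ ∀ j < 0, ξ j = 1 then a else 1

lemma triA : TriA A (cA (A := A)) where
  one ξ i := by simp [cA]
  mul g h ξ i := by
    simp only [cA]; split_ifs <;> simp
  inv g h ξ i := by
    have : (∀ j : ℤ, j < 0 → cA h ξ j * ξ j = 1) ↔ ∀ j : ℤ, j < 0 → ξ j = 1 := by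
      refine forall_congr' fun j => forall_congr' fun hj => ?_
      rw [cA, if_neg (by omega), one_mul]
    exact ifc (and_congr_right fun _ => this) rfl rfl
  low g ξ η i h := by
    have : (i = 0 ∧ ∀ j < 0, ξ j = 1) ↔ (i = 0 ∧ ∀ j < 0, η j = 1) := by
      refine and_congr_right fun hi => ?_
      subst hi
      refine forall_congr' fun j => forall_congr' fun hj => ?_
      rw [h j hj]
    exact ifc this rfl rfl

/-- Ω -/
def Om (d : Dat A V) (b : A) (v : V) : A :=
  if b = d.a1⁻¹ then d.w1 v else if b = d.a2⁻¹ then d.w2 v else 1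

lemma Om_one (d : Dat A V) (v : V) : Om d 1 v = 1 := by
  rw [Om, if_neg, if_neg]
  · exact fun h => d.a2_ne (by simpa using h.symm)
  · exact fun h => d.a1_ne (by simpa using h.symm)

open Classical in
/-- cocycle for V -/
noncomputable def cV (d : Dat A V) (v : V) (ξ : ℤ → A) (i : ℤ) : A :=
  if 1 ≤ i ∧ ∀ j < i - 1, ξ j = 1 then Om d (ξ (i - 1)) ((d.ρ ^ (i - 1) : MulAut V) v) else 1

lemma cV_of_one (d : Dat A V) (v : V) (ξ : ℤ → A) (i : ℤ) (h : ξ (i - 1) = 1) : cV d v ξ i = 1 := by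
  rw [cV, h, Om_one]; simp

lemma triV (d : Dat A V) : TriA V (cV d) where
  one ξ i := by simp [cV, Om]
  mul g h ξ i := by
    simp only [cV, Om]; split_ifs <;> simp
  inv g h ξ i := by
    have e : ∀ n, (∀ j < n, ξ j = 1) → cV d h ξ n = 1 := fun n hn =>
      cV_of_one d h ξ n (hn _ (by omega))
    have key : ∀ n : ℤ, (∀ j : ℤ, j < n → cV d h ξ j * ξ j = 1) ↔ ∀ j : ℤ, j < n → ξ j = 1 := by
      intro n
      constructor
      · intro H j hj
        by_contra hne
        have h1 := H j hj
        have h2 : cV d h ξ j ≠ 1 := fun h => hne (by rwa [h, one_mul] at h1)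
        have h3 : 1 ≤ j ∧ ∀ l < j - 1, ξ l = 1 := by
          by_contra h3
          exact h2 (by rw [cV, if_neg h3])
        have h4 : ξ (j - 1) ≠ 1 := fun h4 => h2 (cV_of_one d h ξ j h4)
        have h5 := H (j - 1) (by omega)
        rw [e _ h3.2, one_mul] at h5
        exact h4 h5
      · intro H j hj
        rw [H j hj, e j (fun l hl => H l (hl.trans hj)), one_mul]
    by_cases hc : 1 ≤ i ∧ ∀ j < i - 1, ξ j = 1
    · have h1 : cV d g (fun j => cV d h ξ j * ξ j) i = Om d (cV d h ξ (i - 1) * ξ (i - 1))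
          ((d.ρ ^ (i - 1) : MulAut V) g) := if_pos ⟨hc.1, (key _).2 hc.2⟩
      rw [h1, e _ hc.2, one_mul, cV, if_pos hc]
    · have h1 : cV d g (fun j => cV d h ξ j * ξ j) i = 1 :=
        if_neg fun h => hc ⟨h.1, (key _).1 h.2⟩
      rw [h1, cV, if_neg hc]
  low g ξ η i h := by
    have : (1 ≤ i ∧ ∀ j < i - 1, ξ j = 1) ↔ (1 ≤ i ∧ ∀ j < i - 1, η j = 1) := by
      refine and_congr_right fun hi => ?_
      refine forall_congr' fun j => forall_congr' fun hj => ?_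
      rw [h j (by omega)]
    rw [cV, cV, h (i - 1) (by omega)]
    exact ifc this rfl rfl

/-- shift -/
def tP : Equiv.Perm (ℤ → A) where
  toFun ξ i := ξ (i + 1)
  invFun ξ i := ξ (i - 1)
  left_inv ξ := by funext i; simp
  right_inv ξ := by funext i; simp

lemma tP_apply (ξ : ℤ → A) (i : ℤ) : tP ξ i = ξ (i + 1) := rfl
lemma tP_inv (ξ : ℤ → A) (i : ℤ) : (tP⁻¹ : Equiv.Perm (ℤ → A)) ξ i = ξ (i - 1) := rfl

lemma tP_agr (ξ η : ℤ → A) (s : ℤ) : Agr (tP ξ) (tP η) s ↔ Agr ξ η (s + 1) := by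
  constructor
  · intro h i hi
    have := h (i - 1) (by omega)
    simpa [tP_apply] using this
  · intro h i hi
    exact h (i + 1) (by omega)

/-- B -/
def BB (ξ : ℤ → A) : Prop := ∀ j < 0, ξ j = 1

lemma A_fix (a : A) (ξ : ℤ → A) (h : ¬ BB ξ) : triA.act a ξ = ξ := by
  funext i
  rw [triA.act_apply, cA, if_neg (fun h' => h h'.2), one_mul]

lemma V_fix (d : Dat A V) (v : V) (ξ : ℤ → A) (h : ¬ BB ξ) : (triV d).act v ξ = ξ := by
  funext i
  rw [(triV d).act_apply, cV, if_neg (fun h' => h (fun j hj => h'.2 j (by omega))), one_mul]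

lemma A_val (a : A) (ξ : ℤ → A) (h : BB ξ) (i : ℤ) :
    triA.act a ξ i = if i = 0 then a * ξ 0 else ξ i := by
  rw [triA.act_apply, cA]
  by_cases hi : i = 0
  · subst hi; rw [if_pos ⟨rfl, h⟩, if_pos rfl]
  · rw [if_neg (fun h => hi h.1), if_neg hi, one_mul]

lemma ta_BB (a : A) (ξ : ℤ → A) (h : BB ((tP * triA.act a : Equiv.Perm (ℤ → A)) ξ)) :
    BB ξ ∧ ξ 0 = a⁻¹ := by
  have h' : ∀ j : ℤ, j ≤ 0 → triA.act a ξ j = 1 := by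
    intro j hj
    have := h (j - 1) (by omega)
    rw [Equiv.Perm.mul_apply, tP_apply] at this
    simpa using this
  have hB : BB ξ := by
    by_contra hB
    rw [A_fix a ξ hB] at h'
    exact hB fun j hj => h' j hj.le
  refine ⟨hB, ?_⟩
  have := h' 0 le_rfl
  rw [A_val a ξ hB, if_pos rfl] at this
  exact (inv_eq_of_mul_eq_one_right this).symm

/-- supported in B -/
def SuppB (y : Equiv.Perm (ℤ → A)) : Prop := ∀ ξ, ¬ BB ξ → y ξ = ξ

lemma cp_fix (y : Equiv.Perm (ℤ → A)) (hy : SuppB y) (a : A) (ξ : ℤ → A)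
    (h : ¬ (BB ξ ∧ ξ 0 = a⁻¹)) : cp triA.act tP y a ξ = ξ := by
  rw [cp, Equiv.Perm.mul_apply, Equiv.Perm.mul_apply, hy _ (fun h' => h (ta_BB a ξ h')),
    Equiv.Perm.inv_eq_iff_eq]

lemma suppB_gen (d : Dat A V) (y : Equiv.Perm (ℤ → A))
    (hy : y ∈ Set.range (triA (A := A)).act ∪ Set.range (triV d).act) : SuppB y := by
  rcases hy with ⟨a, rfl⟩ | ⟨v, rfl⟩
  · exact A_fix a
  · exact V_fix d v

lemma V_eq_of (d : Dat A V) (v : V) (ξ : ℤ → A) (hB : BB ξ) (h0 : ξ 0 ≠ 1) (i : ℤ) :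
    (triV d).act v ξ i = if i = 1 then Om d (ξ 0) v * ξ 1 else ξ i := by
  rw [(triV d).act_apply, cV]
  by_cases hi : i = 1
  · subst hi
    rw [if_pos ⟨le_rfl, by rw [sub_self]; exact hB⟩, if_pos rfl]
    simp
  · rw [if_neg, if_neg hi, one_mul]
    rintro ⟨h1, h2⟩
    exact h0 (h2 0 (by omega))

lemma cpA_eq_of (a b : A) (ξ : ℤ → A) (hB : BB ξ) (h0 : ξ 0 = a⁻¹) (i : ℤ) :
    cp triA.act tP (triA.act b) a ξ i = if i = 1 then b * ξ 1 else ξ i := by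
  set η : ℤ → A := fun i => if i = 1 then b * ξ 1 else ξ i with hη
  suffices h : cp triA.act tP (triA.act b) a ξ = η by rw [h]
  have hηB : BB η := fun j hj => by simp only [hη]; rw [if_neg (by omega)]; exact hB j hj
  rw [cp, Equiv.Perm.mul_apply, Equiv.Perm.mul_apply, Equiv.Perm.inv_eq_iff_eq]
  funext j
  have hB2 : BB ((tP * triA.act a : Equiv.Perm (ℤ → A)) ξ) := by
    intro j hj
    rw [Equiv.Perm.mul_apply, tP_apply, A_val a ξ hB]
    split_ifs with h
    · rw [h0]; simp
    · exact hB _ (by omega)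
  rw [A_val b _ hB2]
  simp only [Equiv.Perm.mul_apply, tP_apply, A_val a ξ hB, A_val a η hηB]
  by_cases hj : j = 0
  · subst hj
    simp [hη]
  · rw [if_neg hj]
    have : j + 1 ≠ 1 := by omega
    by_cases hj2 : j + 1 = 0
    · simp [hj2, hη]
    · simp [hj2, hη, hj]

lemma model_ERel (d : Dat A V) : ERel d (triA (A := A)).act (triV d).act tP where
  r2 y hy y' hy' a ha := by
    apply Equiv.Perm.Disjoint.commute
    intro ξ
    by_cases h : BB ξ ∧ ξ 0 = 1⁻¹
    · right
      apply cp_fix _ (suppB_gen d _ hy')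
      rintro ⟨-, h2⟩
      rw [h.2] at h2
      exact ha (by simpa using h2.symm)
    · left
      exact cp_fix _ (suppB_gen d _ hy) _ _ h
  r3 v := by
    apply Equiv.ext
    intro ξ
    have sA : ∀ a : A, SuppB (triA.act a) := A_fix
    have sV : ∀ v : V, SuppB ((triV d).act v) := V_fix d
    rw [Equiv.Perm.mul_apply, Equiv.Perm.mul_apply]
    have n1 : d.a1⁻¹ ≠ 1 := fun h => d.a1_ne (by simpa using h)
    have n2 : d.a2⁻¹ ≠ 1 := fun h => d.a2_ne (by simpa using h)
    have n12 : d.a1⁻¹ ≠ d.a2⁻¹ := fun h => d.a12_ne (by simpa using h)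
    by_cases hB : BB ξ
    swap
    · rw [V_fix d v ξ hB, cp_fix _ (sA _) _ _ (fun h => hB h.1), cp_fix _ (sA _) _ _ (fun h => hB h.1),
        cp_fix _ (sV _) _ _ (fun h => hB h.1)]
    by_cases h0 : ξ 0 = 1
    · rw [cp_fix _ (sA _) d.a2 ξ (fun h => n2 (by rw [← h.2, h0])),
        cp_fix _ (sA _) d.a1 ξ (fun h => n1 (by rw [← h.2, h0]))]
      rw [cp, map_one, mul_one, Equiv.Perm.mul_apply, Equiv.Perm.mul_apply]
      funext i
      rw [tP_inv, (triV d).act_apply, (triV d).act_apply, tP_apply, sub_add_cancel]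
      congr 1
      by_cases hi : i = 1
      · subst hi
        rw [cV_of_one d _ _ _ (by simpa using h0), cV, if_neg (by omega)]
      rw [cV, cV]
      have hc : (1 ≤ i ∧ ∀ j < i - 1, ξ j = 1) ↔ (1 ≤ i - 1 ∧ ∀ j < i - 1 - 1, tP ξ j = 1) := by
        constructor
        · rintro ⟨h1, h2⟩
          exact ⟨by omega, fun j hj => h2 (j + 1) (by omega)⟩
        · rintro ⟨h1, h2⟩
          refine ⟨by omega, fun j hj => ?_⟩
          have := h2 (j - 1) (by omega)
          simpa [tP_apply] using this
      have e2 : (d.ρ ^ (i - 1) : MulAut V) v = (d.ρ ^ (i - 1 - 1) : MulAut V) (d.ρ v) := by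
        conv_lhs => rw [← sub_add_cancel (i - 1) 1, zpow_add_one]
        rfl
      rw [tP_apply, sub_add_cancel, e2]
      exact ifc hc rfl rfl
    · by_cases h1 : ξ 0 = d.a1⁻¹
      · rw [cp_fix _ (sA _) d.a2 ξ (fun h => n12 (by rw [← h.2, h1])), cp_fix _ (sV _)]
        · funext i
          rw [cpA_eq_of _ _ _ hB h1, V_eq_of d v ξ hB h0, Om, if_pos h1]
        · rintro ⟨-, h⟩
          rw [cpA_eq_of _ _ _ hB h1, if_neg (by omega), h1] at h
          exact n1 (by simpa using h)
      · by_cases h2 : ξ 0 = d.a2⁻¹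
        · rw [cp_fix _ (sA _) d.a1, cp_fix _ (sV _)]
          · funext i
            rw [cpA_eq_of _ _ _ hB h2, V_eq_of d v ξ hB h0, Om, if_neg h1, if_pos h2]
          · rintro ⟨-, h⟩
            rw [cpA_eq_of _ _ _ hB h2, if_neg (by omega), h2] at h
            exact n2 (by simpa using h)
          · rintro ⟨-, h⟩
            rw [cpA_eq_of _ _ _ hB h2, if_neg (by omega), h2] at h
            exact n12 h.symm
        · rw [cp_fix _ (sA _) d.a2 ξ (fun h => h2 h.2), cp_fix _ (sA _) d.a1 ξ (fun h => h1 h.2),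
            cp_fix _ (sV _) 1 ξ (fun h => h0 (by simpa using h.2))]
          funext i
          rw [V_eq_of d v ξ hB h0, Om, if_neg h1, if_neg h2]
          split_ifs with hi
          · rw [hi, one_mul]
          · rfl

/-- base point -/
def x0 : ℤ → A := fun _ => 1

lemma PG_x0 (d : Dat A V) (p : Equiv.Perm (ℤ → A))
    (hp : p ∈ PG (triA (A := A)).act (triV d).act tP) : p x0 = x0 := by
  rcases hp with (rfl | ⟨v, rfl⟩) | ⟨y, hy, a, ha, rfl⟩
  · rfl
  · funext i
    rw [(triV d).act_apply, cV_of_one _ _ _ _ rfl, one_mul]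
  · apply cp_fix _ (suppB_gen d _ hy)
    rintro ⟨-, h⟩
    exact ha (by simpa [x0] using h.symm)

end Model

open scoped commutatorElement

section Gate
variable {X K : Type} [Group K]

/-- diagonal action -/
def diag (K : Type) : Equiv.Perm X →* Equiv.Perm ((Fin 3 → X) × K) :=
  MonoidHom.toHomPerm
  { toFun := fun σ p => (fun i => σ (p.1 i), p.2)
    map_one' := rfl
    map_mul' := fun _ _ => rfl }

lemma diag_apply (σ : Equiv.Perm X) (p : (Fin 3 → X) × K) :
    diag K σ p = (fun i => σ (p.1 i), p.2) := rfl

open Classical in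
/-- gated action -/
noncomputable def gate (Q : (Fin 3 → X) → Prop) : K →* Equiv.Perm ((Fin 3 → X) × K) :=
  MonoidHom.toHomPerm
  { toFun := fun k p => (p.1, if Q p.1 then k * p.2 else p.2)
    map_one' := by funext p; simp; rfl
    map_mul' := by
      intro k k'
      funext p
      change _ = (p.1, if Q p.1 then k * (if Q p.1 then k' * p.2 else p.2) else
        (if Q p.1 then k' * p.2 else p.2))
      by_cases h : Q p.1 <;> simp [h, mul_assoc] }

lemma gate_pos' {Q : (Fin 3 → X) → Prop} (k : K) (ω : Fin 3 → X) (x : K) (h : Q ω) :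
    gate Q k (ω, x) = (ω, k * x) := Prod.ext rfl (if_pos h)
lemma gate_neg' {Q : (Fin 3 → X) → Prop} (k : K) (ω : Fin 3 → X) (x : K) (h : ¬ Q ω) :
    gate Q k (ω, x) = (ω, x) := Prod.ext rfl (if_neg h)
lemma gate_pos {Q : (Fin 3 → X) → Prop} (k : K) (p : (Fin 3 → X) × K) (h : Q p.1) :
    gate Q k p = (p.1, k * p.2) := Prod.ext rfl (if_pos h)
lemma gate_neg {Q : (Fin 3 → X) → Prop} (k : K) (p : (Fin 3 → X) × K) (h : ¬ Q p.1) :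
    gate Q k p = p := Prod.ext rfl (if_neg h)
lemma gate_fst {Q : (Fin 3 → X) → Prop} (k : K) (p : (Fin 3 → X) × K) :
    (gate Q k p).1 = p.1 := rfl

lemma gate_comm (Q Q' : (Fin 3 → X) → Prop) (k k' : K) :
    ⁅gate Q k, gate Q' k'⁆ = gate (fun ω => Q ω ∧ Q' ω) ⁅k, k'⁆ := by
  apply Equiv.ext
  intro p
  obtain ⟨ω, x⟩ := p
  rw [commutatorElement_def, ← map_inv, ← map_inv, Equiv.Perm.mul_apply, Equiv.Perm.mul_apply,
    Equiv.Perm.mul_apply]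
  by_cases h : Q ω <;> by_cases h' : Q' ω
  · rw [gate_pos' _ _ _ h', gate_pos' _ _ _ h, gate_pos' _ _ _ h', gate_pos' _ _ _ h,
      gate_pos' (Q := fun ω => Q ω ∧ Q' ω) _ _ _ ⟨h, h'⟩]
    simp [commutatorElement_def, mul_assoc]
  · rw [gate_neg' _ _ _ h', gate_pos' _ _ _ h, gate_neg' _ _ _ h', gate_pos' _ _ _ h,
      gate_neg' (Q := fun ω => Q ω ∧ Q' ω) _ _ _ (fun hh => h' hh.2)]
    simp
  · rw [gate_pos' _ _ _ h', gate_neg' _ _ _ h, gate_pos' _ _ _ h', gate_neg' _ _ _ h,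
      gate_neg' (Q := fun ω => Q ω ∧ Q' ω) _ _ _ (fun hh => h hh.1)]
    simp
  · rw [gate_neg' _ _ _ h', gate_neg' _ _ _ h, gate_neg' _ _ _ h', gate_neg' _ _ _ h,
      gate_neg' (Q := fun ω => Q ω ∧ Q' ω) _ _ _ (fun hh => h hh.1)]

lemma gate_conj (Q : (Fin 3 → X) → Prop) (k : K) (σ : Equiv.Perm X) :
    diag K σ * gate Q k * (diag K σ)⁻¹ = gate (fun ω => Q (fun i => σ⁻¹ (ω i))) k := by
  apply Equiv.ext
  intro p
  obtain ⟨ω, x⟩ := p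
  rw [← map_inv, Equiv.Perm.mul_apply, Equiv.Perm.mul_apply]
  by_cases h : Q (fun i => σ⁻¹ (ω i))
  · rw [diag_apply σ⁻¹, gate_pos' _ _ _ h,
      gate_pos' (Q := fun ω => Q (fun i => σ⁻¹ (ω i))) _ _ _ h, diag_apply]
    simp
  · rw [diag_apply σ⁻¹, gate_neg' _ _ _ h,
      gate_neg' (Q := fun ω => Q (fun i => σ⁻¹ (ω i))) _ _ _ h, diag_apply]
    simp

/-- contains a point -/
def Has (x : X) (ω : Fin 3 → X) : Prop := ∃ i, ω i = x

lemma gate_conj' (x : X) (k : K) (σ : Equiv.Perm X) :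
    diag K σ * gate (Has x) k * (diag K σ)⁻¹ = gate (Has (σ x)) k := by
  rw [gate_conj]
  congr 2
  funext ω
  refine propext (exists_congr fun i => ?_)
  rw [Equiv.Perm.inv_eq_iff_eq]

lemma gate_compat {E : Fam K} (hE : Compat E E) (Q Q' : (Fin 3 → X) → Prop) :
    Compat (mapF (gate Q) E) (mapF (gate Q') E) where
  c1 i j k l h1 h2 h3 h4 := by
    have := hE.c1 i j k l h1 h2 h3 h4
    rw [← commutatorElement_eq_one_iff_commute] at this ⊢
    simp only [mapF, gate_comm, this, map_one]
  c2 i j k j' h1 h2 h3 h4 h5 := by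
    have := hE.c2 i j k j' h1 h2 h3 h4 h5
    simp only [mapF, gate_comm, this]
  c3 i j k h1 h2 h3 := by
    simp only [mapF, gate_comm, and_comm]

lemma gate_mulR {E : Fam K} (hE : mulR E E = E) (Q Q' : (Fin 3 → X) → Prop) :
    mulR (mapF (gate Q) E) (mapF (gate Q') E) = mapF (gate fun ω => Q ω ∧ Q' ω) E := by
  conv_rhs => rw [← hE]
  funext i k
  simp only [mulR, mapF]
  split_ifs
  · simp
  · rw [gate_comm]

end Gate

section Model2
variable {A V K : Type} [Group A] [Group V] [Group K] [DecidableEq A]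

lemma cp_map {G H : Type} [Group G] [Group H] (φ : G →* H) (iA : A →* G) (t g : G) (a : A) :
    cp (φ.comp iA) (φ t) (φ g) a = φ (cp iA t g a) := by simp [cp]

lemma ERel.map {G H : Type} [Group G] [Group H] (φ : G →* H) {d : Dat A V} {iA : A →* G}
    {iV : V →* G} {t : G} (R : ERel d iA iV t) : ERel d (φ.comp iA) (φ.comp iV) (φ t) where
  r2 := by
    have key : ∀ y ∈ Set.range iA ∪ Set.range iV, ∀ y' ∈ Set.range iA ∪ Set.range iV, ∀ a : A,
        a ≠ 1 → Commute (cp (φ.comp iA) (φ t) (φ y) 1) (cp (φ.comp iA) (φ t) (φ y') a) := by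
      intro y hy y' hy' a ha
      rw [cp_map, cp_map]
      exact (R.r2 y hy y' hy' a ha).map φ
    have lift : ∀ y ∈ Set.range (φ.comp iA) ∪ Set.range (φ.comp iV),
        ∃ z ∈ Set.range iA ∪ Set.range iV, y = φ z := by
      rintro _ (⟨a, rfl⟩ | ⟨a, rfl⟩)
      · exact ⟨_, Or.inl ⟨a, rfl⟩, rfl⟩
      · exact ⟨_, Or.inr ⟨a, rfl⟩, rfl⟩
    intro y hy y' hy' a ha
    obtain ⟨z, hz, rfl⟩ := lift y hy
    obtain ⟨z', hz', rfl⟩ := lift y' hy'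
    exact key z hz z' hz' a ha
  r3 v := by
    have := congrArg φ (R.r3 v)
    rw [map_mul, map_mul, ← cp_map, ← cp_map, ← cp_map] at this
    exact this

/-- the shared permutation group -/
abbrev PX (A K : Type) := Equiv.Perm ((Fin 3 → (ℤ → A)) × K)

/-- model A -/
noncomputable def mA (A K : Type) [Group A] [DecidableEq A] : A →* PX A K :=
  (diag K).comp (triA (A := A)).act
/-- model V -/
noncomputable def mV (K : Type) (d : Dat A V) : V →* PX A K := (diag K).comp (triV d).act
/-- model t -/
def mtt (A K : Type) : PX A K := diag K tP
/-- model K -/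
noncomputable def mK (A K : Type) [Group A] [Group K] : K →* PX A K := gate (Has x0)

lemma model_GRel (d : Dat A V) {E : Fam K} (hE : Compat E E) :
    GRel d (mA A K) (mV K d) (mtt A K) (mK A K) E where
  e := (model_ERel d).map (diag K)
  kc := by
    have key : ∀ k, ∀ p ∈ PG (triA (A := A)).act (triV d).act tP, Commute (mK A K k) (diag K p) := by
      intro k p hp
      have := gate_conj' (K := K) x0 k p
      rw [PG_x0 d p hp, mul_inv_eq_iff_eq_mul] at this
      exact this.symm
    intro k p hp
    have : ∃ q ∈ PG (triA (A := A)).act (triV d).act tP, p = diag K q := by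
      rcases hp with (rfl | ⟨v, rfl⟩) | ⟨_, (⟨y, rfl⟩ | ⟨y, rfl⟩), a, ha, rfl⟩
      · exact ⟨tP, Or.inl (Or.inl rfl), rfl⟩
      · exact ⟨_, Or.inl (Or.inr ⟨v, rfl⟩), rfl⟩
      · exact ⟨_, Or.inr ⟨_, Or.inl ⟨y, rfl⟩, a, ha, rfl⟩, cp_map (diag K) _ _ _ _⟩
      · exact ⟨_, Or.inr ⟨_, Or.inr ⟨y, rfl⟩, a, ha, rfl⟩, cp_map (diag K) _ _ _ _⟩
    obtain ⟨q, hq, rfl⟩ := this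
    exact key k q hq
  cmp α := by
    have : conjF (mA A K α) (mapF (mK A K) E) = mapF (gate (Has (triA.act α x0))) E := by
      funext i j
      exact gate_conj' (K := K) x0 (E i j) (triA.act α)
    rw [this]
    exact gate_compat hE _ _

/-- exact divergence -/
def FD (ξ η : ℤ → A) (s : ℤ) : Prop := Agr ξ η s ∧ ¬ Agr ξ η (s + 1)

lemma FD.symm {ξ η : ℤ → A} {s : ℤ} (h : FD ξ η s) : FD η ξ s :=
  ⟨fun i hi => (h.1 i hi).symm, fun h' => h.2 fun i hi => (h' i hi).symm⟩

lemma FD.uniq {ξ η : ℤ → A} {s s' : ℤ} (h : FD ξ η s) (h' : FD ξ η s') : s = s' := by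
  have : ∀ s s', FD ξ η s → FD ξ η s' → s ≤ s' := by
    intro s s' h h'
    by_contra hlt
    exact h'.2 fun i hi => h.1 i (by omega)
  exact le_antisymm (this _ _ h h') (this _ _ h' h)

lemma FD.irr {ξ : ℤ → A} {s : ℤ} (h : FD ξ ξ s) : False := h.2 fun _ _ => rfl

/-- shape invariant -/
def Shp (n : ℤ) (ω : Fin 3 → (ℤ → A)) : Prop :=
  ∃ s, FD (ω 0) (ω 1) s ∧ FD (ω 0) (ω 2) (s + n)

/-- delta -/
def dl (a : A) (m : ℤ) : ℤ → A := fun i => if i = m then a else 1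

lemma FD_x0_dl {a : A} (ha : a ≠ 1) (m : ℤ) : FD x0 (dl a m) m := by
  refine ⟨fun i hi => ?_, fun h => ?_⟩
  · rw [dl, if_neg (by omega)]; rfl
  · have := h m (by omega)
    rw [dl, if_pos rfl] at this
    exact ha this.symm

lemma FD_dl_dl {a : A} (ha : a ≠ 1) (m : ℤ) (hm : 0 < m) : FD (dl a 0) (dl a m) 0 := by
  refine ⟨fun i hi => ?_, fun h => ?_⟩
  · rw [dl, if_neg (by omega), dl, if_neg (by omega)]
  · have := h 0 (by omega)
    rw [dl, if_pos rfl, dl, if_neg (by omega)] at this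
    exact ha this

lemma Shp_eq {a : A} (ha : a ≠ 1) {m n : ℤ} (hm : 0 < m) (hn : 0 < n) {ω : Fin 3 → (ℤ → A)}
    (h : Shp n ω) (h0 : Has x0 ω) (h1 : Has (dl a 0) ω) (h2 : Has (dl a m) ω) : m = n := by
  obtain ⟨s, hs1, hs2⟩ := h
  obtain ⟨i0, e0⟩ := h0
  obtain ⟨i1, e1⟩ := h1
  obtain ⟨i2, e2⟩ := h2
  have f1 := FD_x0_dl ha 0
  have f2 := FD_x0_dl ha m
  have f3 := FD_dl_dl ha m hm
  rw [← e0, ← e1] at f1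
  rw [← e0, ← e2] at f2
  rw [← e1, ← e2] at f3
  have n1 : i0 ≠ i1 := fun h => by subst h; exact f1.irr
  have n2 : i0 ≠ i2 := fun h => by subst h; exact f2.irr
  have n3 : i1 ≠ i2 := fun h => by subst h; exact f3.irr
  clear e0 e1 e2
  have g1 := f1.symm
  have g2 := f2.symm
  have g3 := f3.symm
  fin_cases i0 <;> fin_cases i1 <;> fin_cases i2 <;> first | exact absurd rfl n1 | exact absurd rfl n2 | exact absurd rfl n3 | skip
  · have a1 := hs1.uniq f1
    have a2 := hs2.uniq f2
    omega
  · have a1 := hs1.uniq f2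
    have a2 := hs2.uniq f1
    omega
  · have a1 := hs1.uniq g1
    have a2 := hs2.uniq f3
    omega
  · have a1 := hs1.uniq g2
    have a2 := hs2.uniq g3
    omega
  · have a1 := hs1.uniq f3
    have a2 := hs2.uniq g1
    omega
  · have a1 := hs1.uniq g3
    have a2 := hs2.uniq g2
    omega

lemma Shp_tri {H : Type} [Group H] {c : H → (ℤ → A) → ℤ → A} (T : TriA H c) (g : H) (n : ℤ)
    (ω : Fin 3 → (ℤ → A)) : Shp n (fun i => T.act g (ω i)) ↔ Shp n ω := by
  simp only [Shp, FD, T.agr]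

lemma Shp_t (n : ℤ) (ω : Fin 3 → (ℤ → A)) : Shp n (fun i => tP (ω i)) ↔ Shp n ω := by
  simp only [Shp, FD, tP_agr]
  constructor
  · rintro ⟨s, h1, h2⟩
    exact ⟨s + 1, h1, by rwa [add_right_comm]⟩
  · rintro ⟨s, h1, h2⟩
    exact ⟨s - 1, by rwa [sub_add_cancel], by
      have e : s - 1 + n + 1 = s + n := by ring
      rwa [e]⟩

/-- preserving the shape -/
def ShG (A K : Type) (n : ℤ) : Subgroup (PX A K) where
  carrier := {σ | ∀ p, Shp n (σ p).1 ↔ Shp n p.1}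
  one_mem' p := Iff.rfl
  mul_mem' {σ τ} h1 h2 p := (h1 (τ p)).trans (h2 p)
  inv_mem' {σ} h p := by
    have := h (σ⁻¹ p)
    have e : σ (σ⁻¹ p) = p := σ.apply_symm_apply p
    rw [e] at this
    exact this.symm

end Model2

section Fn
variable {A V K : Type} [Group A] [Group V] [Group K] [DecidableEq A]

/-- the families -/
def ff (d : Dat A V) (E : Fam K) (n : ℕ) : Fam (GG d E) :=
  mulR (mapF (gK d E) E) (mulR (conjF (gA d E d.a1) (mapF (gK d E) E))
    (conjF ((gt d E)⁻¹ ^ (n + 1) * gA d E d.a1) (mapF (gK d E) E)))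

lemma tP_inv_pow (n : ℕ) (ξ : ℤ → A) (i : ℤ) :
    ((tP⁻¹ ^ n : Equiv.Perm (ℤ → A)) ξ) i = ξ (i - n) := by
  induction n generalizing i with
  | zero => simp
  | succ n ih =>
    rw [pow_succ', Equiv.Perm.mul_apply, tP_inv, ih]
    congr 1; push_cast; ring

lemma act_x0 (a : A) : triA.act a x0 = dl a 0 := by
  funext i
  rw [A_val a x0 (fun _ _ => rfl), dl]
  split_ifs
  · exact mul_one a
  · rfl

lemma ff_model (d : Dat A V) {E : Fam K} (hE2 : mulR E E = E) (Φ : GG d E →* PX A K)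
    (hA : ∀ a, Φ (gA d E a) = mA A K a) (ht : Φ (gt d E) = mtt A K)
    (hK : ∀ k, Φ (gK d E k) = mK A K k) (n : ℕ) :
    mapF Φ (ff d E n) = mapF (gate fun ω => Has x0 ω ∧ Has (dl d.a1 0) ω ∧
      Has (dl d.a1 ((n : ℤ) + 1)) ω) E := by
  have e0 : mapF Φ (mapF (gK d E) E) = mapF (gate (Has x0)) E := by
    funext i j; exact hK _
  have ec : ∀ g (f : Fam (GG d E)), mapF Φ (conjF g f) = conjF (Φ g) (mapF Φ f) := by
    intro g f; funext i j; simp [mapF, conjF]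
  have eg : ∀ σ : Equiv.Perm (ℤ → A), conjF (diag K σ) (mapF (gate (Has x0)) E) =
      mapF (gate (Has (σ x0))) E := by
    intro σ; funext i j; exact gate_conj' _ _ _
  have e1 : Φ (gA d E d.a1) = diag K (triA.act d.a1) := hA _
  have e2 : Φ ((gt d E)⁻¹ ^ (n + 1) * gA d E d.a1) =
      diag K (tP⁻¹ ^ (n + 1) * triA.act d.a1) := by
    rw [map_mul, map_pow, map_inv, ht, e1, map_mul, map_pow, map_inv]; rfl
  have e3 : (tP⁻¹ ^ (n + 1) * triA.act d.a1 : Equiv.Perm (ℤ → A)) x0 = dl d.a1 ((n : ℤ) + 1) := by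
    rw [Equiv.Perm.mul_apply, act_x0]
    funext i
    rw [tP_inv_pow, dl, dl]
    refine ifc ?_ rfl rfl
    push_cast
    omega
  rw [ff, ← mulR_mapF, ← mulR_mapF, ec, ec, e0, e1, e2, eg, eg, e3, act_x0,
    gate_mulR hE2, gate_mulR hE2]

/-- normal closures -/
def NN (d : Dat A V) (E : Fam K) (T : Set ℕ) : Subgroup (GG d E) :=
  Subgroup.normalClosure {x | ∃ n ∈ T, ∃ i j, x = ff d E n i j}

instance (d : Dat A V) (E : Fam K) (T : Set ℕ) : (NN d E T).Normal :=
  Subgroup.normalClosure_normal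

lemma NN_inj (d : Dat A V) {E : Fam K} (hE : Compat E E) (hE2 : mulR E E = E)
    (hE3 : ∃ i j, E i j ≠ 1) :
    Function.Injective (NN d E) := by
  have main : ∀ T T' n, n ∈ T → NN d E T = NN d E T' → n ∈ T' := by
    intro T T' n hn hTT
    by_contra hn'
    obtain ⟨Φ, hA, hV, ht, hK⟩ := GG_lift (model_GRel (K := K) d hE)
    have hm := ff_model d hE2 Φ hA ht hK
    set N : ℤ := (n : ℤ) + 1 with hN
    have hsh : ∀ g, Φ g ∈ ShG A K N := by
      have : (⊤ : Subgroup (GG d E)) ≤ (ShG A K N).comap Φ := by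
        rw [← GG_gen, Subgroup.closure_le]
        rintro _ (((⟨a, rfl⟩ | ⟨v, rfl⟩) | rfl) | ⟨k, rfl⟩) p
        · rw [hA]; exact Shp_tri triA a N p.1
        · rw [hV]; exact Shp_tri (triV d) v N p.1
        · rw [ht]; exact Shp_t N p.1
        · rw [hK]; exact Iff.rfl
      exact fun g => this trivial
    let S : Subgroup (GG d E) :=
      { carrier := {g | ∀ p, Shp N p.1 → Φ g p = p}
        one_mem' := fun p _ => by rw [map_one]; rfl
        mul_mem' := by
          intro g h hg hh p hp
          rw [map_mul, Equiv.Perm.mul_apply, hh p hp, hg p hp]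
        inv_mem' := by
          intro g hg p hp
          rw [map_inv, Equiv.Perm.inv_eq_iff_eq, hg p hp] }
    have hSn : S.Normal := by
      constructor
      intro g hg h p hp
      rw [map_mul, map_mul, Equiv.Perm.mul_apply, Equiv.Perm.mul_apply, hg, map_inv]
      · simp
      · exact (hsh h⁻¹ p).2 hp
    have hle : NN d E T' ≤ S := by
      apply Subgroup.normalClosure_le_normal
      rintro _ ⟨m, hm', i, j, rfl⟩ p hp
      have : Φ (ff d E m i j) = _ := congrFun (congrFun (hm m) i) j
      rw [this]
      apply gate_neg
      rintro ⟨h0, h1, h2⟩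
      have := Shp_eq d.a1_ne (by omega) (by omega) hp h0 h1 h2
      have : m = n := by omega
      exact hn' (this ▸ hm')
    obtain ⟨i, j, hij⟩ := hE3
    have hmem : ff d E n i j ∈ S := by
      apply hle
      rw [← hTT]
      exact Subgroup.subset_normalClosure ⟨n, hn, i, j, rfl⟩
    have h1 := hmem (![x0, dl d.a1 0, dl d.a1 N], 1) ⟨0, FD_x0_dl d.a1_ne 0, by
      rw [zero_add]; exact FD_x0_dl d.a1_ne N⟩
    have h2 : Φ (ff d E n i j) = _ := congrFun (congrFun (hm n) i) j
    rw [h2] at h1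
    simp only [mapF] at h1
    rw [gate_pos _ _ ⟨⟨0, rfl⟩, ⟨1, rfl⟩, ⟨2, rfl⟩⟩] at h1
    exact hij (by simpa using congrArg Prod.snd h1)
  intro T T' h
  ext n
  exact ⟨fun hn => main T T' n hn h, fun hn => main T' T n hn h.symm⟩

lemma NN_perf [Fintype A] (d : Dat A V) {E : Fam K} (hE2 : mulR E E = E) (T : Set ℕ) :
    NN d E T ≤ ⁅NN d E T, NN d E T⁆ := by
  apply Subgroup.normalClosure_le_normal
  rintro _ ⟨n, hn, i, j, rfl⟩
  have R := GG_GRel d E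
  set S := SS (gA d E) (gV d E) (gt d E) (gK d E) E
  have hS := SS_compat R
  have m0 : Cl S (mapF (gK d E) E) := Cl.base ⟨1, one_mem _, (conjF_one _).symm⟩
  have tA : gA d E d.a1 ∈ EE (gA d E) (gV d E) (gt d E) := DD_le_EE (iA_mem _ _ _)
  have m1 : Cl S (conjF (gA d E d.a1) (mapF (gK d E) E)) := Cl.base ⟨_, tA, rfl⟩
  have m2 : Cl S (conjF ((gt d E)⁻¹ ^ (n + 1) * gA d E d.a1) (mapF (gK d E) E)) :=
    Cl.base ⟨_, mul_mem (pow_mem (inv_mem t_mem_EE) _) tA, rfl⟩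
  have hcl : Cl S (ff d E n) := cl_mul hS m0 (cl_mul hS m1 m2)
  have hid := cl_idem hS (SS_idem hE2) hcl
  have hp := KF_perfect hid
  have hle : KF (ff d E n) ≤ NN d E T := by
    rw [KF, Subgroup.closure_le]
    rintro _ ⟨i, j, rfl⟩
    exact Subgroup.subset_normalClosure ⟨n, hn, i, j, rfl⟩
  exact Subgroup.commutator_mono hle hle (hp (mem_KF _ i j))

end Fn

open scoped commutatorElement

section KK

/-- matrices -/
abbrev M5 := Matrix (Fin 5) (Fin 5) (ZMod 2)

/-- root matrices -/
def xm (i j : Fin 5) : M5 := if i = j then 0 else Matrix.single i j 1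

lemma xm_zero (i j k l : Fin 5) (h : j ≠ k) : xm i j * xm k l = 0 := by
  unfold xm
  split_ifs
  · simp
  · simp
  · simp
  · exact Matrix.single_mul_single_of_ne _ _ _ _ h _

lemma xm_sq (i j : Fin 5) : xm i j * xm i j = 0 := by
  by_cases h : j = i
  · subst h; simp [xm]
  · exact xm_zero _ _ _ _ h

lemma xm_mul (i j k : Fin 5) (h : i ≠ j) (h' : j ≠ k) (h'' : i ≠ k) :
    xm i j * xm j k = xm i k := by
  simp [xm, h, h', h'']

/-- transvections -/
def E0 : Fam M5ˣ := fun i j =>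
  { val := 1 + xm i j
    inv := 1 - xm i j
    val_inv := by
      have := xm_sq i j
      rw [add_mul, mul_sub, mul_sub, this]; simp
    inv_val := by
      have := xm_sq i j
      rw [sub_mul, mul_add, mul_add, this]; simp }

lemma E0_comm (i j k : Fin 5) (h : i ≠ j) (h' : j ≠ k) (h'' : i ≠ k) :
    ⁅E0 i j, E0 j k⁆ = E0 i k := by
  apply Units.ext
  change (1 + xm i j) * (1 + xm j k) * (1 - xm i j) * (1 - xm j k) = 1 + xm i k
  have h1 := xm_sq i j
  have h2 := xm_sq j k
  have h3 := xm_zero j k i j h''.symm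
  have h4 := xm_mul i j k h h' h''
  generalize xm i j = x at *
  generalize xm j k = y at *
  generalize xm i k = z at *
  have a1 : (1 + x) * (1 + y) = 1 + x + y + z := by rw [← h4]; noncomm_ring
  have a2 : (1 - x) * (1 - y) = 1 - x - y + z := by rw [← h4]; noncomm_ring
  have b1 : x * z = 0 := by rw [← h4, ← mul_assoc, h1, zero_mul]
  have b2 : z * x = 0 := by rw [← h4, mul_assoc, h3, mul_zero]
  have b3 : y * z = 0 := by rw [← h4, ← mul_assoc, h3, zero_mul]
  have b4 : z * y = 0 := by rw [← h4, mul_assoc, h2, mul_zero]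
  have b5 : z * z = 0 := by
    rw [show z * z = x * y * z by rw [h4], mul_assoc, b3, mul_zero]
  rw [mul_assoc, a1, a2]
  simp only [add_mul, mul_add, mul_sub, h1, h2, h3, h4, b1, b2, b3, b4, b5, one_mul, mul_one]
  abel

lemma E0_commute (i j k l : Fin 5) (h : j ≠ k) (h' : i ≠ l) : Commute (E0 i j) (E0 k l) := by
  apply Units.ext
  change (1 + xm i j) * (1 + xm k l) = (1 + xm k l) * (1 + xm i j)
  have h1 := xm_zero i j k l h
  have h2 := xm_zero k l i j h'.symm
  simp only [add_mul, mul_add, h1, h2, one_mul, mul_one]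
  abel

/-- the finite perfect group -/
abbrev KK : Type := KF E0

/-- its root family -/
def EK : Fam KK := fun i j => ⟨E0 i j, mem_KF E0 i j⟩

lemma EK_comm (i j k : Fin 5) (h : i ≠ j) (h' : j ≠ k) (h'' : i ≠ k) :
    ⁅EK i j, EK j k⁆ = EK i k := Subtype.ext (E0_comm i j k h h' h'')

lemma EK_compat : Compat EK EK where
  c1 i j k l _ _ h3 h4 := Subtype.ext (E0_commute i j k l h3 h4)
  c2 i j k j' h1 h2 h3 h4 h5 := by rw [EK_comm i j k h1 h2 h3, EK_comm i j' k h4.symm h5 h3]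
  c3 i j k h1 h2 h3 := rfl

lemma EK_idem : mulR EK EK = EK := by
  funext i k
  have := third_ne i k
  unfold mulR
  split_ifs with h
  · subst h
    apply Subtype.ext
    apply Units.ext
    simp [EK, E0, xm]
  · exact EK_comm _ _ _ this.1.symm this.2 h

lemma EK_top : KF EK = ⊤ := by
  refine Eq.trans ?_ (Subgroup.closure_closure_coe_preimage (k := {x | ∃ i j, x = E0 i j}))
  change Subgroup.closure {x | ∃ i j, x = EK i j} = _
  congr 1
  ext ⟨x, hx⟩
  constructor
  · rintro ⟨i, j, h⟩
    exact ⟨i, j, congrArg Subtype.val h⟩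
  · rintro ⟨i, j, h⟩
    exact ⟨i, j, Subtype.ext h⟩

lemma EK_ne : ∃ i j, EK i j ≠ 1 := by
  refine ⟨0, 1, fun h => ?_⟩
  have h1 : (1 + xm 0 1 : M5) = 1 := congrArg (fun u : KK => (u.1 : M5)) h
  have h2 := congrFun (congrFun h1 0) 1
  simp [xm] at h2

instance : Finite KK := by
  have : Finite M5ˣ := Finite.of_injective _ Units.val_injective
  infer_instance

end KK

section AA
/-- first -/
def al1 : Equiv.Perm (Fin 5) := Equiv.swap 0 1 * Equiv.swap 1 2
/-- second -/
def al2 : Equiv.Perm (Fin 5) := Equiv.swap 2 3 * Equiv.swap 3 4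

/-- the group -/
abbrev AA : Type := Subgroup.closure ({al1, al2} : Set (Equiv.Perm (Fin 5)))

/-- generator -/
def be1 : AA := ⟨al1, Subgroup.subset_closure (Or.inl rfl)⟩
/-- generator -/
def be2 : AA := ⟨al2, Subgroup.subset_closure (Or.inr rfl)⟩

/-- elementary abelian -/
abbrev VV : Type := Multiplicative (ZMod 3 × ZMod 3)

/-- powers -/
def ww (a : AA) (h : a ^ 3 = 1) : VV →* AA where
  toFun v := a ^ (Multiplicative.toAdd v).1.val
  map_one' := by simp
  map_mul' v u := by
    rw [← pow_add, toAdd_mul, Prod.fst_add, ZMod.val_add, ← pow_eq_pow_mod _ h]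

/-- Fibonacci -/
def rhoV : VV ≃* VV := AddEquiv.toMultiplicative
  { toFun := fun p => (p.2, p.1 + p.2)
    invFun := fun p => (p.2 - p.1, p.1)
    left_inv := fun p => by simp
    right_inv := fun p => by simp
    map_add' := fun p q => Prod.ext rfl (by simp; ring) }

lemma be1_pow : be1 ^ 3 = 1 := Subtype.ext (by change al1 ^ 3 = 1; decide)
lemma be2_pow : be2 ^ 3 = 1 := Subtype.ext (by change al2 ^ 3 = 1; decide)

lemma rho_cover : ∀ v : VV, ∃ n : ℕ, (Multiplicative.toAdd (rhoV^[n] v)).1 = 0 := by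
  have : ∀ p : ZMod 3 × ZMod 3, ∃ n : Fin 4,
    ((fun p : ZMod 3 × ZMod 3 => (p.2, p.1 + p.2))^[n.1] p).1 = 0 := by decide
  intro v
  obtain ⟨n, hn⟩ := this v
  exact ⟨n, hn⟩

/-- the vector -/
def v1 : VV := Multiplicative.ofAdd (1, 0)

lemma ww_v1 (a : AA) (h : a ^ 3 = 1) : ww a h v1 = a := pow_one a

set_option maxRecDepth 10000 in
/-- the data -/
def dd : Dat AA VV where
  ρ := rhoV
  w1 := ww be1 be1_pow
  w2 := ww be2 be2_pow
  a1 := be1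
  a2 := be2
  ne_comm h := by
    have : al1 * al2 = al2 * al1 := congrArg Subtype.val h
    revert this
    decide
  ne12 h := by
    have : al1 * (al2⁻¹ * al1) = al2 := congrArg Subtype.val h
    revert this
    decide
  cover v := by
    obtain ⟨n, hn⟩ := rho_cover v
    refine ⟨n, ?_, ?_⟩
    · change be1 ^ (Multiplicative.toAdd (rhoV^[n] v)).1.val = 1
      rw [hn]; simp
    · change be2 ^ (Multiplicative.toAdd (rhoV^[n] v)).1.val = 1
      rw [hn]; simp
  gen Q hc h1 h2 := by
    have hc := hc v1 v1
    have h1 := h1 v1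
    have h2 := h2 v1
    rw [ww_v1] at h1 h2 hc
    rw [ww_v1] at hc
    have q1 : be1 ∈ Q := by
      have := h2 _ (h2 _ (h1 _ hc))
      convert this using 1
      apply Subtype.ext
      change al1 = al2 * (al2 * (al1 * (al1 * al2 * al1⁻¹ * al2⁻¹) * al1⁻¹) * al2⁻¹) * al2⁻¹
      decide
    have q2 : be2 ∈ Q := by
      have := h1 _ (h2 _ (h1 _ (h1 _ hc)))
      convert this using 1
      apply Subtype.ext
      change al2 = al1 * (al2 * (al1 * (al1 * (al1 * al2 * al1⁻¹ * al2⁻¹) * al1⁻¹) * al1⁻¹) * al2⁻¹) * al1⁻¹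
      decide
    rw [eq_top_iff, ← Subgroup.closure_closure_coe_preimage (k := {al1, al2}), Subgroup.closure_le]
    rintro ⟨x, hx⟩ (h | h)
    · have e : (⟨x, hx⟩ : AA) = be1 := Subtype.ext h
      rw [e]; exact q1
    · have e : (⟨x, hx⟩ : AA) = be2 := Subtype.ext h
      rw [e]; exact q2

end AA


section Final

noncomputable instance : Fintype AA := Fintype.ofFinite _

/-- the base group -/
abbrev GZ : Type := GG dd EK
/-- the kernels -/
abbrev NZ (T : Set ℕ) : Subgroup GZ := NN dd EK T
/-- the quotients -/
abbrev HZ (T : Set ℕ) : Type := GZ ⧸ NZ T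

lemma RR_fin : (RR dd EK).Finite := RelS_finite _ _ _ _

lemma HZ_fp2 (T : Set ℕ) : IsTypeFP2 (HZ T) := by
  classical
  haveI : Fintype KK := Fintype.ofFinite _
  haveI : Fintype VV := Fintype.ofFinite _
  exact fp2_quot' (RR dd EK) RR_fin (NZ T) (NN_perf dd EK_idem T)

lemma HZ_chi (T : Set ℕ) : ∃ χ : HZ T →* Multiplicative ℤ, ∀ g, χ g = 1 → IsOfFinOrder g := by
  obtain ⟨χ, hA, hV, ht, hK⟩ := GG_chi dd EK
  have hle : NZ T ≤ χ.ker := by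
    have h1 : ⁅NZ T, NZ T⁆ ≤ χ.ker := by
      rw [Subgroup.commutator_le]
      intro a _ b _
      rw [MonoidHom.mem_ker, map_commutatorElement, commutatorElement_eq_one_iff_mul_comm, mul_comm]
    exact (NN_perf dd EK_idem T).trans h1
  refine ⟨QuotientGroup.lift (NZ T) χ hle, ?_⟩
  intro g
  induction g using QuotientGroup.induction_on with
  | H g =>
    intro h
    have h' : χ g = 1 := h
    have := G_tors (GG_GRel dd EK) EK_idem EK_top (GG_gen dd EK) χ hA hV ht hK g h'
    exact MonoidHom.isOfFinOrder (QuotientGroup.mk' (NZ T)) this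

instance : Countable GZ := by
  have : Countable (FreeGroup (YY AA VV KK)) := by
    unfold FreeGroup
    infer_instance
  exact (QuotientGroup.mk'_surjective (Subgroup.normalClosure (RR dd EK))).countable

/-- isomorphism -/
def isoS : Setoid (Set ℕ) where
  r T T' := Nonempty (HZ T ≃* HZ T')
  iseqv := ⟨fun _ => ⟨MulEquiv.refl _⟩, fun ⟨e⟩ => ⟨e.symm⟩, fun ⟨e⟩ ⟨f⟩ => ⟨e.trans f⟩⟩

lemma fib_count (T : Set ℕ) : {T' | Nonempty (HZ T' ≃* HZ T)}.Countable := by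
  have hc : Countable (YY AA VV KK → HZ T) := by
    have : Countable (HZ T) := Quotient.countable
    infer_instance
  have hh : Countable (GZ →* HZ T) := by
    apply Function.Injective.countable (f := fun (φ : GZ →* HZ T) (y : YY AA VV KK) =>
      φ (PresentedGroup.of y))
    intro φ ψ h
    exact PresentedGroup.ext fun y => congrFun h y
  rw [← Set.countable_coe_iff]
  let F : {T' | Nonempty (HZ T' ≃* HZ T)} → (GZ →* HZ T) := fun T' =>
    (T'.2.some : HZ T'.1 →* HZ T).comp (QuotientGroup.mk' (NZ T'.1))
  apply Function.Injective.countable (f := F)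
  have hk : ∀ T', (F T').ker = NZ T'.1 := by
    intro T'
    ext g
    rw [MonoidHom.mem_ker]
    change T'.2.some (QuotientGroup.mk' (NZ T'.1) g) = 1 ↔ _
    rw [MulEquiv.map_eq_one_iff, ← MonoidHom.mem_ker, QuotientGroup.ker_mk']
  intro T1 T2 h
  apply Subtype.ext
  apply NN_inj dd EK_compat EK_idem EK_ne
  exact (hk T1).symm.trans ((congrArg MonoidHom.ker h).trans (hk T2))

lemma iso_unc : Uncountable (Quotient isoS) := by
  by_contra hn
  rw [not_uncountable_iff] at hn
  have : (Set.univ : Set (Set ℕ)).Countable := by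
    have : (Set.univ : Set (Set ℕ)) ⊆ ⋃ i : Quotient isoS, {T' | Nonempty (HZ T' ≃* HZ i.out)} := by
      intro T _
      rw [Set.mem_iUnion]
      exact ⟨Quotient.mk isoS T, ((Quotient.mk_out (s := isoS) T : Nonempty _)).map MulEquiv.symm⟩
    exact (Set.countable_iUnion fun i => fib_count _).mono this
  have h2 : Countable (Set ℕ) := Set.countable_univ_iff.1 this
  obtain ⟨f, hf⟩ := h2.exists_injective_nat
  exact Function.cantor_injective f hf

end Final

theorem exists_uncountable_family_FP2_no_BS_subgroup :
    ∃ (I : Type) (_ : Uncountable I) (H : I → Type) (_ : ∀ i, Group (H i)),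
      (∀ i, IsTypeFP2 (H i)) ∧
      (∀ i, HasNoBSSubgroup (H i)) ∧
      (∀ i, ∀ K : Subgroup (H i), ¬ Nonempty (K ≃* Multiplicative (ℤ × ℤ))) ∧
      (∀ i j, i ≠ j → ¬ Nonempty (H i ≃* H j)) := by
  refine ⟨Quotient isoS, iso_unc, fun i => HZ i.out, fun i => inferInstance, ?_, ?_, ?_, ?_⟩
  · exact fun i => HZ_fp2 _
  · intro i
    obtain ⟨χ, h⟩ := HZ_chi i.out
    exact no_bs χ h
  · intro i
    obtain ⟨χ, h⟩ := HZ_chi i.out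
    exact no_zz χ h
  · intro i j hij h
    apply hij
    rw [← Quotient.out_eq i, ← Quotient.out_eq j]
    exact Quotient.sound h
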